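/- The function (t,ρ) ↦ (1/N)·log E_N(t,ρ) is C^∞ on [0,1] × ℝ, and for every pair of nonnegative integers (a,b) with a + b ≤ 2, sup_{(t,ρ)∈[0,1]×ℝ} |∂_t^a ∂_ρ^b ((1/N)·log E_N(t,ρ))| → 0 as N → ∞; that is, (1/N)·log E_N → 0 uniformly in the C² topology on [0,1] × ℝ. (This is the toric reduction of the statement that on CP^1 the Bergman geodesic potentials φ_N(t,·) converge to the Monge–Ampère geodesic potential φ_t uniformly in the C² topology on [0,1] × CP^1.) -/

import Mathlib

open Set Filter

noncomputable def GP : ℝ → ℝ := fun x => x * Real.log x + (1 - x) * Real.log (1 - x)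

noncomputable def Gt (f0 f1 : ℝ → ℝ) (t : ℝ) : ℝ → ℝ :=
  fun x => GP x + ((1 - t) * f0 x + t * f1 x)

noncomputable def Phase (G : ℝ → ℝ) (α : ℝ) : ℝ → ℝ :=
  fun x => (x - α) * deriv G x - (G x - G α)

noncomputable def Qnorm (G : ℝ → ℝ) (N : ℕ) (α : ℝ) : ℝ :=
  2 * Real.pi * ∫ x in (0:ℝ)..1, Real.exp (-(N : ℝ) * Phase G α x)

noncomputable def RPhase (G : ℝ → ℝ) (α : ℝ) : ℝ → ℝ :=
  fun y => (1 / α) * Phase G α (α * (1 + y))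

noncomputable def Leg (G : ℝ → ℝ) (S : Set ℝ) : ℝ → ℝ :=
  fun ρ => sSup ((fun x => x * ρ - G x) '' S)

noncomputable def QQ (G : ℝ → ℝ) (N : ℕ) (α : ℝ) : ℝ :=
  Qnorm G N α * Real.exp ((N : ℝ) * G α)

noncomputable def Ecal (f0 f1 : ℝ → ℝ) (N : ℕ) (t ρ : ℝ) : ℝ :=
  ∑ k ∈ Finset.range (N + 1),
    Real.exp ((N:ℝ) * (((k:ℝ)/(N:ℝ)) * ρ - Leg (Gt f0 f1 t) (Set.Icc 0 1) ρ)) /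
      ((QQ (Gt f0 f1 0) N ((k:ℝ)/(N:ℝ))) ^ ((1:ℝ) - t) *
        (QQ (Gt f0 f1 1) N ((k:ℝ)/(N:ℝ))) ^ t)



/-- the renormalised second derivative x(1-x) times the second derivative of G -/
noncomputable def kap (f : ℝ → ℝ) (x : ℝ) : ℝ := 1 + x * (1 - x) * deriv (deriv f) x

structure Good (f : ℝ → ℝ) (c K : ℝ) : Prop where
  smooth : ContDiff ℝ (⊤ : ℕ∞) f
  cpos : 0 < c
  hK : 1 ≤ K
  lower : ∀ x ∈ Icc (0:ℝ) 1, c ≤ kap f x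
  b1 : ∀ x ∈ Icc (0:ℝ) 1, |deriv f x| ≤ K
  b2 : ∀ x ∈ Icc (0:ℝ) 1, |deriv (deriv f) x| ≤ K
  b3 : ∀ x ∈ Icc (0:ℝ) 1, |deriv (deriv (deriv f)) x| ≤ K

theorem cd_deriv {f : ℝ → ℝ} (h : ContDiff ℝ (⊤ : ℕ∞) f) : ContDiff ℝ (⊤ : ℕ∞) (deriv f) :=
  (contDiff_infty_iff_deriv.1 h).2

theorem cd_hasDeriv {f : ℝ → ℝ} (h : ContDiff ℝ (⊤ : ℕ∞) f) (x : ℝ) :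
    HasDerivAt f (deriv f x) x :=
  ((contDiff_infty_iff_deriv.1 h).1 x).hasDerivAt

theorem kap_smooth {f : ℝ → ℝ} (h : ContDiff ℝ (⊤ : ℕ∞) f) : ContDiff ℝ (⊤ : ℕ∞) (kap f) := by
  have := cd_deriv (cd_deriv h)
  unfold kap
  fun_prop

theorem kap_deriv {f : ℝ → ℝ} (h : ContDiff ℝ (⊤ : ℕ∞) f) (x : ℝ) :
    HasDerivAt (kap f) ((1 - 2 * x) * deriv (deriv f) x
      + x * (1 - x) * deriv (deriv (deriv f)) x) x := by
  have h2 := cd_hasDeriv (cd_deriv (cd_deriv h)) x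
  have := (((hasDerivAt_id x).mul ((hasDerivAt_id x).const_sub 1)).mul h2).const_add 1
  refine this.congr_deriv ?_
  simp only [id, Pi.mul_apply]
  ring

noncomputable def dens (f : ℝ → ℝ) (N k : ℕ) (x : ℝ) : ℝ :=
  x ^ k * (1 - x) ^ (N - k) * Real.exp (N * f x - (N * x - k) * deriv f x)

noncomputable def JJ (f : ℝ → ℝ) (N k : ℕ) (φ : ℝ → ℝ) : ℝ := ∫ x in (0:ℝ)..1, dens f N k x * φ x

noncomputable def MM (f : ℝ → ℝ) (N k : ℕ) : ℝ := ∫ x in (0:ℝ)..1, dens f N k x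

theorem dens_cont {f : ℝ → ℝ} (h : ContDiff ℝ (⊤ : ℕ∞) f) (N k : ℕ) : Continuous (dens f N k) := by
  have h1 := (cd_deriv h).continuous
  have h0 := h.continuous
  unfold dens
  fun_prop

theorem dens_nonneg (f : ℝ → ℝ) (N k : ℕ) {x : ℝ} (hx : x ∈ Icc (0:ℝ) 1) : 0 ≤ dens f N k x := by
  unfold dens
  have := hx.1
  have : 0 ≤ 1 - x := by linarith [hx.2]
  positivity

theorem dens_pos (f : ℝ → ℝ) (N k : ℕ) {x : ℝ} (hx : x ∈ Ioo (0:ℝ) 1) : 0 < dens f N k x := by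
  unfold dens
  have := hx.1
  have : 0 < 1 - x := by linarith [hx.2]
  positivity

theorem MM_pos {f : ℝ → ℝ} (h : ContDiff ℝ (⊤ : ℕ∞) f) (N k : ℕ) : 0 < MM f N k := by
  unfold MM
  apply intervalIntegral.intervalIntegral_pos_of_pos_on
  · exact (dens_cont h N k).intervalIntegrable _ _
  · intro x hx; exact dens_pos f N k hx
  · norm_num

theorem dens_succ (f : ℝ → ℝ) (N k : ℕ) (hk : k + 1 ≤ N) (x : ℝ) :
    dens f N (k+1) x * (1 - x) = dens f N k x * (x * Real.exp (deriv f x)) := by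
  unfold dens
  obtain ⟨m, rfl⟩ := Nat.exists_eq_add_of_le hk
  rw [show k + 1 + m - (k+1) = m by omega, show k + 1 + m - k = m + 1 by omega]
  have : Real.exp (((k + 1 + m : ℕ):ℝ) * f x - (((k + 1 + m : ℕ):ℝ) * x - ((k+1 : ℕ):ℝ)) * deriv f x)
     = Real.exp (((k + 1 + m : ℕ):ℝ) * f x - (((k + 1 + m : ℕ):ℝ) * x - ((k : ℕ):ℝ)) * deriv f x) * Real.exp (deriv f x) := by
    rw [← Real.exp_add]; congr 1; push_cast; ring
  rw [this]
  ring

theorem JJ_le {f : ℝ → ℝ} (h : ContDiff ℝ (⊤ : ℕ∞) f) (N k : ℕ) {φ : ℝ → ℝ} (hφ : ContinuousOn φ (Icc 0 1))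
    {C : ℝ} (hC : ∀ x ∈ Icc (0:ℝ) 1, φ x ≤ C) : JJ f N k φ ≤ C * MM f N k := by
  unfold JJ MM
  rw [← intervalIntegral.integral_const_mul]
  apply intervalIntegral.integral_mono_on (by norm_num)
  · apply ContinuousOn.intervalIntegrable
    rw [uIcc_of_le (by norm_num)]
    exact (dens_cont h N k).continuousOn.mul hφ
  · exact ((dens_cont h N k).intervalIntegrable _ _).const_mul _
  · intro x hx
    nlinarith [dens_nonneg f N k hx, hC x hx]

theorem JJ_int {f : ℝ → ℝ} (h : ContDiff ℝ (⊤ : ℕ∞) f) (N k : ℕ) {φ : ℝ → ℝ} (hφ : ContinuousOn φ (Icc 0 1)) :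
    IntervalIntegrable (fun x => dens f N k x * φ x) MeasureTheory.volume 0 1 := by
  apply ContinuousOn.intervalIntegrable
  rw [uIcc_of_le (by norm_num)]
  exact (dens_cont h N k).continuousOn.mul hφ

theorem JJ_mono {f : ℝ → ℝ} (h : ContDiff ℝ (⊤ : ℕ∞) f) (N k : ℕ) {φ ψ : ℝ → ℝ} (hφ : ContinuousOn φ (Icc 0 1))
    (hψ : ContinuousOn ψ (Icc 0 1))
    (hC : ∀ x ∈ Icc (0:ℝ) 1, φ x ≤ ψ x) : JJ f N k φ ≤ JJ f N k ψ := by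
  unfold JJ
  apply intervalIntegral.integral_mono_on (by norm_num) (JJ_int h N k hφ) (JJ_int h N k hψ)
  intro x hx
  nlinarith [dens_nonneg f N k hx, hC x hx]

theorem JJ_add {f : ℝ → ℝ} (h : ContDiff ℝ (⊤ : ℕ∞) f) (N k : ℕ) {φ ψ : ℝ → ℝ} (hφ : ContinuousOn φ (Icc 0 1))
    (hψ : ContinuousOn ψ (Icc 0 1)) :
    JJ f N k (fun x => φ x + ψ x) = JJ f N k φ + JJ f N k ψ := by
  unfold JJ
  rw [← intervalIntegral.integral_add (JJ_int h N k hφ) (JJ_int h N k hψ)]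
  congr 1; ext x; ring

theorem JJ_sub {f : ℝ → ℝ} (h : ContDiff ℝ (⊤ : ℕ∞) f) (N k : ℕ) {φ ψ : ℝ → ℝ} (hφ : ContinuousOn φ (Icc 0 1))
    (hψ : ContinuousOn ψ (Icc 0 1)) :
    JJ f N k (fun x => φ x - ψ x) = JJ f N k φ - JJ f N k ψ := by
  unfold JJ
  rw [← intervalIntegral.integral_sub (JJ_int h N k hφ) (JJ_int h N k hψ)]
  congr 1; ext x; ring

theorem JJ_smul (f : ℝ → ℝ) (N k : ℕ) (φ : ℝ → ℝ) (a : ℝ) :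
    JJ f N k (fun x => a * φ x) = a * JJ f N k φ := by
  unfold JJ
  rw [← intervalIntegral.integral_const_mul]
  congr 1; ext x; ring

theorem JJ_const (f : ℝ → ℝ) (N k : ℕ) (a : ℝ) :
    JJ f N k (fun _ => a) = a * MM f N k := by
  unfold JJ MM
  rw [← intervalIntegral.integral_const_mul]
  congr 1; ext x; ring

theorem JJ_congr (f : ℝ → ℝ) (N k : ℕ) {φ ψ : ℝ → ℝ} (h : ∀ x, φ x = ψ x) :
    JJ f N k φ = JJ f N k ψ := by
  rw [show φ = ψ from funext h]

theorem JJ_abs_le {f : ℝ → ℝ} (h : ContDiff ℝ (⊤ : ℕ∞) f) (N k : ℕ) {φ : ℝ → ℝ} (hφ : ContinuousOn φ (Icc 0 1))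
    {C : ℝ} (hC : ∀ x ∈ Icc (0:ℝ) 1, |φ x| ≤ C) : |JJ f N k φ| ≤ C * MM f N k := by
  rw [abs_le]
  constructor
  · have := JJ_le h N k (φ := fun x => -1 * φ x) (by fun_prop) (C := C)
      (fun x hx => by linarith [(abs_le.1 (hC x hx)).1])
    rw [JJ_smul] at this
    linarith
  · exact JJ_le h N k hφ (fun x hx => (abs_le.1 (hC x hx)).2)

/-- integration by parts -/
theorem JJ_ibp {f : ℝ → ℝ} (h : ContDiff ℝ (⊤ : ℕ∞) f) (N k : ℕ) (hk : k ≤ N) {φ φ' : ℝ → ℝ}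
    (hφ : ContinuousOn φ (Icc 0 1)) (hφ' : ContinuousOn φ' (Icc 0 1))
    (hd : ∀ x ∈ Icc (0:ℝ) 1, HasDerivAt φ (φ' x) x) :
    JJ f N k (fun x => (N * x - k) * kap f x * φ x) =
      JJ f N k (fun x => (1 - 2 * x) * φ x + x * (1 - x) * φ' x) := by
  have hkc : ContinuousOn (kap f) (Icc 0 1) := (kap_smooth h).continuous.continuousOn
  obtain ⟨m, rfl⟩ := Nat.exists_eq_add_of_le hk
  set N := k + m with hN
  let g : ℝ → ℝ := fun x => x^(k+1) * (1-x)^(m+1) * Real.exp (N * f x - (N * x - k) * deriv f x) * φ x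
  have key : ∀ x ∈ Icc (0:ℝ) 1, HasDerivAt g (dens f N k x * (((1 - 2 * x) * φ x + x * (1 - x) * φ' x)
      - (N * x - k) * kap f x * φ x)) x := by
    intro x hx
    have e1 := (hasDerivAt_pow (k+1) x)
    have e2 := ((hasDerivAt_id x).const_sub 1).fun_pow (m+1)
    have h0 := cd_hasDeriv h x
    have h1 := cd_hasDeriv (cd_deriv h) x
    have e3 := ((h0.const_mul (N:ℝ)).fun_sub ((((hasDerivAt_id x).const_mul (N:ℝ)).sub_const (k:ℝ)).fun_mul h1)).exp
    have e4 := ((e1.fun_mul e2).fun_mul e3).fun_mul (hd x hx)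
    refine e4.congr_deriv ?_
    simp only [id, dens, kap]
    rw [show N - k = m by omega, hN]
    push_cast
    ring
  have hintg : IntervalIntegrable (fun x => dens f N k x * (((1 - 2 * x) * φ x + x * (1 - x) * φ' x)
      - (N * x - k) * kap f x * φ x)) MeasureTheory.volume 0 1 := by
    apply JJ_int h N k
    fun_prop
  have := intervalIntegral.integral_eq_sub_of_hasDerivAt (f := g) (a := 0) (b := 1) (by
    intro x hx
    rw [uIcc_of_le (by norm_num)] at hx
    exact key x hx) hintg
  have hz : g 1 - g 0 = 0 := by simp [g]
  rw [hz] at this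
  have h3 := JJ_sub h N k (φ := fun x => (1 - 2 * x) * φ x + x * (1 - x) * φ' x)
    (ψ := fun x => (N * x - k) * kap f x * φ x) (by fun_prop) (by fun_prop)
  change JJ f N k _ = 0 at this
  rw [this] at h3
  linarith


theorem kap_le {f : ℝ → ℝ} {c K : ℝ} (h : Good f c K) {x : ℝ} (hx : x ∈ Icc (0:ℝ) 1) :
    |kap f x| ≤ 1 + K := by
  unfold kap
  have h2 := h.b2 x hx
  have hw0 : 0 ≤ x * (1 - x) := mul_nonneg hx.1 (by linarith [hx.2])
  have hw1 : x * (1 - x) ≤ 1 := by nlinarith [hx.1, hx.2]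
  calc |1 + x * (1 - x) * deriv (deriv f) x| ≤ |(1:ℝ)| + |x * (1 - x) * deriv (deriv f) x| := abs_add_le _ _
    _ = 1 + x * (1-x) * |deriv (deriv f) x| := by rw [abs_mul, abs_of_nonneg hw0]; simp
    _ ≤ 1 + K := by nlinarith [abs_nonneg (deriv (deriv f) x)]

noncomputable def kap' (f : ℝ → ℝ) (x : ℝ) : ℝ := (1 - 2 * x) * deriv (deriv f) x
      + x * (1 - x) * deriv (deriv (deriv f)) x

theorem kap'_cont {f : ℝ → ℝ} (h : ContDiff ℝ (⊤ : ℕ∞) f) : Continuous (kap' f) := by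
  have h2 := (cd_deriv (cd_deriv h)).continuous
  have h3 := (cd_deriv (cd_deriv (cd_deriv h))).continuous
  unfold kap'
  fun_prop

theorem kap'_le {f : ℝ → ℝ} {c K : ℝ} (h : Good f c K) {x : ℝ} (hx : x ∈ Icc (0:ℝ) 1) :
    |kap' f x| ≤ 2 * K := by
  unfold kap'
  have h2 := h.b2 x hx
  have h3 := h.b3 x hx
  have hw0 : 0 ≤ x * (1 - x) := mul_nonneg hx.1 (by linarith [hx.2])
  have hw1 : x * (1 - x) ≤ 1 := by nlinarith [hx.1, hx.2]
  have hw2 : |1 - 2 * x| ≤ 1 := by rw [abs_le]; constructor <;> linarith [hx.1, hx.2]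
  refine (abs_add_le _ _).trans ?_
  rw [abs_mul, abs_mul, abs_of_nonneg hw0]
  nlinarith [abs_nonneg (deriv (deriv f) x), abs_nonneg (deriv (deriv (deriv f)) x), abs_nonneg (1-2*x)]

theorem Nxk_le {N k : ℕ} (hk : k ≤ N) {x : ℝ} (hx : x ∈ Icc (0:ℝ) 1) : |(N:ℝ) * x - k| ≤ N := by
  have h1 : (k:ℝ) ≤ N := by exact_mod_cast hk
  have h2 : (0:ℝ) ≤ k := by positivity
  rw [abs_le]; constructor <;> nlinarith [hx.1, hx.2]

theorem J_w_le {f : ℝ → ℝ} {c K : ℝ} (h : Good f c K) (N k : ℕ) (hk : k + 1 ≤ N) :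
    JJ f N k (fun x => x * (1 - x)) ≤ Real.exp K * MM f N (k+1) := by
  unfold JJ MM
  rw [← intervalIntegral.integral_const_mul]
  have hc := dens_cont h.smooth N k
  have hc1 := dens_cont h.smooth N (k+1)
  apply intervalIntegral.integral_mono_on (by norm_num)
  · exact Continuous.intervalIntegrable (by fun_prop) _ _
  · exact Continuous.intervalIntegrable (by fun_prop) _ _
  · intro x hx
    have e := dens_succ f N k hk x
    have hp := dens_nonneg f N (k+1) hx
    have : dens f N k x * (x * (1-x)) = dens f N (k+1) x * ((1-x)^2 * Real.exp (-deriv f x)) := by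
      calc dens f N k x * (x * (1-x)) = (dens f N k x * (x * Real.exp (deriv f x))) * ((1-x) * Real.exp (-deriv f x)) := by
            rw [Real.exp_neg]; field_simp
        _ = _ := by rw [← e]; ring
    rw [this, mul_comm]
    apply mul_le_mul_of_nonneg_right _ hp
    have h1 : (1-x)^2 ≤ 1 := by nlinarith [hx.1, hx.2]
    have h2 : Real.exp (-deriv f x) ≤ Real.exp K := Real.exp_le_exp.2 (by linarith [(abs_le.1 (h.b1 x hx)).1])
    calc _ ≤ 1 * Real.exp K := by gcongr
      _ = _ := one_mul _

theorem incr_one {f : ℝ → ℝ} {c K : ℝ} (h : Good f c K) (N k : ℕ) (hk : k + 2 ≤ N) :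
    c^2 / (6 * K * Real.exp K) / N * (MM f N k * MM f N (k+1)) ≤ MM f N (k+2) * MM f N k - MM f N (k+1)^2 := by
  have hN : (1:ℝ) ≤ N := by exact_mod_cast (by omega : 1 ≤ N)
  have hK := h.hK
  have hc := h.cpos
  set S : ℝ → ℝ := fun x => (N * x - k) * kap f x - (1 - 2 * x) with hS
  set S' : ℝ → ℝ := fun x => N * kap f x + (N * x - k) * kap' f x + 2 with hS'
  have ckap := (kap_smooth h.smooth).continuous
  have ckap' := kap'_cont h.smooth
  have cS : Continuous S := by fun_prop
  have cS' : Continuous S' := by fun_prop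
  have M0 := MM_pos h.smooth N k
  have M1 := MM_pos h.smooth N (k+1)
  -- J_k [S] = 0
  have a1 : JJ f N k S = 0 := by
    have := JJ_ibp h.smooth N k (by omega) (φ := fun _ => 1) (φ' := fun _ => 0) (by fun_prop) (by fun_prop)
      (fun x _ => hasDerivAt_const x 1)
    rw [hS, JJ_sub h.smooth N k (φ := fun x => (N * x - k) * kap f x) (ψ := fun x => 1 - 2 * x) (by fun_prop) (by fun_prop)]
    simp only [mul_one, mul_zero, add_zero] at this
    linarith
  have a2 : c * MM f N (k+1) ≤ JJ f N (k+1) S := by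
    have := JJ_ibp h.smooth N (k+1) (by omega) (φ := fun _ => 1) (φ' := fun _ => 0) (by fun_prop) (by fun_prop)
      (fun x _ => hasDerivAt_const x 1)
    have e : JJ f N (k+1) S = JJ f N (k+1) (kap f) + (JJ f N (k+1) (fun x => (N * x - (k+1:ℕ)) * kap f x) - JJ f N (k+1) (fun x => 1 - 2 * x)) := by
      rw [← JJ_sub h.smooth N (k+1) (φ := fun x => (N * x - (k+1:ℕ)) * kap f x) (ψ := fun x => 1 - 2 * x) (by fun_prop) (by fun_prop),
        ← JJ_add h.smooth N (k+1) (by fun_prop) (by fun_prop)]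
      apply JJ_congr
      intro x; simp only [hS]; push_cast; ring
    simp only [mul_one, mul_zero, add_zero] at this
    rw [e, this, sub_self, add_zero, ← JJ_const]
    exact JJ_mono h.smooth N (k+1) (by fun_prop) (by fun_prop) (fun x hx => h.lower x hx)
  have a3 : JJ f N k (fun x => S x ^2) ≤ 6 * K * N * (Real.exp K * MM f N (k+1)) := by
    have hd : ∀ x, HasDerivAt S (S' x) x := by
      intro x
      have := ((((hasDerivAt_id x).const_mul (N:ℝ)).sub_const (k:ℝ)).fun_mul (kap_deriv h.smooth x)).fun_sub
        (((hasDerivAt_id x).const_mul (2:ℝ)).const_sub 1)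
      refine this.congr_deriv ?_
      simp only [id, hS', kap']; ring
    have := JJ_ibp h.smooth N k (by omega) (φ := S) (φ' := S') (by fun_prop) (by fun_prop)
      (fun x _ => hd x)
    have e : JJ f N k (fun x => S x ^2) = JJ f N k (fun x => x * (1-x) * S' x) := by
      have e1 : JJ f N k (fun x => S x ^2) = JJ f N k (fun x => (N * x - k) * kap f x * S x) - JJ f N k (fun x => (1-2*x) * S x) := by
        rw [← JJ_sub h.smooth N k (by fun_prop) (by fun_prop)]
        apply JJ_congr; intro x; simp only [hS]; ring
      rw [e1, this, ← JJ_sub h.smooth N k (by fun_prop) (by fun_prop)]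
      apply JJ_congr; intro x; ring
    rw [e]
    calc JJ f N k (fun x => x * (1-x) * S' x) ≤ JJ f N k (fun x => 6 * K * N * (x * (1-x))) := by
          apply JJ_mono h.smooth N k (by fun_prop) (by fun_prop)
          intro x hx
          have hw0 : 0 ≤ x * (1 - x) := mul_nonneg hx.1 (by linarith [hx.2])
          have b : S' x ≤ 6 * K * N := by
            have q1 := (abs_le.1 (kap_le h hx)).2
            have q2 : (N * x - k) * kap' f x ≤ N * (2 * K) := by
              calc _ ≤ |(N * x - k) * kap' f x| := le_abs_self _
                _ = |(N:ℝ) * x - k| * |kap' f x| := abs_mul _ _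
                _ ≤ _ := mul_le_mul (Nxk_le (by omega) hx) (kap'_le h hx) (abs_nonneg _) (by positivity)
            simp only [hS']
            nlinarith
          calc x * (1-x) * S' x ≤ x * (1-x) * (6 * K * N) := by gcongr
            _ = _ := by ring
      _ = 6 * K * N * JJ f N k (fun x => x * (1-x)) := JJ_smul _ _ _ _ _
      _ ≤ _ := by gcongr; exact J_w_le h N k (by omega)
  -- the square
  have sq : ∀ m s : ℝ, 0 ≤ MM f N (k+2) - 2 * m * MM f N (k+1) + m^2 * MM f N k
      - 2 * s * JJ f N (k+1) S + 2 * s * m * JJ f N k S + s^2 * JJ f N k (fun x => S x ^2) := by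
    intro m s
    have c0 := dens_cont h.smooth N k
    have c1 := dens_cont h.smooth N (k+1)
    have c2 := dens_cont h.smooth N (k+2)
    have : 0 ≤ ∫ x in (0:ℝ)..1, (dens f N (k+2) x + (-2 * m) * dens f N (k+1) x + m^2 * dens f N k x
      + (-2 * s) * (dens f N (k+1) x * S x) + (2 * s * m) * (dens f N k x * S x) + s^2 * (dens f N k x * S x ^2)) := by
      apply intervalIntegral.integral_nonneg (by norm_num)
      intro x hx
      obtain ⟨j, rfl⟩ := Nat.exists_eq_add_of_le hk
      set F := Real.exp (deriv f x) with hF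
      set E0 := Real.exp (((k + 2 + j : ℕ):ℝ) * f x - (((k + 2 + j : ℕ):ℝ) * x - ((k : ℕ):ℝ)) * deriv f x) with hE0
      have d0 : dens f (k+2+j) k x = x^k * (1-x)^j * E0 * (1-x)^2 := by
        unfold dens; rw [show k + 2 + j - k = j + 2 by omega]; ring
      have d1 : dens f (k+2+j) (k+1) x = x^k * (1-x)^j * E0 * (x * (1-x) * F) := by
        have : Real.exp (((k + 2 + j : ℕ):ℝ) * f x - (((k + 2 + j : ℕ):ℝ) * x - ((k+1 : ℕ):ℝ)) * deriv f x) = E0 * F := by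
          rw [← Real.exp_add]; congr 1; push_cast; ring
        unfold dens; rw [show k + 2 + j - (k+1) = j + 1 by omega, this]; ring
      have d2 : dens f (k+2+j) (k+2) x = x^k * (1-x)^j * E0 * (x * F)^2 := by
        have : Real.exp (((k + 2 + j : ℕ):ℝ) * f x - (((k + 2 + j : ℕ):ℝ) * x - ((k+2 : ℕ):ℝ)) * deriv f x) = E0 * F^2 := by
          rw [hF, ← Real.exp_nat_mul, ← Real.exp_add]; congr 1; push_cast; ring
        unfold dens; rw [show k + 2 + j - (k+2) = j by omega, this]; ring
      rw [d0, d1, d2]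
      have hx0 := hx.1
      have hx1 : 0 ≤ 1 - x := by linarith [hx.2]
      have : 0 ≤ x^k * (1-x)^j * E0 * (x * F - (1-x) * (m + s * S x))^2 := by positivity
      refine this.trans_eq ?_
      ring
    rw [intervalIntegral.integral_add, intervalIntegral.integral_add, intervalIntegral.integral_add,
      intervalIntegral.integral_add, intervalIntegral.integral_add, intervalIntegral.integral_const_mul,
      intervalIntegral.integral_const_mul, intervalIntegral.integral_const_mul,
      intervalIntegral.integral_const_mul, intervalIntegral.integral_const_mul] at this
    · unfold MM JJ
      linarith
    all_goals exact Continuous.intervalIntegrable (by fun_prop) _ _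
  set s := c / (6 * K * Real.exp K * N) with hs
  have hspos : 0 < s := by positivity
  have := sq (MM f N (k+1) / MM f N k) s
  rw [a1] at this
  have b2 : s * (c * MM f N (k+1)) ≤ s * JJ f N (k+1) S := by gcongr
  have b3 : s^2 * JJ f N k (fun x => S x ^2) ≤ s^2 * (6 * K * N * (Real.exp K * MM f N (k+1))) := by gcongr
  have b4 : s^2 * (6 * K * N * (Real.exp K * MM f N (k+1))) = s * (c * MM f N (k+1)) := by
    rw [hs]; field_simp
  have b5 : s * (c * MM f N (k+1)) ≤ MM f N (k+2) - MM f N (k+1)^2 / MM f N k := by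
    have : - 2 * (MM f N (k+1) / MM f N k) * MM f N (k+1) + (MM f N (k+1) / MM f N k)^2 * MM f N k
        = - (MM f N (k+1)^2 / MM f N k) := by field_simp; ring
    linarith
  have b6 := mul_le_mul_of_nonneg_right b5 M0.le
  have b7 : (MM f N (k+2) - MM f N (k+1)^2 / MM f N k) * MM f N k = MM f N (k+2) * MM f N k - MM f N (k+1)^2 := by
    field_simp
  rw [b7] at b6
  refine le_trans (le_of_eq ?_) b6
  rw [hs]; field_simp

theorem incr_zero {f : ℝ → ℝ} {c K : ℝ} (h : Good f c K) (N : ℕ) (hN : 1 ≤ N) :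
    MM f N 0 ≤ 6 * K * Real.exp K * N * MM f N 1 := by
  have hN : (1:ℝ) ≤ N := by exact_mod_cast hN
  have hK := h.hK
  have ckap := (kap_smooth h.smooth).continuous
  have M1 := MM_pos h.smooth N 1
  have := JJ_ibp h.smooth N 0 (by omega) (φ := fun x => 1 - x) (φ' := fun _ => -1) (by fun_prop) (by fun_prop)
      (fun x _ => (hasDerivAt_id x).const_sub 1)
  have e1 : JJ f N 0 (fun x => (1 - 2*x) * (1-x) + x * (1-x) * (-1)) = JJ f N 0 (fun x => 1 - x) - 3 * JJ f N 0 (fun x => x * (1-x)) := by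
    rw [← JJ_smul, ← JJ_sub h.smooth N 0 (by fun_prop) (by fun_prop)]
    apply JJ_congr; intro x; ring
  have e2 : JJ f N 0 (fun x => 1 - x) = MM f N 0 - JJ f N 0 (fun x => x) := by
    rw [JJ_sub h.smooth N 0 (by fun_prop) (by fun_prop), JJ_const, one_mul]
  have e3 : JJ f N 0 (fun x => x) ≤ Real.exp K * MM f N 1 := by
    unfold JJ MM
    rw [← intervalIntegral.integral_const_mul]
    have hc := dens_cont h.smooth N 0
    have hc1 := dens_cont h.smooth N 1
    apply intervalIntegral.integral_mono_on (by norm_num)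
    · exact Continuous.intervalIntegrable (by fun_prop) _ _
    · exact Continuous.intervalIntegrable (by fun_prop) _ _
    · intro x hx
      have e := dens_succ f N 0 (by exact_mod_cast hN) x
      have hp := dens_nonneg f N 1 hx
      rw [zero_add] at e
      have : dens f N 0 x * x = dens f N 1 x * ((1-x) * Real.exp (-deriv f x)) := by
        calc dens f N 0 x * x = (dens f N 0 x * (x * Real.exp (deriv f x))) * (Real.exp (-deriv f x)) := by
              rw [Real.exp_neg]; field_simp
          _ = _ := by rw [← e]; ring
      rw [this, mul_comm]
      apply mul_le_mul_of_nonneg_right _ hp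
      have h2 : Real.exp (-deriv f x) ≤ Real.exp K := Real.exp_le_exp.2 (by linarith [(abs_le.1 (h.b1 x hx)).1])
      have h3 : 1 - x ≤ 1 := by linarith [hx.1]
      calc _ ≤ 1 * Real.exp K := by gcongr
        _ = _ := one_mul _
  have e4 : JJ f N 0 (fun x => (N * x - (0:ℕ)) * kap f x * (1 - x)) ≤ N * (1 + K) * JJ f N 0 (fun x => x * (1-x)) := by
    rw [← JJ_smul]
    apply JJ_mono h.smooth N 0 (by fun_prop) (by fun_prop)
    intro x hx
    have q1 := (abs_le.1 (kap_le h hx)).2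
    have hw0 : 0 ≤ N * (x * (1 - x)) := mul_nonneg (by linarith) (mul_nonneg hx.1 (by linarith [hx.2]))
    have := mul_le_mul_of_nonneg_left q1 hw0
    push_cast
    nlinarith
  have e5 := J_w_le h N 0 (by exact_mod_cast hN)
  rw [zero_add] at e5
  have e6 : MM f N 0 ≤ (N * (1+K) + 3) * JJ f N 0 (fun x => x * (1-x)) + Real.exp K * MM f N 1 := by
    linarith
  have hpos : 0 < Real.exp K * MM f N 1 := by positivity
  have e7 : (N * (1+K) + 3) * JJ f N 0 (fun x => x * (1-x)) ≤ (N * (1+K) + 3) * (Real.exp K * MM f N 1) := by gcongr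
  have e8 : (N * (1+K) + 3 + 1) * (Real.exp K * MM f N 1) ≤ (6 * K * N) * (Real.exp K * MM f N 1) := by
    gcongr; nlinarith
  nlinarith


theorem taylor_Icc {φ φ' φ'' : ℝ → ℝ} {a b B : ℝ}
    (h1 : ∀ x ∈ Icc a b, HasDerivAt φ (φ' x) x) (h2 : ∀ x ∈ Icc a b, HasDerivAt φ' (φ'' x) x)
    (hB : ∀ x ∈ Icc a b, |φ'' x| ≤ B) {x y : ℝ} (hx : x ∈ Icc a b) (hy : y ∈ Icc a b) :
    |φ y - φ x - φ' x * (y - x)| ≤ B * (y - x)^2 := by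
  have hsub : uIcc x y ⊆ Icc a b := uIcc_subset_Icc hx hy
  have hB0 : 0 ≤ B := (abs_nonneg _).trans (hB x hx)
  have l1 : ∀ z ∈ uIcc x y, |φ' z - φ' x| ≤ B * |y - x| := by
    intro z hz
    have := Convex.norm_image_sub_le_of_norm_hasDerivWithin_le (f := φ') (f' := φ'') (C := B) (s := Icc a b)
      (fun u hu => (h2 u hu).hasDerivWithinAt) (fun u hu => hB u hu) (convex_Icc a b) hx (hsub hz)
    refine this.trans ?_
    rw [Real.norm_eq_abs]
    gcongr B * ?_
    exact abs_sub_left_of_mem_uIcc hz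
  have := Convex.norm_image_sub_le_of_norm_hasDerivWithin_le (f := fun z => φ z - φ' x * z)
    (f' := fun z => φ' z - φ' x) (C := B * |y - x|) (s := uIcc x y)
      (fun u hu => (((h1 u (hsub hu)).fun_sub ((hasDerivAt_id u).const_mul (φ' x))).congr_deriv (by ring)).hasDerivWithinAt)
      (fun u hu => l1 u hu) (convex_uIcc x y) left_mem_uIcc right_mem_uIcc
  rw [Real.norm_eq_abs, Real.norm_eq_abs, mul_assoc, ← sq, sq_abs] at this
  refine le_trans (le_of_eq ?_) this
  congr 1; ring

theorem bdd_Icc {φ : ℝ → ℝ} {a b : ℝ} (h : ContinuousOn φ (Icc a b)) : ∃ B : ℝ, 0 < B ∧ ∀ x ∈ Icc a b, |φ x| ≤ B := by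
  obtain ⟨B, hB⟩ := isCompact_Icc.exists_bound_of_continuousOn h
  exact ⟨max B 1, by positivity, fun x hx => (hB x hx).trans (le_max_left _ _)⟩

theorem taylor_smooth {φ : ℝ → ℝ} (h : ContDiff ℝ (⊤ : ℕ∞) φ) : ∃ B : ℝ, 0 < B ∧
    (∀ x ∈ Icc (0:ℝ) 1, |deriv φ x| ≤ B) ∧
    (∀ x ∈ Icc (0:ℝ) 1, ∀ y ∈ Icc (0:ℝ) 1, |φ y - φ x - deriv φ x * (y - x)| ≤ B * (y-x)^2) := by
  obtain ⟨B1, p1, hB1⟩ := bdd_Icc (a := 0) (b := 1) (cd_deriv h).continuous.continuousOn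
  obtain ⟨B2, p2, hB2⟩ := bdd_Icc (a := 0) (b := 1) (cd_deriv (cd_deriv h)).continuous.continuousOn
  refine ⟨B1 + B2, by positivity, fun x hx => by linarith [hB1 x hx], fun x hx y hy => ?_⟩
  have := taylor_Icc (a := 0) (b := 1) (fun x _ => cd_hasDeriv h x) (fun x _ => cd_hasDeriv (cd_deriv h) x) hB2 hx hy
  nlinarith [sq_nonneg (y-x)]

theorem mom2 {f : ℝ → ℝ} {c K : ℝ} (h : Good f c K) (N k : ℕ) (hk : k ≤ N) :
    c * JJ f N k (fun x => (N * x - k)^2) ≤ 2 * N * MM f N k := by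
  have ckap := (kap_smooth h.smooth).continuous
  have := JJ_ibp h.smooth N k hk (φ := fun x => N * x - k) (φ' := fun _ => (N:ℝ)) (by fun_prop) (by fun_prop)
      (fun x _ => (((hasDerivAt_id x).const_mul (N:ℝ)).sub_const (k:ℝ)).congr_deriv (by simp))
  have e1 : c * JJ f N k (fun x => (N * x - k)^2) ≤ JJ f N k (fun x => (N * x - k) * kap f x * (N * x - k)) := by
    rw [← JJ_smul]
    apply JJ_mono h.smooth N k (by fun_prop) (by fun_prop)
    intro x hx
    have := mul_le_mul_of_nonneg_right (h.lower x hx) (sq_nonneg ((N:ℝ) * x - k))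
    linarith
  refine e1.trans ?_
  rw [this]
  apply JJ_le h.smooth N k (by fun_prop)
  intro x hx
  have a1 : (1 - 2 * x) * (N * x - k) ≤ 1 * N := by
    refine (le_abs_self _).trans ?_
    rw [abs_mul]
    have hw2 : |1 - 2 * x| ≤ 1 := by rw [abs_le]; constructor <;> linarith [hx.1, hx.2]
    exact mul_le_mul hw2 (Nxk_le hk hx) (abs_nonneg _) (by norm_num)
  have hw1 : x * (1 - x) ≤ 1 := by nlinarith [hx.1, hx.2]
  have : (0:ℝ) ≤ N := by positivity
  nlinarith

theorem mom1 {f : ℝ → ℝ} {c K : ℝ} (h : Good f c K) (N k : ℕ) (hk : k ≤ N) :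
    |JJ f N k (fun x => N * x - k)| ≤ (1 / c + 2 * K / c^2) * MM f N k := by
  have ckap := (kap_smooth h.smooth).continuous
  have ckap' := kap'_cont h.smooth
  have hc := h.cpos
  have hne : ∀ x ∈ Icc (0:ℝ) 1, kap f x ≠ 0 := fun x hx => (hc.trans_le (h.lower x hx)).ne'
  have hne2 : ∀ x ∈ Icc (0:ℝ) 1, kap f x ^2 ≠ 0 := fun x hx => pow_ne_zero _ (hne x hx)
  have ci : ContinuousOn (fun x => (kap f x)⁻¹) (Icc 0 1) := ckap.continuousOn.inv₀ hne
  have ci' : ContinuousOn (fun x => -kap' f x / (kap f x)^2) (Icc 0 1) :=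
    ContinuousOn.div (by fun_prop) (by fun_prop) hne2
  have := JJ_ibp h.smooth N k hk (φ := fun x => (kap f x)⁻¹) (φ' := fun x => -kap' f x / (kap f x)^2) ci ci'
      (fun x hx => (kap_deriv h.smooth x).fun_inv (hne x hx))
  have e : JJ f N k (fun x => N * x - k) = JJ f N k (fun x => (N * x - k) * kap f x * (kap f x)⁻¹) := by
    unfold JJ
    apply intervalIntegral.integral_congr
    intro x hx
    rw [uIcc_of_le (by norm_num)] at hx
    simp only
    rw [mul_assoc ((N:ℝ) * x - k), mul_inv_cancel₀ (hne x hx), mul_one]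
  rw [e, this]
  apply JJ_abs_le h.smooth N k (by fun_prop)
  intro x hx
  have hw0 : 0 ≤ x * (1 - x) := mul_nonneg hx.1 (by linarith [hx.2])
  have hw1 : x * (1 - x) ≤ 1 := by nlinarith [hx.1, hx.2]
  have hw2 : |1 - 2 * x| ≤ 1 := by rw [abs_le]; constructor <;> linarith [hx.1, hx.2]
  have hk1 := h.lower x hx
  have hkp : 0 < kap f x := hc.trans_le hk1
  have hK := h.hK
  refine (abs_add_le _ _).trans ?_
  apply add_le_add
  · rw [abs_mul, abs_inv, abs_of_pos hkp]
    calc _ ≤ 1 * (kap f x)⁻¹ := by gcongr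
      _ ≤ 1 / c := by rw [one_mul, one_div]; gcongr
  · rw [abs_mul, abs_div, abs_neg, abs_of_nonneg hw0, abs_of_pos (by positivity : 0 < kap f x ^2)]
    calc _ ≤ 1 * (2 * K / c^2) := by
          gcongr
          exact kap'_le h hx
      _ = _ := one_mul _

theorem conc_J {f : ℝ → ℝ} {c K : ℝ} (h : Good f c K) {φ : ℝ → ℝ} (hφ : ContDiff ℝ (⊤ : ℕ∞) φ) :
    ∃ C : ℝ, 0 < C ∧ ∀ N k : ℕ, 1 ≤ N → k ≤ N →
      |JJ f N k φ - φ (k / N) * MM f N k| ≤ C / N * MM f N k := by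
  obtain ⟨B, hB0, hB1, hB2⟩ := taylor_smooth hφ
  have hc := h.cpos
  have hK := h.hK
  refine ⟨B * (2 / c) + B * (1 / c + 2 * K / c^2), by positivity, fun N k hN hk => ?_⟩
  have hN' : (0:ℝ) < N := by exact_mod_cast hN
  have M0 := MM_pos h.smooth N k
  have hα : (k:ℝ)/N ∈ Icc (0:ℝ) 1 := ⟨by positivity, by
    rw [div_le_one hN']; exact_mod_cast hk⟩
  set α := (k:ℝ)/N with hαd
  have cφ := hφ.continuous
  have e : JJ f N k φ - φ α * MM f N k = JJ f N k (fun x => φ x - φ α - deriv φ α * (x - α))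
      + deriv φ α / N * JJ f N k (fun x => N * x - k) := by
    rw [← JJ_smul, ← JJ_const, ← JJ_sub h.smooth N k (by fun_prop) (by fun_prop), ← JJ_add h.smooth N k (by fun_prop) (by fun_prop)]
    apply JJ_congr
    intro x
    rw [hαd]; field_simp; ring
  have e1 : |JJ f N k (fun x => φ x - φ α - deriv φ α * (x - α))| ≤ B / N^2 * JJ f N k (fun x => (N * x - k)^2) := by
    have aux : ∀ x : ℝ, B * (x - α)^2 = B / N^2 * (N * x - k)^2 := by
      intro x; rw [hαd]; field_simp
    rw [abs_le]; constructor
    · have := JJ_mono h.smooth N k (φ := fun x => (-(B / N^2)) * (N * x - k)^2) (ψ := fun x => φ x - φ α - deriv φ α * (x - α)) (by fun_prop) (by fun_prop) (by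
        intro x hx
        have := (abs_le.1 (hB2 α hα x hx)).1
        rw [aux] at this
        linarith)
      rw [JJ_smul] at this
      linarith
    · rw [← JJ_smul]
      apply JJ_mono h.smooth N k (by fun_prop) (by fun_prop)
      intro x hx
      have := (abs_le.1 (hB2 α hα x hx)).2
      rw [aux] at this
      exact this
  have m2 := mom2 h N k hk
  have m1 := mom1 h N k hk
  have m2' : JJ f N k (fun x => (N * x - k)^2) ≤ 2 / c * N * MM f N k := by
    have : JJ f N k (fun x => (N * x - k)^2) ≤ (2 * N * MM f N k) / c := by
      rw [le_div_iff₀ hc]; linarith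
    refine this.trans (le_of_eq ?_); ring
  rw [e]
  refine (abs_add_le _ _).trans ?_
  rw [abs_mul, abs_div, abs_of_pos hN']
  calc _ ≤ B / N^2 * (2 / c * N * MM f N k) + B / N * ((1 / c + 2 * K / c^2) * MM f N k) := by
        gcongr
        · exact e1.trans (by gcongr)
        · exact hB1 α hα
    _ = _ := by field_simp

theorem log_close {a a0 e d : ℝ} (hd : 0 < d) (h0 : d ≤ a0) (he : e ≤ d / 2) (h : |a - a0| ≤ e) :
    |Real.log a - Real.log a0| ≤ 2 * e / d := by
  have he0 : 0 ≤ e := (abs_nonneg _).trans h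
  obtain ⟨l, u⟩ := abs_le.1 h
  have ha : d / 2 ≤ a := by linarith
  have ha0 : 0 < a := by linarith
  have ha00 : 0 < a0 := by linarith
  rw [abs_le]; constructor
  · have := Real.log_le_sub_one_of_pos (div_pos ha00 ha0)
    rw [Real.log_div ha00.ne' ha0.ne'] at this
    have h2 : a0 / a - 1 ≤ 2 * e / d := by
      rw [div_sub_one ha0.ne', div_le_div_iff₀ ha0 hd]
      nlinarith
    linarith
  · have := Real.log_le_sub_one_of_pos (div_pos ha0 ha00)
    rw [Real.log_div ha0.ne' ha00.ne'] at this
    have h2 : a / a0 - 1 ≤ 2 * e / d := by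
      rw [div_sub_one ha00.ne', div_le_div_iff₀ ha00 hd]
      nlinarith
    linarith

theorem ratio_interior {f : ℝ → ℝ} {c K : ℝ} (h : Good f c K) {δ : ℝ} (hδ : 0 < δ) :
    ∃ C : ℝ, ∃ N0 : ℕ, 0 < C ∧ ∀ N k : ℕ, N0 ≤ N → k + 1 ≤ N →
      δ ≤ ((k+1 : ℕ):ℝ) / N → ((k+1 : ℕ):ℝ) / N ≤ 1 - δ →
      |Real.log (MM f N (k+1)) - Real.log (MM f N k) - (Real.log (((k+1 : ℕ):ℝ) / N) - Real.log (1 - ((k+1 : ℕ):ℝ) / N)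
        + deriv f (((k+1 : ℕ):ℝ) / N))| ≤ C / N := by
  have sf' := cd_deriv h.smooth
  obtain ⟨C1, hC1, H1⟩ := conc_J h (φ := fun x => x) contDiff_id
  obtain ⟨C2, hC2, H2⟩ := conc_J h (φ := fun x => (1 - x) * Real.exp (-deriv f x)) (by fun_prop)
  set d := δ * Real.exp (-K) with hdd
  have hd : 0 < d := by positivity
  have hdδ : d ≤ δ := by
    have : Real.exp (-K) ≤ 1 := Real.exp_le_one_iff.2 (by linarith [h.hK])
    nlinarith
  set CC := C1 + 1 + C2 with hCC
  obtain ⟨N0, hN0⟩ := exists_nat_gt (2 * CC / d)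
  refine ⟨4 * CC / d, N0 + 1, by positivity, fun N k hN hk hl hu => ?_⟩
  have hN1 : 1 ≤ N := by omega
  have hN' : (0:ℝ) < N := by exact_mod_cast hN1
  have hNN : (N0:ℝ) ≤ N := by exact_mod_cast (by omega : N0 ≤ N)
  have hsm : CC / N ≤ d / 2 := by
    rw [div_lt_iff₀ hd] at hN0
    rw [div_le_div_iff₀ hN' (by norm_num)]
    nlinarith
  have M0 := MM_pos h.smooth N k
  have M1 := MM_pos h.smooth N (k+1)
  have h1 := H1 N k hN1 (by omega)
  have h2 := H2 N (k+1) hN1 hk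
  set α := ((k+1 : ℕ):ℝ) / N with hα
  have hαm : α ∈ Icc (0:ℝ) 1 := ⟨by positivity, by linarith⟩
  have eJ : JJ f N k (fun x => x) = JJ f N (k+1) (fun x => (1 - x) * Real.exp (-deriv f x)) := by
    unfold JJ
    congr 1; ext x
    have := dens_succ f N k hk x
    rw [← mul_assoc, this, Real.exp_neg]
    field_simp
  set a := JJ f N k (fun x => x) / MM f N k with ha
  set b := JJ f N (k+1) (fun x => (1 - x) * Real.exp (-deriv f x)) / MM f N (k+1) with hb
  have ha' : |a - α| ≤ CC / N := by
    have e1 : a - α = (JJ f N k (fun x => x) - k / N * MM f N k) / MM f N k - 1 / N := by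
      rw [ha, hα]; push_cast; field_simp; ring
    rw [e1]
    refine (abs_sub _ _).trans ?_
    rw [abs_div, abs_of_pos M0]
    have : |JJ f N k (fun x => x) - k / N * MM f N k| / MM f N k ≤ C1 / N := by
      rw [div_le_iff₀ M0]; exact h1
    rw [abs_of_pos (by positivity : (0:ℝ) < 1 / N)]
    calc _ ≤ C1 / N + 1 / N := by gcongr
      _ ≤ CC / N := by rw [← add_div]; gcongr; linarith
  have hb' : |b - (1 - α) * Real.exp (-deriv f α)| ≤ CC / N := by
    have e1 : b - (1 - α) * Real.exp (-deriv f α) = (JJ f N (k+1) (fun x => (1 - x) * Real.exp (-deriv f x)) - (1 - α) * Real.exp (-deriv f α) * MM f N (k+1)) / MM f N (k+1) := by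
      rw [hb]; field_simp
    rw [e1, abs_div, abs_of_pos M1]
    have : |JJ f N (k+1) (fun x => (1 - x) * Real.exp (-deriv f x)) - (1 - α) * Real.exp (-deriv f α) * MM f N (k+1)| / MM f N (k+1) ≤ C2 / N := by
      rw [div_le_iff₀ M1]; exact h2
    refine this.trans ?_
    gcongr; linarith
  have hE : Real.exp (-K) ≤ Real.exp (-deriv f α) := Real.exp_le_exp.2 (by linarith [(abs_le.1 (h.b1 α hαm)).2])
  have l1 := log_close hd (hdδ.trans hl) hsm ha'
  have l2 := log_close hd (a0 := (1 - α) * Real.exp (-deriv f α)) (by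
    rw [hdd]; exact mul_le_mul (by linarith) hE (Real.exp_pos _).le (by linarith)) hsm hb'
  have ha0 : 0 < a := by linarith [(abs_le.1 ha').1]
  have hJ : JJ f N k (fun x => x) = a * MM f N k := by rw [ha]; field_simp
  have hb0 : b * MM f N (k+1) = a * MM f N k := by
    rw [← hJ, eJ, hb]; field_simp
  have hb00 : 0 < b := by
    have : 0 < b * MM f N (k+1) := by rw [hb0]; positivity
    exact pos_of_mul_pos_left this M1.le
  have hl := congrArg Real.log hb0
  rw [Real.log_mul hb00.ne' M1.ne', Real.log_mul ha0.ne' M0.ne'] at hl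
  rw [Real.log_mul (by linarith : 1 - α ≠ 0) (Real.exp_pos _).ne', Real.log_exp] at l2
  have : Real.log (MM f N (k+1)) - Real.log (MM f N k) - (Real.log α - Real.log (1 - α) + deriv f α)
      = (Real.log a - Real.log α) - (Real.log b - (Real.log (1 - α) + - deriv f α)) := by linarith
  rw [this]
  refine (abs_sub _ _).trans ?_
  have e9 : 4 * CC / d / N = 2 * (CC / N) / d + 2 * (CC / N) / d := by field_simp; ring
  rw [e9]
  linarith


noncomputable def GG (f : ℝ → ℝ) : ℝ → ℝ := fun x => GP x + f x
noncomputable def G1 (f : ℝ → ℝ) (x : ℝ) : ℝ := Real.log x - Real.log (1 - x) + deriv f x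
noncomputable def G2 (f : ℝ → ℝ) (x : ℝ) : ℝ := kap f x / (x * (1 - x))

theorem GP_cont : Continuous GP := by
  unfold GP
  have h := Real.continuous_mul_log
  exact h.add (h.comp (continuous_const.sub continuous_id))

theorem GP_deriv {x : ℝ} (hx : x ∈ Ioo (0:ℝ) 1) :
    HasDerivAt GP (Real.log x - Real.log (1 - x)) x := by
  have h0 : x ≠ 0 := hx.1.ne'
  have h1 : 1 - x ≠ 0 := by linarith [hx.2]
  have e1 := Real.hasDerivAt_mul_log h0
  have e2 := (Real.hasDerivAt_mul_log h1).comp x ((hasDerivAt_id x).const_sub 1)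
  exact (e1.add e2).congr_deriv (by ring)

theorem GG_deriv {f : ℝ → ℝ} (h : ContDiff ℝ (⊤ : ℕ∞) f) {x : ℝ} (hx : x ∈ Ioo (0:ℝ) 1) :
    HasDerivAt (GG f) (G1 f x) x := (GP_deriv hx).add (cd_hasDeriv h x)

theorem G1_deriv {f : ℝ → ℝ} (h : ContDiff ℝ (⊤ : ℕ∞) f) {x : ℝ} (hx : x ∈ Ioo (0:ℝ) 1) :
    HasDerivAt (G1 f) (G2 f x) x := by
  have h0 : x ≠ 0 := hx.1.ne'
  have h1 : 1 - x ≠ 0 := by linarith [hx.2]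
  have e1 := Real.hasDerivAt_log h0
  have e2 := (Real.hasDerivAt_log h1).comp x ((hasDerivAt_id x).const_sub 1)
  refine ((e1.sub e2).add (cd_hasDeriv (cd_deriv h) x)).congr_deriv ?_
  unfold G2 kap
  field_simp
  ring

theorem G2_ge {f : ℝ → ℝ} {c K : ℝ} (h : Good f c K) {x : ℝ} (hx : x ∈ Ioo (0:ℝ) 1) : c ≤ G2 f x := by
  unfold G2
  have hx1 : 0 < 1 - x := by linarith [hx.2]
  have hx0 := hx.1
  rw [le_div_iff₀ (by positivity)]
  have := h.lower x ⟨hx.1.le, hx.2.le⟩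
  have hc := h.cpos
  have hle : x * (1 - x) ≤ 1 := by nlinarith
  have := mul_le_mul_of_nonneg_left hle hc.le
  linarith

theorem Phase_eq {f : ℝ → ℝ} (h : ContDiff ℝ (⊤ : ℕ∞) f) (α : ℝ) {x : ℝ} (hx : x ∈ Ioo (0:ℝ) 1) :
    Phase (GG f) α x = (x - α) * G1 f x - (GG f x - GG f α) := by
  unfold Phase
  rw [(GG_deriv h hx).deriv]

theorem Phase_lower {f : ℝ → ℝ} {c K : ℝ} (h : Good f c K) {α x : ℝ} (hα : α ∈ Icc (0:ℝ) 1) (hx : x ∈ Ioo (0:ℝ) 1) :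
    c / 2 * (α - x)^2 ≤ Phase (GG f) α x := by
  rw [Phase_eq h.smooth α hx]
  have hconv : ConvexOn ℝ (Icc (0:ℝ) 1) (fun x => GG f x - c / 2 * x^2) := by
    apply convexOn_of_hasDerivWithinAt2_nonneg (convex_Icc 0 1) (f' := fun x => G1 f x - c * x)
      (f'' := fun x => G2 f x - c)
    · have := GP_cont
      have := h.smooth.continuous
      unfold GG
      fun_prop
    · intro y hy
      rw [interior_Icc] at hy
      refine (((GG_deriv h.smooth hy).fun_sub ((hasDerivAt_pow 2 y).const_mul (c/2))).congr_deriv ?_).hasDerivWithinAt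
      norm_num; ring
    · intro y hy
      rw [interior_Icc] at hy
      refine (((G1_deriv h.smooth hy).fun_sub ((hasDerivAt_id y).const_mul c)).congr_deriv ?_).hasDerivWithinAt
      ring
    · intro y hy
      rw [interior_Icc] at hy
      linarith [G2_ge h hy]
  have hd : HasDerivAt (fun x => GG f x - c / 2 * x^2) (G1 f x - c * x) x := by
    refine (((GG_deriv h.smooth hx).fun_sub ((hasDerivAt_pow 2 x).const_mul (c/2))).congr_deriv ?_)
    norm_num; ring
  have hx' : x ∈ Icc (0:ℝ) 1 := ⟨hx.1.le, hx.2.le⟩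
  rcases lt_trichotomy x α with hlt | heq | hgt
  · have := hconv.le_slope_of_hasDerivAt hx' hα hlt hd
    rw [slope_def_field, le_div_iff₀ (by linarith)] at this
    nlinarith
  · subst heq; simp
  · have := hconv.slope_le_of_hasDerivAt hα hx' hgt hd
    rw [slope_def_field, div_le_iff₀ (by linarith)] at this
    nlinarith

theorem mul_log_le {α x : ℝ} (hα : 0 ≤ α) (hx : 0 < x) : α * Real.log α - α * Real.log x ≤ α * (α - x) / x := by
  rcases hα.eq_or_lt with rfl | hα
  · simp
  · have := Real.log_le_sub_one_of_pos (div_pos hα hx)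
    rw [Real.log_div hα.ne' hx.ne'] at this
    have := mul_le_mul_of_nonneg_left this hα.le
    have e : α * (α / x - 1) = α * (α - x) / x := by field_simp
    linarith

theorem Phase_upper {f : ℝ → ℝ} {c K : ℝ} (h : Good f c K) {α x : ℝ} (hα : α ∈ Icc (0:ℝ) 1) (hx : x ∈ Ioo (0:ℝ) 1) :
    Phase (GG f) α x ≤ (α - x)^2 / (x * (1 - x)) + K * (α - x)^2 := by
  rw [Phase_eq h.smooth α hx]
  have hx0 := hx.1
  have hx1 : 0 < 1 - x := by linarith [hx.2]
  have a1 := mul_log_le hα.1 hx0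
  have a2 := mul_log_le (by linarith [hα.2] : 0 ≤ 1 - α) hx1
  have a3 := (abs_le.1 (taylor_Icc (a := 0) (b := 1) (fun x _ => cd_hasDeriv h.smooth x)
    (fun x _ => cd_hasDeriv (cd_deriv h.smooth) x) h.b2 ⟨hx.1.le, hx.2.le⟩ hα)).2
  have e : α * (α - x) / x + (1 - α) * (1 - α - (1 - x)) / (1 - x) = (α - x)^2 / (x * (1 - x)) := by
    field_simp; ring
  rw [← e]
  unfold G1 GG GP
  linarith

theorem dens_eq {f : ℝ → ℝ} (h : ContDiff ℝ (⊤ : ℕ∞) f) {N k : ℕ} (hN : 1 ≤ N) (hk : k ≤ N) {x : ℝ} (hx : x ∈ Ioo (0:ℝ) 1) :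
    dens f N k x = Real.exp (-(N:ℝ) * Phase (GG f) (k / N) x) * Real.exp (N * GG f (k / N)) := by
  rw [Phase_eq h _ hx, ← Real.exp_add]
  have hN' : (0:ℝ) < N := by exact_mod_cast hN
  have hx0 := hx.1
  have hx1 : 0 < 1 - x := by linarith [hx.2]
  unfold dens
  have p1 : x ^ k = Real.exp (k * Real.log x) := by rw [Real.exp_nat_mul, Real.exp_log hx0]
  have p2 : (1 - x) ^ (N - k) = Real.exp ((N - k : ℕ) * Real.log (1 - x)) := by
    rw [Real.exp_nat_mul, Real.exp_log hx1]
  rw [p1, p2, ← Real.exp_add, ← Real.exp_add]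
  congr 1
  unfold G1 GG GP
  rw [Nat.cast_sub hk]
  field_simp
  ring

theorem QQ_eq {f : ℝ → ℝ} (h : ContDiff ℝ (⊤ : ℕ∞) f) {N k : ℕ} (hN : 1 ≤ N) (hk : k ≤ N) :
    QQ (GG f) N (k / N) = 2 * Real.pi * MM f N k := by
  unfold QQ Qnorm MM
  rw [mul_assoc, ← intervalIntegral.integral_mul_const]
  congr 1
  apply intervalIntegral.integral_congr_Ioo_of_le (by norm_num)
  intro x hx
  exact (dens_eq h hN hk hx).symm

theorem grid_mem {N k : ℕ} (hN : 1 ≤ N) (hk : k ≤ N) : (k:ℝ)/N ∈ Icc (0:ℝ) 1 := by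
  have hN' : (0:ℝ) < N := by exact_mod_cast hN
  exact ⟨by positivity, by rw [div_le_one hN']; exact_mod_cast hk⟩

theorem QQ_pos {f : ℝ → ℝ} (h : ContDiff ℝ (⊤ : ℕ∞) f) {N k : ℕ} (hN : 1 ≤ N) (hk : k ≤ N) :
    0 < QQ (GG f) N (k / N) := by
  rw [QQ_eq h hN hk]
  have := MM_pos h N k
  have := Real.pi_pos
  positivity

theorem QQ_le {f : ℝ → ℝ} {c K : ℝ} (h : Good f c K) {N k : ℕ} (hN : 1 ≤ N) (hk : k ≤ N) :
    QQ (GG f) N (k / N) ≤ 2 * Real.pi * Real.exp (N * GG f (k / N)) := by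
  rw [QQ_eq h.smooth hN hk]
  have := Real.pi_pos
  gcongr
  unfold MM
  have : Real.exp (N * GG f (k / N)) = ∫ x in (0:ℝ)..1, Real.exp (N * GG f (k / N)) := by simp
  rw [this]
  apply intervalIntegral.integral_mono_on_of_le_Ioo (by norm_num) ((dens_cont h.smooth N k).intervalIntegrable _ _)
    (by simp)
  intro x hx
  rw [dens_eq h.smooth hN hk hx]
  have hp : 0 ≤ Phase (GG f) (k / N) x := le_trans (by have := h.cpos; positivity) (Phase_lower h (grid_mem hN hk) hx)
  have : Real.exp (-(N:ℝ) * Phase (GG f) (k / N) x) ≤ 1 := by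
    rw [Real.exp_le_one_iff]
    have : (0:ℝ) ≤ N := by positivity
    nlinarith
  nlinarith [Real.exp_pos (N * GG f (k / N))]

theorem QQ_ge {f : ℝ → ℝ} {c K : ℝ} (h : Good f c K) {N k : ℕ} (hN : 2 ≤ N) (hk : k ≤ N) :
    1 / N * Real.exp (-(4 + K)) * Real.exp (N * GG f (k / N)) ≤ QQ (GG f) N (k / N) := by
  have hN1 : 1 ≤ N := by omega
  rw [QQ_eq h.smooth hN1 hk]
  have hN' : (2:ℝ) ≤ N := by exact_mod_cast hN
  have hα := grid_mem hN1 hk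
  set α := (k:ℝ)/N with hαd
  set i : ℝ := 1 / N with hi
  have hi0 : 0 < i := by positivity
  have hi1 : i ≤ 1/2 := by rw [hi]; gcongr
  have hiN : i * N = 1 := by rw [hi]; field_simp
  have hK := h.hK
  have main : ∀ a : ℝ, 0 ≤ a → a + i/4 ≤ 1 → (∀ x ∈ Ioo a (a + i/4), (α - x)^2 ≤ (i/2)^2 ∧ i / 16 ≤ x * (1 - x)) →
      1 / 4 * (i * Real.exp (-(4 + K)) * Real.exp (N * GG f α)) ≤ MM f N k := by
    intro a ha0 ha1 hh
    have e1 : 1 / 4 * (i * Real.exp (-(4 + K)) * Real.exp (N * GG f α)) =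
      ∫ x in a..(a + i/4), Real.exp (-(4 + K)) * Real.exp (N * GG f α) := by
      simp; ring
    rw [e1]
    have e2 : ∫ x in a..(a + i/4), dens f N k x ≤ MM f N k := by
      unfold MM
      apply intervalIntegral.integral_mono_interval ha0 (by linarith) ha1
      · filter_upwards [MeasureTheory.ae_restrict_mem measurableSet_Ioc] with x hx
        exact dens_nonneg f N k ⟨hx.1.le, hx.2⟩
      · exact (dens_cont h.smooth N k).intervalIntegrable _ _
    refine le_trans ?_ e2
    apply intervalIntegral.integral_mono_on_of_le_Ioo (by linarith) (by simp) ((dens_cont h.smooth N k).intervalIntegrable _ _)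
    intro x hx
    have hx01 : x ∈ Ioo (0:ℝ) 1 := ⟨by linarith [hx.1], by linarith [hx.2]⟩
    rw [dens_eq h.smooth hN1 hk hx01, ← hαd]
    gcongr
    obtain ⟨q1, q2⟩ := hh x hx
    have q3 := Phase_upper h hα hx01
    have q4 : (α - x)^2 / (x * (1-x)) ≤ 4 * i := by
      rw [div_le_iff₀ (by linarith)]
      nlinarith
    have q5 : K * (α - x)^2 ≤ K * i := by
      gcongr; nlinarith
    have q6 : Phase (GG f) α x ≤ (4 + K) * i := by linarith
    have : (N:ℝ) * Phase (GG f) α x ≤ N * ((4+K) * i) := by gcongr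
    nlinarith
  have : 1 / 4 * (i * Real.exp (-(4 + K)) * Real.exp (N * GG f α)) ≤ MM f N k := by
    rcases le_total α (1/2) with hα2 | hα2
    · apply main (α + i/4) (by linarith [hα.1]) (by linarith)
      intro x hx
      have h1 : i / 4 ≤ x := by linarith [hx.1, hα.1]
      have h2 : 1/4 ≤ 1 - x := by linarith [hx.2]
      constructor
      · nlinarith [hx.1, hx.2]
      · nlinarith
    · apply main (α - i/2) (by linarith [hα.1]) (by linarith [hα.2])
      intro x hx
      have h1 : 1 / 4 ≤ x := by linarith [hx.1, hα.1]
      have h2 : i/4 ≤ 1 - x := by linarith [hx.2, hα.2]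
      constructor
      · nlinarith [hx.1, hx.2]
      · nlinarith
  have hpi := Real.pi_gt_three
  have hMM := MM_pos h.smooth N k
  nlinarith

theorem grid_close {f : ℝ → ℝ} {c K : ℝ} (h : Good f c K) {N : ℕ} (hN : 1 ≤ N) {x : ℝ} (hx : x ∈ Ioo (0:ℝ) 1) :
    ∃ k : ℕ, k ≤ N ∧ Phase (GG f) (k / N) x ≤ (2 + K) / N := by
  have hN' : (1:ℝ) ≤ N := by exact_mod_cast hN
  have hK := h.hK
  set i : ℝ := 1 / N with hi
  have hi0 : 0 < i := by positivity
  have hi1 : i ≤ 1 := by rw [hi, div_le_one (by linarith)]; exact hN'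
  have hiN : i * N = 1 := by rw [hi]; field_simp
  have hx0 := hx.1
  have hx1 := hx.2
  have fin : ∀ k : ℕ, k ≤ N → |(k:ℝ)/N - x| ≤ i → (((k:ℝ)/N - x)^2 ≤ 2 * i * (x * (1-x))) →
      ∃ k : ℕ, k ≤ N ∧ Phase (GG f) (k / N) x ≤ (2 + K) / N := by
    intro k hk ha hb
    refine ⟨k, hk, (Phase_upper h (grid_mem hN hk) hx).trans ?_⟩
    have : ((k:ℝ)/N - x)^2 / (x * (1-x)) ≤ 2 * i := by
      rw [div_le_iff₀ (by nlinarith)]; exact hb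
    have h2 : ((k:ℝ)/N - x)^2 ≤ i := by
      rw [← sq_abs]; nlinarith [abs_nonneg ((k:ℝ)/N - x)]
    have h3 : (2 + K) / N = 2 * i + K * i := by rw [hi]; ring
    rw [h3]
    nlinarith
  have mulN : ∀ k : ℕ, (k:ℝ) / N = k * i := by intro k; rw [hi]; ring
  rcases le_total x (1/2) with hxh | hxh
  · have f1 : (⌊(N:ℝ) * x⌋₊ : ℝ) ≤ N * x := Nat.floor_le (by positivity)
    have f2 : (N:ℝ) * x < ⌊(N:ℝ) * x⌋₊ + 1 := Nat.lt_floor_add_one _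
    have f0 : (0:ℝ) ≤ (⌊(N:ℝ) * x⌋₊ : ℝ) := by positivity
    have g1 : (⌊(N:ℝ) * x⌋₊ : ℝ) * i ≤ x := by nlinarith
    have g2 : x - i ≤ (⌊(N:ℝ) * x⌋₊ : ℝ) * i := by nlinarith
    have g0 : 0 ≤ (⌊(N:ℝ) * x⌋₊ : ℝ) * i := by positivity
    apply fin ⌊(N:ℝ) * x⌋₊
    · have : (⌊(N:ℝ) * x⌋₊ : ℝ) ≤ N := by nlinarith
      exact_mod_cast this
    · rw [mulN, abs_le]; constructor <;> linarith
    · rw [mulN]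
      have d2 : (x - (⌊(N:ℝ) * x⌋₊ : ℝ) * i) * (x - (⌊(N:ℝ) * x⌋₊ : ℝ) * i) ≤ i * x :=
        mul_le_mul (by linarith) (by linarith) (by linarith) hi0.le
      have d3 : i * x * 1 ≤ i * x * (2 * (1 - x)) := mul_le_mul_of_nonneg_left (by linarith) (by positivity)
      nlinarith
  · have f1 : (N:ℝ) * x ≤ ⌈(N:ℝ) * x⌉₊ := Nat.le_ceil _
    have f2 : (⌈(N:ℝ) * x⌉₊ : ℝ) < N * x + 1 := Nat.ceil_lt_add_one (by positivity)
    have f0 : ⌈(N:ℝ) * x⌉₊ ≤ N := by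
      apply Nat.ceil_le.2; nlinarith
    have f0' : (⌈(N:ℝ) * x⌉₊ : ℝ) ≤ N := by exact_mod_cast f0
    have g1 : x ≤ (⌈(N:ℝ) * x⌉₊ : ℝ) * i := by nlinarith
    have g2 : (⌈(N:ℝ) * x⌉₊ : ℝ) * i ≤ x + i := by nlinarith
    have g0 : (⌈(N:ℝ) * x⌉₊ : ℝ) * i ≤ 1 := by nlinarith
    apply fin ⌈(N:ℝ) * x⌉₊ f0
    · rw [mulN, abs_le]; constructor <;> linarith
    · rw [mulN]
      have d2 : ((⌈(N:ℝ) * x⌉₊ : ℝ) * i - x) * ((⌈(N:ℝ) * x⌉₊ : ℝ) * i - x) ≤ i * (1 - x) :=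
        mul_le_mul (by linarith) (by linarith) (by linarith) hi0.le
      have d3 : i * (1 - x) * 1 ≤ i * (1 - x) * (2 * x) :=
        mul_le_mul_of_nonneg_left (by linarith) (mul_nonneg hi0.le (by linarith))
      nlinarith


/-- expectation of `φ` with respect to the weights `p` on `{0,…,N}` -/
noncomputable def Ex (p : ℕ → ℝ) (N : ℕ) (φ : ℕ → ℝ) : ℝ := ∑ k ∈ Finset.range (N + 1), p k * φ k

noncomputable def Cv (p : ℕ → ℝ) (N : ℕ) (φ ψ : ℕ → ℝ) : ℝ :=
  Ex p N (fun k => φ k * ψ k) - Ex p N φ * Ex p N ψ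

structure Prob (p : ℕ → ℝ) (N : ℕ) : Prop where
  pos : ∀ k, 0 < p k
  sum : ∑ k ∈ Finset.range (N + 1), p k = 1

noncomputable def gr (p : ℕ → ℝ) : ℕ → ℝ
  | 0 => 0
  | (k+1) => p k / p (k+1)

theorem Ex_add (p : ℕ → ℝ) (N : ℕ) (φ ψ : ℕ → ℝ) : Ex p N (fun k => φ k + ψ k) = Ex p N φ + Ex p N ψ := by
  unfold Ex; rw [← Finset.sum_add_distrib]; congr 1; ext; ring

theorem Ex_sub (p : ℕ → ℝ) (N : ℕ) (φ ψ : ℕ → ℝ) : Ex p N (fun k => φ k - ψ k) = Ex p N φ - Ex p N ψ := by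
  unfold Ex; rw [← Finset.sum_sub_distrib]; congr 1; ext; ring

theorem Ex_smul (p : ℕ → ℝ) (N : ℕ) (a : ℝ) (φ : ℕ → ℝ) : Ex p N (fun k => a * φ k) = a * Ex p N φ := by
  unfold Ex; rw [Finset.mul_sum]; congr 1; ext; ring

theorem Ex_const {p : ℕ → ℝ} {N : ℕ} (h : Prob p N) (a : ℝ) : Ex p N (fun _ => a) = a := by
  unfold Ex; rw [← Finset.sum_mul, h.sum, one_mul]

theorem Ex_congr {p : ℕ → ℝ} {N : ℕ} {φ ψ : ℕ → ℝ} (h : ∀ k ≤ N, φ k = ψ k) : Ex p N φ = Ex p N ψ := by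
  unfold Ex; apply Finset.sum_congr rfl; intro k hk
  rw [h k (by simpa [Nat.lt_succ_iff] using hk)]

theorem Ex_mono {p : ℕ → ℝ} {N : ℕ} (hp : Prob p N) {φ ψ : ℕ → ℝ} (h : ∀ k ≤ N, φ k ≤ ψ k) : Ex p N φ ≤ Ex p N ψ := by
  unfold Ex; apply Finset.sum_le_sum; intro k hk
  exact mul_le_mul_of_nonneg_left (h k (by simpa [Nat.lt_succ_iff] using hk)) (hp.pos k).le

theorem Ex_nonneg {p : ℕ → ℝ} {N : ℕ} (hp : Prob p N) {φ : ℕ → ℝ} (h : ∀ k ≤ N, 0 ≤ φ k) : 0 ≤ Ex p N φ := by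
  have := Ex_mono hp (φ := fun _ => 0) h
  rwa [Ex_const hp] at this

theorem Ex_abs {p : ℕ → ℝ} {N : ℕ} (hp : Prob p N) (φ : ℕ → ℝ) : |Ex p N φ| ≤ Ex p N (fun k => |φ k|) := by
  unfold Ex
  refine (Finset.abs_sum_le_sum_abs _ _).trans (le_of_eq ?_)
  congr 1; ext k
  rw [abs_mul, abs_of_pos (hp.pos k)]

theorem Ex_gr {p : ℕ → ℝ} {N : ℕ} (hp : Prob p N) (φ : ℕ → ℝ) :
    Ex p N (fun k => gr p k * φ k) = Ex p N (fun k => φ (k+1)) - p N * φ (N+1) := by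
  unfold Ex
  rw [Finset.sum_range_succ', Finset.sum_range_succ (fun k => p k * φ (k+1))]
  simp only [gr]
  simp only [zero_mul, mul_zero, add_zero, add_sub_cancel_right]
  apply Finset.sum_congr rfl
  intro k _
  have := (hp.pos (k+1)).ne'
  field_simp

theorem p_le_one {p : ℕ → ℝ} {N : ℕ} (hp : Prob p N) {k : ℕ} (hk : k ≤ N) : p k ≤ 1 := by
  rw [← hp.sum]
  exact Finset.single_le_sum (f := p) (fun i _ => (hp.pos i).le) (by simp; omega)

theorem Cv_shift {p : ℕ → ℝ} {N : ℕ} (hp : Prob p N) (φ ψ : ℕ → ℝ) (a b : ℝ) :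
    Cv p N (fun k => φ k - a) (fun k => ψ k - b) = Cv p N φ ψ := by
  unfold Cv
  have : Ex p N (fun k => (φ k - a) * (ψ k - b)) = Ex p N (fun k => φ k * ψ k) - b * Ex p N φ - a * Ex p N ψ + a * b := by
    rw [← Ex_smul, ← Ex_smul, ← Ex_sub, ← Ex_sub, ← Ex_const hp (a*b), ← Ex_add]
    apply Ex_congr; intros; ring
  rw [this, Ex_sub, Ex_sub, Ex_const hp, Ex_const hp]
  ring

theorem Cv_self_nonneg {p : ℕ → ℝ} {N : ℕ} (hp : Prob p N) (φ : ℕ → ℝ) : 0 ≤ Cv p N φ φ := by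
  rw [← Cv_shift hp φ φ (Ex p N φ) (Ex p N φ)]
  unfold Cv
  rw [Ex_sub, Ex_const hp, sub_self]
  have := Ex_nonneg hp (φ := fun k => (φ k - Ex p N φ) * (φ k - Ex p N φ)) (fun k _ => mul_self_nonneg _)
  linarith

theorem Cv_self_le {p : ℕ → ℝ} {N : ℕ} (hp : Prob p N) (φ : ℕ → ℝ) (a : ℝ) :
    Cv p N φ φ ≤ Ex p N (fun k => (φ k - a)^2) := by
  rw [← Cv_shift hp φ φ a a]
  unfold Cv
  have : Ex p N (fun k => (φ k - a)^2) = Ex p N (fun k => (φ k - a) * (φ k - a)) := by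
    apply Ex_congr; intros; ring
  rw [this]
  nlinarith [mul_self_nonneg (Ex p N (fun k => φ k - a))]

theorem cheb {p : ℕ → ℝ} {N : ℕ} (hp : Prob p N) {φ ψ : ℕ → ℝ}
    (h : ∀ i j, i ≤ j → j ≤ N → 0 ≤ (φ i - φ j) * (ψ i - ψ j)) : 0 ≤ Cv p N φ ψ := by
  have key : 0 ≤ Ex p N (fun i => Ex p N (fun j => (φ i - φ j) * (ψ i - ψ j))) := by
    apply Ex_nonneg hp; intro i hi
    apply Ex_nonneg hp; intro j hj
    rcases le_total i j with hij | hij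
    · exact h i j hij hj
    · have := h j i hij hi; nlinarith
  have e : ∀ i, Ex p N (fun j => (φ i - φ j) * (ψ i - ψ j)) =
      φ i * ψ i - Ex p N ψ * φ i - Ex p N φ * ψ i + Ex p N (fun j => φ j * ψ j) := by
    intro i
    have : ∀ j, (φ i - φ j) * (ψ i - ψ j) = φ i * ψ i - φ i * ψ j - ψ i * φ j + φ j * ψ j := by intros; ring
    simp only [this]
    rw [Ex_add, Ex_sub, Ex_sub, Ex_const hp, Ex_smul, Ex_smul]
    ring
  simp only [e] at key
  rw [Ex_add, Ex_sub, Ex_sub, Ex_const hp, Ex_smul, Ex_smul] at key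
  unfold Cv
  linarith

theorem stein_var {p : ℕ → ℝ} {N : ℕ} (hp : Prob p N) {l : ℝ} (hl : 0 ≤ l)
    (h : ∀ k, k + 1 ≤ N → gr p k + l ≤ gr p (k+1)) :
    l * Cv p N (fun k => (k:ℝ)) (fun k => (k:ℝ)) ≤ 1 := by
  have hm : ∀ i d, i + d ≤ N → gr p i + l * d ≤ gr p (i + d) := by
    intro i d
    induction d with
    | zero => intro _; simp
    | succ d ih =>
      intro hd
      have h1 := ih (by omega)
      have h2 := h (i + d) (by omega)
      rw [← add_assoc]
      push_cast
      linarith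
  have h1 := cheb hp (φ := fun k => (k:ℝ)) (ψ := fun k => gr p k - l * k) (by
    intro i j hij hj
    obtain ⟨d, rfl⟩ := Nat.exists_eq_add_of_le hij
    have := hm i d hj
    push_cast
    have hd : (0:ℝ) ≤ d := by positivity
    nlinarith)
  have e1 := Ex_gr hp (fun k => (k:ℝ))
  have e2 := Ex_gr hp (fun _ => (1:ℝ))
  rw [Ex_const hp] at e2
  have e3 : Ex p N (fun k => ((k + 1 : ℕ):ℝ)) = Ex p N (fun k => (k:ℝ)) + 1 := by
    rw [← Ex_const hp 1, ← Ex_add]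
    apply Ex_congr; intros; push_cast; ring
  rw [e3] at e1
  unfold Cv at h1 ⊢
  have e4 : Ex p N (fun k => (k:ℝ) * (gr p k - l * k)) = Ex p N (fun k => gr p k * k) - l * Ex p N (fun k => (k:ℝ) * k) := by
    rw [← Ex_smul, ← Ex_sub]; apply Ex_congr; intros; ring
  rw [e4, e1, Ex_sub, Ex_smul] at h1
  simp only [mul_one] at e2
  rw [e2] at h1
  have hm : Ex p N (fun k => (k:ℝ)) ≤ N := by
    rw [← Ex_const hp (N:ℝ)]
    apply Ex_mono hp; intro k hk; exact_mod_cast hk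
  have hpN := hp.pos N
  push_cast at h1
  have : 0 ≤ p N * (N + 1 - Ex p N (fun k => (k:ℝ))) := mul_nonneg hpN.le (by linarith)
  linarith

theorem geo_super {a b l t : ℝ} (ha : 0 < a) (hb : 0 < b) (hl : 0 < l) (ht : t ∈ Icc (0:ℝ) 1) :
    a ^ (1 - t) * b ^ t + l ≤ (a + l) ^ (1 - t) * (b + l) ^ t := by
  have hx : 0 < a + l := by positivity
  have hy : 0 < b + l := by positivity
  have t0 := ht.1
  have t1 : 0 ≤ 1 - t := by linarith [ht.2]
  have i1 := Real.geom_mean_le_arith_mean2_weighted t1 t0 (div_pos ha hx).le (div_pos hb hy).le (by ring)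
  have i2 := Real.geom_mean_le_arith_mean2_weighted t1 t0 (div_pos hl hx).le (div_pos hl hy).le (by ring)
  have s : (1 - t) * (a / (a + l)) + t * (b / (b + l)) + ((1 - t) * (l / (a + l)) + t * (l / (b + l))) = 1 := by
    field_simp; ring
  rw [Real.div_rpow ha.le hx.le, Real.div_rpow hb.le hy.le] at i1
  rw [Real.div_rpow hl.le hx.le, Real.div_rpow hl.le hy.le] at i2
  have ll : l ^ (1 - t) * l ^ t = l := by
    rw [← Real.rpow_add hl]; simp
  have X := Real.rpow_pos_of_pos hx (1 - t)
  have Y := Real.rpow_pos_of_pos hy t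
  have key : (a ^ (1 - t) * b ^ t + l) / ((a + l) ^ (1 - t) * (b + l) ^ t) ≤ 1 := by
    have : (a ^ (1 - t) * b ^ t + l) / ((a + l) ^ (1 - t) * (b + l) ^ t) =
      a ^ (1 - t) / (a + l) ^ (1 - t) * (b ^ t / (b + l) ^ t) +
        l ^ (1 - t) / (a + l) ^ (1 - t) * (l ^ t / (b + l) ^ t) := by
      rw [div_mul_div_comm, div_mul_div_comm, ll]
      field_simp
    rw [this]; linarith
  rwa [div_le_one (by positivity)] at key

/-- unnormalised weights -/
noncomputable def WW (f0 f1 : ℝ → ℝ) (N : ℕ) (t ρ : ℝ) (k : ℕ) : ℝ :=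
  Real.exp (k * ρ - ((1 - t) * Real.log (MM f0 N k) + t * Real.log (MM f1 N k)))

noncomputable def ZZ (f0 f1 : ℝ → ℝ) (N : ℕ) (t ρ : ℝ) : ℝ := ∑ k ∈ Finset.range (N + 1), WW f0 f1 N t ρ k

noncomputable def pp (f0 f1 : ℝ → ℝ) (N : ℕ) (t ρ : ℝ) (k : ℕ) : ℝ := WW f0 f1 N t ρ k / ZZ f0 f1 N t ρ

theorem WW_pos (f0 f1 : ℝ → ℝ) (N : ℕ) (t ρ : ℝ) (k : ℕ) : 0 < WW f0 f1 N t ρ k := Real.exp_pos _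

theorem ZZ_pos (f0 f1 : ℝ → ℝ) (N : ℕ) (t ρ : ℝ) : 0 < ZZ f0 f1 N t ρ :=
  Finset.sum_pos (fun k _ => WW_pos f0 f1 N t ρ k) ⟨0, by simp⟩

theorem pp_prob (f0 f1 : ℝ → ℝ) (N : ℕ) (t ρ : ℝ) : Prob (pp f0 f1 N t ρ) N := by
  constructor
  · intro k; exact div_pos (WW_pos _ _ _ _ _ _) (ZZ_pos _ _ _ _ _)
  · unfold pp
    rw [← Finset.sum_div]
    exact div_self (ZZ_pos _ _ _ _ _).ne'

theorem gr_pp (f0 f1 : ℝ → ℝ) (N : ℕ) (t ρ : ℝ) (k : ℕ) :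
    gr (pp f0 f1 N t ρ) (k+1) = Real.exp (-ρ + ((1 - t) * (Real.log (MM f0 N (k+1)) - Real.log (MM f0 N k))
      + t * (Real.log (MM f1 N (k+1)) - Real.log (MM f1 N k)))) := by
  simp only [gr, pp]
  rw [div_div_div_cancel_right₀ (ZZ_pos _ _ _ _ _).ne']
  unfold WW
  rw [← Real.exp_sub]
  congr 1; push_cast; ring

theorem gr_pp' {f0 f1 : ℝ → ℝ} (h0 : ContDiff ℝ (⊤ : ℕ∞) f0) (h1 : ContDiff ℝ (⊤ : ℕ∞) f1) (N : ℕ) (t ρ : ℝ) (k : ℕ) :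
    gr (pp f0 f1 N t ρ) (k+1) = Real.exp (-ρ) * ((MM f0 N (k+1) / MM f0 N k) ^ (1 - t)
      * (MM f1 N (k+1) / MM f1 N k) ^ t) := by
  rw [gr_pp, Real.exp_add, Real.exp_add]
  rw [Real.rpow_def_of_pos (div_pos (MM_pos h0 _ _) (MM_pos h0 _ _)),
    Real.rpow_def_of_pos (div_pos (MM_pos h1 _ _) (MM_pos h1 _ _)),
    Real.log_div (MM_pos h0 _ _).ne' (MM_pos h0 _ _).ne', Real.log_div (MM_pos h1 _ _).ne' (MM_pos h1 _ _).ne']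
  ring_nf

theorem c_le_one {f : ℝ → ℝ} {c K : ℝ} (h : Good f c K) : c ≤ 1 := by
  have := h.lower 0 (by simp)
  simpa [kap] using this

theorem incr_ratio {f : ℝ → ℝ} {c K : ℝ} (h : Good f c K) (N k : ℕ) (hk : k + 2 ≤ N) :
    MM f N (k+1) / MM f N k + c^2 / (6 * K * Real.exp K) / N ≤ MM f N (k+2) / MM f N (k+1) := by
  have h1 := incr_one h N k hk
  have a := MM_pos h.smooth N k
  have b := MM_pos h.smooth N (k+1)
  rw [← le_sub_iff_add_le']
  have : MM f N (k+2) / MM f N (k+1) - MM f N (k+1) / MM f N k =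
    (MM f N (k+2) * MM f N k - MM f N (k+1)^2) / (MM f N k * MM f N (k+1)) := by field_simp
  rw [this, le_div_iff₀ (by positivity)]
  exact h1

theorem incr_ratio0 {f : ℝ → ℝ} {c K : ℝ} (h : Good f c K) (N : ℕ) (hN : 1 ≤ N) :
    c^2 / (6 * K * Real.exp K) / N ≤ MM f N 1 / MM f N 0 := by
  have h1 := incr_zero h N hN
  have a := MM_pos h.smooth N 0
  have b := MM_pos h.smooth N 1
  have hK := h.hK
  have hN' : (0:ℝ) < N := by exact_mod_cast hN
  have hc : c^2 ≤ 1 := by have := c_le_one h; have := h.cpos; nlinarith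
  have : c^2 / (6 * K * Real.exp K) / N ≤ 1 / (6 * K * Real.exp K * N) := by
    rw [div_div]; gcongr
  refine this.trans ?_
  rw [div_le_div_iff₀ (by positivity) a]
  linarith

theorem var_bound_left {f0 f1 : ℝ → ℝ} {c K : ℝ} (h0 : Good f0 c K) (h1 : Good f1 c K) {N : ℕ} (hN : 1 ≤ N)
    {t : ℝ} (ht : t ∈ Icc (0:ℝ) 1) (ρ : ℝ) :
    Cv (pp f0 f1 N t ρ) N (fun k => (k:ℝ)) (fun k => (k:ℝ)) ≤ (6 * K * Real.exp K / c^2) * N * Real.exp ρ := by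
  have hN' : (0:ℝ) < N := by exact_mod_cast hN
  have hK := h0.hK
  have hc := h0.cpos
  set l0 := c^2 / (6 * K * Real.exp K) / N with hl0
  have l0p : 0 < l0 := by positivity
  have t1 : 0 ≤ 1 - t := by linarith [ht.2]
  have t0 := ht.1
  have := stein_var (pp_prob f0 f1 N t ρ) (l := Real.exp (-ρ) * l0) (by positivity) (by
    intro k hk
    rcases k with _ | k
    · rw [gr_pp' h0.smooth h1.smooth]
      simp only [gr, zero_add]
      gcongr
      have i0 := incr_ratio0 h0 N hN
      have i1 := incr_ratio0 h1 N hN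
      have : l0 = l0 ^ (1 - t) * l0 ^ t := by rw [← Real.rpow_add l0p]; simp
      rw [← hl0] at i0 i1
      rw [this]
      have b0 := div_pos (MM_pos h0.smooth N 1) (MM_pos h0.smooth N 0)
      gcongr
    · rw [gr_pp' h0.smooth h1.smooth, gr_pp' h0.smooth h1.smooth, ← mul_add]
      gcongr
      have i0 := incr_ratio h0 N k (by omega)
      have i1 := incr_ratio h1 N k (by omega)
      rw [← hl0] at i0 i1
      have a0 := div_pos (MM_pos h0.smooth N (k+1)) (MM_pos h0.smooth N k)
      have a1 := div_pos (MM_pos h1.smooth N (k+1)) (MM_pos h1.smooth N k)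
      refine (geo_super a0 a1 l0p ht).trans ?_
      rw [show k + 1 + 1 = k + 2 from rfl]
      have b0 := div_pos (MM_pos h0.smooth N (k+2)) (MM_pos h0.smooth N (k+1))
      gcongr)
  set V := Cv (pp f0 f1 N t ρ) N (fun k => (k:ℝ)) (fun k => (k:ℝ))
  have e : (6 * K * Real.exp K / c^2) * N * Real.exp ρ = 1 / (Real.exp (-ρ) * l0) := by
    rw [hl0, Real.exp_neg]; field_simp
  rw [e, le_div_iff₀ (by positivity)]
  linarith

noncomputable def refl01 (f : ℝ → ℝ) : ℝ → ℝ := fun x => f (1 - x)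

theorem refl_deriv {f : ℝ → ℝ} (h : ContDiff ℝ (⊤ : ℕ∞) f) : deriv (refl01 f) = fun x => -(deriv f (1 - x)) := by
  ext x
  have := (cd_hasDeriv h (1 - x)).comp x ((hasDerivAt_id x).const_sub 1)
  exact (this.congr_deriv (by ring)).deriv

theorem refl_smooth {f : ℝ → ℝ} (h : ContDiff ℝ (⊤ : ℕ∞) f) : ContDiff ℝ (⊤ : ℕ∞) (refl01 f) := by
  unfold refl01
  exact h.comp (contDiff_const.sub contDiff_id)

theorem neg_deriv' (φ : ℝ → ℝ) : deriv (fun x => -(φ x)) = fun x => -(deriv φ x) := by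
  ext x; exact deriv.fun_neg

theorem refl_good {f : ℝ → ℝ} {c K : ℝ} (h : Good f c K) : Good (refl01 f) c K := by
  have s1 := cd_deriv h.smooth
  have s2 := cd_deriv s1
  have e1 := refl_deriv h.smooth
  have e2 : deriv (deriv (refl01 f)) = refl01 (deriv (deriv f)) := by
    rw [e1, neg_deriv']
    ext x
    have := congrFun (refl_deriv s1) x
    unfold refl01 at this ⊢
    rw [this]; ring
  have e3 : deriv (deriv (deriv (refl01 f))) = fun x => -(deriv (deriv (deriv f)) (1 - x)) := by
    rw [e2, refl_deriv s2]
  have hm : ∀ x ∈ Icc (0:ℝ) 1, 1 - x ∈ Icc (0:ℝ) 1 := fun x hx => ⟨by linarith [hx.2], by linarith [hx.1]⟩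
  refine ⟨refl_smooth h.smooth, h.cpos, h.hK, ?_, ?_, ?_, ?_⟩
  · intro x hx
    have := h.lower (1 - x) (hm x hx)
    unfold kap at this ⊢
    rw [e2]; unfold refl01
    have e : x * (1 - x) = (1 - x) * (1 - (1 - x)) := by ring
    rw [e]; exact this
  · intro x hx; rw [e1, abs_neg]; exact h.b1 _ (hm x hx)
  · intro x hx; rw [e2]; exact h.b2 _ (hm x hx)
  · intro x hx; rw [e3, abs_neg]; exact h.b3 _ (hm x hx)

theorem refl_MM {f : ℝ → ℝ} (h : ContDiff ℝ (⊤ : ℕ∞) f) {N k : ℕ} (hk : k ≤ N) :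
    MM (refl01 f) N k = MM f N (N - k) := by
  unfold MM
  have : ∀ x, dens (refl01 f) N k x = dens f N (N - k) (1 - x) := by
    intro x
    unfold dens
    rw [refl_deriv h, Nat.sub_sub_self hk, Nat.cast_sub hk]
    unfold refl01
    rw [show (1 - (1 - x)) = x by ring]
    rw [mul_comm (x^k)]
    congr 1
    ring_nf
  simp only [this]
  rw [intervalIntegral.integral_comp_sub_left (fun x => dens f N (N - k) x)]
  simp

theorem Ex_refl (p : ℕ → ℝ) (N : ℕ) (φ : ℕ → ℝ) : Ex p N φ = Ex (fun k => p (N - k)) N (fun k => φ (N - k)) := by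
  unfold Ex
  rw [← Finset.sum_range_reflect]
  rfl

theorem var_bound_right {f0 f1 : ℝ → ℝ} {c K : ℝ} (h0 : Good f0 c K) (h1 : Good f1 c K) {N : ℕ} (hN : 1 ≤ N)
    {t : ℝ} (ht : t ∈ Icc (0:ℝ) 1) (ρ : ℝ) :
    Cv (pp f0 f1 N t ρ) N (fun k => (k:ℝ)) (fun k => (k:ℝ)) ≤ (6 * K * Real.exp K / c^2) * N * Real.exp (-ρ) := by
  refine le_trans (le_of_eq ?_) (var_bound_left (refl_good h0) (refl_good h1) hN ht (-ρ))
  have hW : ∀ k ≤ N, WW f0 f1 N t ρ (N - k) = Real.exp (N * ρ) * WW (refl01 f0) (refl01 f1) N t (-ρ) k := by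
    intro k hk
    unfold WW
    rw [← Real.exp_add, refl_MM h0.smooth hk, refl_MM h1.smooth hk, Nat.cast_sub hk]
    congr 1; ring
  have hZ : ZZ f0 f1 N t ρ = Real.exp (N * ρ) * ZZ (refl01 f0) (refl01 f1) N t (-ρ) := by
    unfold ZZ
    rw [← Finset.sum_range_reflect, Finset.mul_sum]
    apply Finset.sum_congr rfl
    intro k hk
    exact hW k (by simpa [Nat.lt_succ_iff] using hk)
  have hpq : ∀ k ≤ N, pp f0 f1 N t ρ (N - k) = pp (refl01 f0) (refl01 f1) N t (-ρ) k := by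
    intro k hk
    unfold pp
    rw [hW k hk, hZ, mul_div_mul_left _ _ (Real.exp_pos _).ne']
  have hE : ∀ φ : ℕ → ℝ, Ex (pp f0 f1 N t ρ) N φ = Ex (pp (refl01 f0) (refl01 f1) N t (-ρ)) N (fun k => φ (N - k)) := by
    intro φ
    rw [Ex_refl]
    unfold Ex
    apply Finset.sum_congr rfl
    intro k hk
    simp only [hpq k (by simpa [Nat.lt_succ_iff] using hk)]
  set q := pp (refl01 f0) (refl01 f1) N t (-ρ) with hq
  have hqp : Prob q N := pp_prob _ _ _ _ _
  rw [← Cv_shift (pp_prob f0 f1 N t ρ) _ _ (N:ℝ) (N:ℝ)]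
  unfold Cv
  rw [hE, hE]
  have a1 : Ex q N (fun k => ((N - k : ℕ):ℝ) - N) = - Ex q N (fun k => (k:ℝ)) := by
    rw [← neg_one_mul, ← Ex_smul]
    apply Ex_congr
    intro k hk; rw [Nat.cast_sub hk]; ring
  have a2 : Ex q N (fun k => (((N - k : ℕ):ℝ) - N) * (((N - k : ℕ):ℝ) - N)) = Ex q N (fun k => (k:ℝ) * k) := by
    apply Ex_congr
    intro k hk; rw [Nat.cast_sub hk]; ring
  rw [a1, a2]; ring


def mix (f0 f1 : ℝ → ℝ) (t : ℝ) : ℝ → ℝ := fun x => (1 - t) * f0 x + t * f1 x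

theorem Gt_eq (f0 f1 : ℝ → ℝ) (t : ℝ) : Gt f0 f1 t = GG (mix f0 f1 t) := rfl

theorem mix_smooth {f0 f1 : ℝ → ℝ} (h0 : ContDiff ℝ (⊤ : ℕ∞) f0) (h1 : ContDiff ℝ (⊤ : ℕ∞) f1) (t : ℝ) :
    ContDiff ℝ (⊤ : ℕ∞) (mix f0 f1 t) := by
  unfold mix; fun_prop

theorem mix_deriv {f0 f1 : ℝ → ℝ} (h0 : ContDiff ℝ (⊤ : ℕ∞) f0) (h1 : ContDiff ℝ (⊤ : ℕ∞) f1) (t : ℝ) :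
    deriv (mix f0 f1 t) = mix (deriv f0) (deriv f1) t := by
  ext x
  exact (((cd_hasDeriv h0 x).const_mul (1 - t)).add ((cd_hasDeriv h1 x).const_mul t)).deriv

theorem kap_mix {f0 f1 : ℝ → ℝ} (h0 : ContDiff ℝ (⊤ : ℕ∞) f0) (h1 : ContDiff ℝ (⊤ : ℕ∞) f1) (t x : ℝ) :
    kap (mix f0 f1 t) x = (1 - t) * kap f0 x + t * kap f1 x := by
  unfold kap
  rw [mix_deriv h0 h1, mix_deriv (cd_deriv h0) (cd_deriv h1)]
  unfold mix; ring

theorem GG_mix (f0 f1 : ℝ → ℝ) (t x : ℝ) : GG (mix f0 f1 t) x = (1 - t) * GG f0 x + t * GG f1 x := by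
  unfold GG mix; ring

theorem G1_mix {f0 f1 : ℝ → ℝ} (h0 : ContDiff ℝ (⊤ : ℕ∞) f0) (h1 : ContDiff ℝ (⊤ : ℕ∞) f1) (t x : ℝ) :
    G1 (mix f0 f1 t) x = (1 - t) * G1 f0 x + t * G1 f1 x := by
  unfold G1
  rw [mix_deriv h0 h1]
  unfold mix; ring

theorem G2_mix {f0 f1 : ℝ → ℝ} (h0 : ContDiff ℝ (⊤ : ℕ∞) f0) (h1 : ContDiff ℝ (⊤ : ℕ∞) f1) (t x : ℝ) :
    G2 (mix f0 f1 t) x = (1 - t) * G2 f0 x + t * G2 f1 x := by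
  unfold G2
  rw [kap_mix h0 h1]
  ring

theorem mix_abs {a b K t : ℝ} (ht : t ∈ Icc (0:ℝ) 1) (ha : |a| ≤ K) (hb : |b| ≤ K) : |(1 - t) * a + t * b| ≤ K := by
  have := ht.1
  have := ht.2
  rw [abs_le] at *
  constructor <;> nlinarith

theorem mix_good {f0 f1 : ℝ → ℝ} {c K : ℝ} (h0 : Good f0 c K) (h1 : Good f1 c K) {t : ℝ} (ht : t ∈ Icc (0:ℝ) 1) :
    Good (mix f0 f1 t) c K := by
  have d1 := mix_deriv h0.smooth h1.smooth t
  have d2 := mix_deriv (cd_deriv h0.smooth) (cd_deriv h1.smooth) t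
  have d3 := mix_deriv (cd_deriv (cd_deriv h0.smooth)) (cd_deriv (cd_deriv h1.smooth)) t
  refine ⟨mix_smooth h0.smooth h1.smooth t, h0.cpos, h0.hK, ?_, ?_, ?_, ?_⟩
  · intro x hx
    rw [kap_mix h0.smooth h1.smooth]
    have := h0.lower x hx
    have := h1.lower x hx
    nlinarith [ht.1, ht.2]
  · intro x hx; rw [d1]; exact mix_abs ht (h0.b1 x hx) (h1.b1 x hx)
  · intro x hx; rw [d1, d2]; exact mix_abs ht (h0.b2 x hx) (h1.b2 x hx)
  · intro x hx; rw [d1, d2, d3]; exact mix_abs ht (h0.b3 x hx) (h1.b3 x hx)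

noncomputable def LL (K : ℝ) (N : ℕ) : ℝ := 4 + K + Real.log (2 * Real.pi * N)

theorem logM_bounds {f : ℝ → ℝ} {c K : ℝ} (h : Good f c K) {N k : ℕ} (hN : 2 ≤ N) (hk : k ≤ N) :
    0 ≤ N * GG f (k / N) - Real.log (MM f N k) ∧ N * GG f (k / N) - Real.log (MM f N k) ≤ LL K N := by
  have hN1 : 1 ≤ N := by omega
  have hN' : (0:ℝ) < N := by exact_mod_cast hN1
  have a := QQ_le h hN1 hk
  have b := QQ_ge h hN hk
  have hpi := Real.pi_pos
  have hM := MM_pos h.smooth N k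
  rw [QQ_eq h.smooth hN1 hk] at a b
  constructor
  · have : MM f N k ≤ Real.exp (N * GG f (k / N)) := le_of_mul_le_mul_left a (by positivity)
    have := Real.log_le_log hM this
    rw [Real.log_exp] at this
    linarith
  · have := Real.log_le_log (by positivity) b
    rw [Real.log_mul (by positivity) (by positivity), Real.log_exp, Real.log_mul (by positivity) (by positivity), Real.log_exp,
      Real.log_mul (by positivity) (by positivity), Real.log_div (by norm_num) (by positivity), Real.log_one] at this
    unfold LL
    rw [Real.log_mul (by positivity) (by positivity)]
    linarith

theorem mix_log_bounds {f0 f1 : ℝ → ℝ} {c K : ℝ} (h0 : Good f0 c K) (h1 : Good f1 c K) {t : ℝ} (ht : t ∈ Icc (0:ℝ) 1)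
    {N k : ℕ} (hN : 2 ≤ N) (hk : k ≤ N) :
    0 ≤ N * GG (mix f0 f1 t) (k / N) - ((1 - t) * Real.log (MM f0 N k) + t * Real.log (MM f1 N k)) ∧
     N * GG (mix f0 f1 t) (k / N) - ((1 - t) * Real.log (MM f0 N k) + t * Real.log (MM f1 N k)) ≤ LL K N := by
  obtain ⟨a0, b0⟩ := logM_bounds h0 hN hk
  obtain ⟨a1, b1⟩ := logM_bounds h1 hN hk
  rw [GG_mix]
  have t0 := ht.1
  have t1 : 0 ≤ 1 - t := by linarith [ht.2]
  have e : N * ((1 - t) * GG f0 (k/N) + t * GG f1 (k/N)) - ((1 - t) * Real.log (MM f0 N k) + t * Real.log (MM f1 N k))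
    = (1 - t) * (N * GG f0 (k / N) - Real.log (MM f0 N k)) + t * (N * GG f1 (k / N) - Real.log (MM f1 N k)) := by ring
  rw [e]
  constructor
  · positivity
  · nlinarith

/-- the Legendre transform at the gradient point -/
noncomputable def UU (f : ℝ → ℝ) (x : ℝ) : ℝ := x * G1 f x - GG f x

theorem WW_bounds {f0 f1 : ℝ → ℝ} {c K : ℝ} (h0 : Good f0 c K) (h1 : Good f1 c K) {t : ℝ} (ht : t ∈ Icc (0:ℝ) 1)
    {N k : ℕ} (hN : 2 ≤ N) (hk : k ≤ N) {x : ℝ} (hx : x ∈ Ioo (0:ℝ) 1) :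
    Real.exp (N * UU (mix f0 f1 t) x - N * Phase (GG (mix f0 f1 t)) (k / N) x) ≤ WW f0 f1 N t (G1 (mix f0 f1 t) x) k ∧
    WW f0 f1 N t (G1 (mix f0 f1 t) x) k ≤ Real.exp (N * UU (mix f0 f1 t) x - N * Phase (GG (mix f0 f1 t)) (k / N) x + LL K N) := by
  obtain ⟨a, b⟩ := mix_log_bounds h0 h1 ht hN hk
  have hN' : (0:ℝ) < N := by exact_mod_cast (by omega : 0 < N)
  rw [Phase_eq (mix_smooth h0.smooth h1.smooth t) _ hx]
  unfold WW UU
  have e : (N:ℝ) * (x * G1 (mix f0 f1 t) x - GG (mix f0 f1 t) x) -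
    N * ((x - k / N) * G1 (mix f0 f1 t) x - (GG (mix f0 f1 t) x - GG (mix f0 f1 t) (k / N))) =
    k * G1 (mix f0 f1 t) x - N * GG (mix f0 f1 t) (k / N) := by
    field_simp; ring
  rw [e]
  constructor
  · apply Real.exp_le_exp.2; linarith
  · apply Real.exp_le_exp.2; linarith

theorem ZZ_ge {f0 f1 : ℝ → ℝ} {c K : ℝ} (h0 : Good f0 c K) (h1 : Good f1 c K) {t : ℝ} (ht : t ∈ Icc (0:ℝ) 1)
    {N : ℕ} (hN : 2 ≤ N) {x : ℝ} (hx : x ∈ Ioo (0:ℝ) 1) :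
    Real.exp (N * UU (mix f0 f1 t) x - (2 + K)) ≤ ZZ f0 f1 N t (G1 (mix f0 f1 t) x) := by
  have hN' : (0:ℝ) < N := by exact_mod_cast (by omega : 0 < N)
  obtain ⟨k, hk, hP⟩ := grid_close (mix_good h0 h1 ht) (by omega : 1 ≤ N) hx
  have a := (WW_bounds h0 h1 ht hN hk hx).1
  have b : WW f0 f1 N t (G1 (mix f0 f1 t) x) k ≤ ZZ f0 f1 N t (G1 (mix f0 f1 t) x) :=
    Finset.single_le_sum (f := WW f0 f1 N t (G1 (mix f0 f1 t) x)) (fun i _ => (WW_pos _ _ _ _ _ i).le) (by simp; omega)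
  refine le_trans (Real.exp_le_exp.2 ?_) (a.trans b)
  have := mul_le_mul_of_nonneg_left hP hN'.le
  rw [mul_div_cancel₀ _ hN'.ne'] at this
  linarith

theorem WW_le {f0 f1 : ℝ → ℝ} {c K : ℝ} (h0 : Good f0 c K) (h1 : Good f1 c K) {t : ℝ} (ht : t ∈ Icc (0:ℝ) 1)
    {N k : ℕ} (hN : 2 ≤ N) (hk : k ≤ N) {x : ℝ} (hx : x ∈ Ioo (0:ℝ) 1) :
    WW f0 f1 N t (G1 (mix f0 f1 t) x) k ≤ Real.exp (N * UU (mix f0 f1 t) x - N * (c/2) * (k / N - x)^2 + LL K N) := by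
  refine (WW_bounds h0 h1 ht hN hk hx).2.trans (Real.exp_le_exp.2 ?_)
  have hN' : (0:ℝ) < N := by exact_mod_cast (by omega : 0 < N)
  have := mul_le_mul_of_nonneg_left (Phase_lower (mix_good h0 h1 ht) (grid_mem (by omega) hk) hx) hN'.le
  linarith

theorem ZZ_le {f0 f1 : ℝ → ℝ} {c K : ℝ} (h0 : Good f0 c K) (h1 : Good f1 c K) {t : ℝ} (ht : t ∈ Icc (0:ℝ) 1)
    {N : ℕ} (hN : 2 ≤ N) {x : ℝ} (hx : x ∈ Ioo (0:ℝ) 1) :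
    ZZ f0 f1 N t (G1 (mix f0 f1 t) x) ≤ (N + 1) * Real.exp (N * UU (mix f0 f1 t) x + LL K N) := by
  unfold ZZ
  have := Finset.sum_le_card_nsmul (Finset.range (N+1)) (WW f0 f1 N t (G1 (mix f0 f1 t) x))
    (Real.exp (N * UU (mix f0 f1 t) x + LL K N)) (by
      intro k hk
      refine (WW_le h0 h1 ht hN (by simpa [Nat.lt_succ_iff] using hk) hx).trans (Real.exp_le_exp.2 ?_)
      have hN' : (0:ℝ) < N := by exact_mod_cast (by omega : 0 < N)
      have hc := h0.cpos
      have : 0 ≤ N * (c/2) * (k / N - x)^2 := by positivity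
      linarith)
  simpa using this

theorem pp_le {f0 f1 : ℝ → ℝ} {c K : ℝ} (h0 : Good f0 c K) (h1 : Good f1 c K) {t : ℝ} (ht : t ∈ Icc (0:ℝ) 1)
    {N k : ℕ} (hN : 2 ≤ N) (hk : k ≤ N) {x : ℝ} (hx : x ∈ Ioo (0:ℝ) 1) :
    pp f0 f1 N t (G1 (mix f0 f1 t) x) k ≤ Real.exp (LL K N + (2 + K) - N * (c/2) * (k / N - x)^2) := by
  unfold pp
  rw [div_le_iff₀ (ZZ_pos _ _ _ _ _)]
  refine (WW_le h0 h1 ht hN hk hx).trans ?_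
  refine le_trans ?_ (mul_le_mul_of_nonneg_left (ZZ_ge h0 h1 ht hN hx) (Real.exp_pos _).le)
  rw [← Real.exp_add]
  apply Real.exp_le_exp.2; linarith

/-- tail probability -/
noncomputable def Tl (p : ℕ → ℝ) (N : ℕ) (x η : ℝ) : ℝ :=
  Ex p N (fun k => if η < |(k:ℝ) / N - x| then 1 else 0)

theorem Tl_nonneg {p : ℕ → ℝ} {N : ℕ} (hp : Prob p N) (x η : ℝ) : 0 ≤ Tl p N x η := by
  apply Ex_nonneg hp; intro k _; split_ifs <;> norm_num

theorem Tl_le {f0 f1 : ℝ → ℝ} {c K : ℝ} (h0 : Good f0 c K) (h1 : Good f1 c K) {t : ℝ} (ht : t ∈ Icc (0:ℝ) 1)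
    {N : ℕ} (hN : 2 ≤ N) {x : ℝ} (hx : x ∈ Ioo (0:ℝ) 1) {η : ℝ} (hη : 0 < η) :
    Tl (pp f0 f1 N t (G1 (mix f0 f1 t) x)) N x η ≤ (N + 1) * Real.exp (LL K N + (2 + K) - N * (c/2) * η^2) := by
  unfold Tl Ex
  have := Finset.sum_le_card_nsmul (Finset.range (N+1)) (fun k => pp f0 f1 N t (G1 (mix f0 f1 t) x) k *
      (if η < |(k:ℝ) / N - x| then 1 else 0))
    (Real.exp (LL K N + (2 + K) - N * (c/2) * η^2)) (by
      intro k hk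
      split_ifs with hh
      · rw [mul_one]
        refine (pp_le h0 h1 ht hN (by simpa [Nat.lt_succ_iff] using hk) hx).trans (Real.exp_le_exp.2 ?_)
        have hN' : (0:ℝ) < N := by exact_mod_cast (by omega : 0 < N)
        have hc := h0.cpos
        have : η^2 ≤ (k / N - x)^2 := by rw [← sq_abs (k / N - x)]; gcongr
        have := mul_le_mul_of_nonneg_left this (by positivity : 0 ≤ N * (c/2))
        linarith
      · rw [mul_zero]; positivity)
  simpa using this

theorem tail_lim {f0 f1 : ℝ → ℝ} {c K : ℝ} (h0 : Good f0 c K) (h1 : Good f1 c K) {η ε : ℝ} (hη : 0 < η) (hε : 0 < ε) :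
    ∃ N0 : ℕ, ∀ N ≥ N0, ∀ t ∈ Icc (0:ℝ) 1, ∀ x ∈ Ioo (0:ℝ) 1,
      N * Tl (pp f0 f1 N t (G1 (mix f0 f1 t) x)) N x η ≤ ε := by
  have hc := h0.cpos
  have hpi := Real.pi_pos
  set b := c / 2 * η^2 with hb
  have hb0 : 0 < b := by positivity
  set D := 2 * (2 * Real.pi) * Real.exp (6 + 2 * K) with hD
  have hl : Tendsto (fun N : ℕ => D * ((N:ℝ)^(3:ℝ) * Real.exp (-b * N))) atTop (nhds 0) := by
    have := (tendsto_rpow_mul_exp_neg_mul_atTop_nhds_zero 3 b hb0).comp tendsto_natCast_atTop_atTop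
    simpa using this.const_mul D
  obtain ⟨N0, hN0⟩ := eventually_atTop.1 (hl.eventually (gt_mem_nhds hε))
  refine ⟨max N0 2, fun N hN t ht x hx => ?_⟩
  have hN2 : 2 ≤ N := le_trans (le_max_right _ _) hN
  have h3 := hN0 N (le_trans (le_max_left _ _) hN)
  have hN' : (2:ℝ) ≤ N := by exact_mod_cast hN2
  refine le_trans ?_ h3.le
  refine (mul_le_mul_of_nonneg_left (Tl_le h0 h1 ht hN2 hx hη) (by positivity)).trans ?_
  have e : Real.exp (LL K N + (2 + K) - N * (c/2) * η^2) = 2 * Real.pi * N * Real.exp (6 + 2 * K) * Real.exp (-b * N) := by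
    rw [← Real.exp_log (by positivity : 0 < 2 * Real.pi * (N:ℝ)), ← Real.exp_add, ← Real.exp_add]
    congr 1
    unfold LL; rw [hb]; ring
  rw [e]
  have r : (N:ℝ)^(3:ℝ) = N^3 := by exact_mod_cast Real.rpow_natCast (N:ℝ) 3
  rw [r, hD]
  have : (N:ℝ) + 1 ≤ 2 * N := by linarith
  calc (N:ℝ) * ((N + 1) * (2 * Real.pi * N * Real.exp (6 + 2 * K) * Real.exp (-b * N)))
      ≤ (N:ℝ) * ((2 * N) * (2 * Real.pi * N * Real.exp (6 + 2 * K) * Real.exp (-b * N))) := by gcongr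
    _ = _ := by ring

theorem log_lim (A B : ℝ) {ε : ℝ} (hε : 0 < ε) : ∃ N0 : ℕ, ∀ N ≥ N0, (A + B * Real.log N) / N < ε := by
  have h1 : Tendsto (fun x : ℝ => Real.log x / x) atTop (nhds 0) := Real.isLittleO_log_id_atTop.tendsto_div_nhds_zero
  have h2 : Tendsto (fun x : ℝ => A / x) atTop (nhds 0) := tendsto_const_nhds.div_atTop tendsto_id
  have h3 : Tendsto (fun N : ℕ => A / (N:ℝ) + B * (Real.log N / N)) atTop (nhds 0) := by
    have := (h2.add (h1.const_mul B)).comp tendsto_natCast_atTop_atTop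
    simpa [Function.comp_def] using this
  obtain ⟨N0, hN0⟩ := eventually_atTop.1 (h3.eventually (gt_mem_nhds hε))
  refine ⟨N0, fun N hN => ?_⟩
  have := hN0 N hN
  rw [add_div, mul_div_assoc]; exact this

theorem LL_lim (K A : ℝ) {ε : ℝ} (hε : 0 < ε) : ∃ N0 : ℕ, ∀ N ≥ N0, (LL K N + A) / N < ε := by
  obtain ⟨N0, h⟩ := log_lim (4 + K + Real.log (2 * Real.pi) + A) 1 hε
  refine ⟨max N0 1, fun N hN => ?_⟩
  have hN' : (0:ℝ) < N := by exact_mod_cast (le_trans (le_max_right _ _) hN : 1 ≤ N)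
  have := h N (le_trans (le_max_left _ _) hN)
  have hpi := Real.pi_pos
  unfold LL
  rw [Real.log_mul (by positivity) (by positivity)]
  convert this using 2; ring

theorem E00 {f0 f1 : ℝ → ℝ} {c K : ℝ} (h0 : Good f0 c K) (h1 : Good f1 c K) {ε : ℝ} (hε : 0 < ε) :
    ∃ N0 : ℕ, ∀ N ≥ N0, ∀ t ∈ Icc (0:ℝ) 1, ∀ x ∈ Ioo (0:ℝ) 1,
      |1 / N * (Real.log (ZZ f0 f1 N t (G1 (mix f0 f1 t) x)) - N * UU (mix f0 f1 t) x - Real.log (2 * Real.pi))| < ε := by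
  obtain ⟨N1, hN1⟩ := LL_lim K ((3 + K) + Real.log (2 * Real.pi)) (by positivity : 0 < ε/2)
  obtain ⟨N2, hN2⟩ := log_lim 0 1 (by positivity : 0 < ε/2)
  refine ⟨max (max N1 N2) 2, fun N hN t ht x hx => ?_⟩
  have h2 : 2 ≤ N := le_trans (le_max_right _ _) hN
  have h3 := hN1 N (le_trans (le_trans (le_max_left _ _) (le_max_left _ _)) hN)
  have h4 := hN2 N (le_trans (le_trans (le_max_right _ _) (le_max_left _ _)) hN)
  have hN' : (2:ℝ) ≤ N := by exact_mod_cast h2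
  have hpi := Real.pi_gt_three
  have a := Real.log_le_log (Real.exp_pos _) (ZZ_ge h0 h1 ht h2 hx)
  have b := Real.log_le_log (ZZ_pos _ _ _ _ _) (ZZ_le h0 h1 ht h2 hx)
  rw [Real.log_exp] at a
  rw [Real.log_mul (by positivity) (by positivity), Real.log_exp] at b
  have hl : Real.log (N + 1) ≤ Real.log N + 1 := by
    have : Real.log ((N:ℝ) + 1) ≤ Real.log (2 * N) := Real.log_le_log (by positivity) (by linarith)
    rw [Real.log_mul (by norm_num) (by positivity)] at this
    linarith [Real.log_two_lt_d9]
  have lp : 0 ≤ Real.log (2 * Real.pi) := Real.log_nonneg (by linarith)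
  have lN : 0 ≤ Real.log N := Real.log_nonneg (by linarith)
  have hL : 0 ≤ LL K N := by
    unfold LL
    have := h0.hK
    have : 0 ≤ Real.log (2 * Real.pi * N) := Real.log_nonneg (by nlinarith)
    linarith
  have hK := h0.hK
  set X := Real.log (ZZ f0 f1 N t (G1 (mix f0 f1 t) x)) - N * UU (mix f0 f1 t) x - Real.log (2 * Real.pi)
  have hX : |X| ≤ LL K N + ((3 + K) + Real.log (2 * Real.pi)) + (0 + 1 * Real.log N) := by
    rw [abs_le]; constructor <;> simp only [X] <;> linarith
  rw [abs_mul, abs_of_pos (by positivity), one_div, inv_mul_eq_div]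
  calc |X| / N ≤ (LL K N + ((3 + K) + Real.log (2 * Real.pi)) + (0 + 1 * Real.log N)) / N := by gcongr
    _ = (LL K N + ((3 + K) + Real.log (2 * Real.pi))) / N + (0 + 1 * Real.log N) / N := add_div _ _ _
    _ < ε := by linarith

/-- normalised log ratio of norming constants -/
noncomputable def bb (f0 f1 : ℝ → ℝ) (N k : ℕ) : ℝ := (Real.log (MM f1 N k) - Real.log (MM f0 N k)) / N

theorem bb_close {f0 f1 : ℝ → ℝ} {c K : ℝ} (h0 : Good f0 c K) (h1 : Good f1 c K) {N k : ℕ} (hN : 2 ≤ N) (hk : k ≤ N) :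
    |bb f0 f1 N k - (f1 (k / N) - f0 (k / N))| ≤ LL K N / N := by
  obtain ⟨a0, b0⟩ := logM_bounds h0 hN hk
  obtain ⟨a1, b1⟩ := logM_bounds h1 hN hk
  have hN' : (0:ℝ) < N := by exact_mod_cast (by omega : 0 < N)
  have e : bb f0 f1 N k - (f1 (k / N) - f0 (k / N)) =
     ((N * GG f0 (k / N) - Real.log (MM f0 N k)) - (N * GG f1 (k / N) - Real.log (MM f1 N k))) / N := by
    unfold bb GG; field_simp; ring
  rw [e, abs_div, abs_of_pos hN']
  gcongr
  rw [abs_le]; constructor <;> linarith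


theorem G1_taylor {f : ℝ → ℝ} (h : ContDiff ℝ (⊤ : ℕ∞) f) {δ : ℝ} (hδ : 0 < δ) :
    ∃ B : ℝ, 0 < B ∧ (∀ x ∈ Icc δ (1 - δ), |G2 f x| ≤ B) ∧
      ∀ x ∈ Icc δ (1 - δ), ∀ y ∈ Icc δ (1 - δ), |G1 f y - G1 f x - G2 f x * (y - x)| ≤ B * (y - x)^2 := by
  have hsub : ∀ x ∈ Icc δ (1 - δ), x ∈ Ioo (0:ℝ) 1 := fun x hx => ⟨by linarith [hx.1], by linarith [hx.2]⟩
  have hne : ∀ x ∈ Icc δ (1 - δ), x * (1 - x) ≠ 0 := fun x hx => by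
    have h1 := (hsub x hx).1
    have h2 : 0 < 1 - x := by linarith [(hsub x hx).2]
    positivity
  have hG2d : ∀ x ∈ Icc δ (1 - δ), HasDerivAt (G2 f)
      ((((1 - 2 * x) * deriv (deriv f) x + x * (1 - x) * deriv (deriv (deriv f)) x) * (x * (1 - x)) -
        kap f x * (1 - 2 * x)) / (x * (1 - x))^2) x := by
    intro x hx
    have e := (hasDerivAt_id x).mul ((hasDerivAt_id x).const_sub 1)
    refine ((kap_deriv h x).div e (hne x hx)).congr_deriv ?_
    simp only [id, Pi.mul_apply]
    congr 1; ring
  have c3 : ContinuousOn (fun x => ((((1 - 2 * x) * deriv (deriv f) x + x * (1 - x) * deriv (deriv (deriv f)) x) * (x * (1 - x)) -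
        kap f x * (1 - 2 * x)) / (x * (1 - x))^2)) (Icc δ (1 - δ)) := by
    have k0 := (kap_smooth h).continuous
    have k2 := (cd_deriv (cd_deriv h)).continuous
    have k3 := (cd_deriv (cd_deriv (cd_deriv h))).continuous
    apply ContinuousOn.div
    · fun_prop
    · fun_prop
    · intro x hx; exact pow_ne_zero 2 (hne x hx)
  obtain ⟨B3, p3, hB3⟩ := bdd_Icc c3
  obtain ⟨B2, p2, hB2⟩ := bdd_Icc (φ := G2 f) (a := δ) (b := 1 - δ)
    (fun x hx => (hG2d x hx).continuousAt.continuousWithinAt)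
  refine ⟨B2 + B3, by positivity, fun x hx => (hB2 x hx).trans (by linarith), fun x hx y hy => ?_⟩
  refine (taylor_Icc (fun z hz => G1_deriv h (hsub z hz)) hG2d hB3 hx hy).trans ?_
  gcongr; linarith

theorem exp_est {u d y B C n : ℝ} (pB : 0 ≤ B) (pC : 0 ≤ C) (hn : 0 < n) (hd : |d| ≤ B) (hud : |u - d * y| ≤ C / n + B * y^2)
    (y2 : |y| ≤ 1) (y3 : B * |y| ≤ 1 / 4) (hNC : C / n ≤ 1 / 2) :
    |Real.exp u - 1 - d * y| ≤ (8 * B^2 + B + 2 * C) * (y^2 + 1 / n) := by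
  have hdy : |d * y| ≤ B * |y| := by rw [abs_mul]; gcongr
  have hyy : B * y^2 ≤ B * |y| := by
    rw [← sq_abs]; gcongr; nlinarith [abs_nonneg y]
  have hu1 : |u| ≤ 2 * (B * |y|) + C / n := by
    have : |u| ≤ |u - d * y| + |d * y| := by simpa using abs_add_le (u - d*y) (d * y)
    linarith
  have hu2 : |u| ≤ 1 := by linarith
  have he := Real.abs_exp_sub_one_sub_id_le hu2
  have hsq : u^2 ≤ 8 * B^2 * y^2 + C / n := by
    have hCN : 0 ≤ C / n := by positivity
    have q1 : u^2 ≤ (2 * (B * |y|) + C / n)^2 := by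
      rw [← sq_abs u]; gcongr
    have q2 : (2 * (B * |y|) + C / n)^2 ≤ 8 * (B * |y|)^2 + 2 * (C / n)^2 := by
      nlinarith [sq_nonneg (2 * (B * |y|) - C / n)]
    have q3 : 2 * (C/n)^2 ≤ C / n := by nlinarith
    have q4 : (B * |y|)^2 = B^2 * y^2 := by rw [mul_pow, sq_abs]
    rw [q4] at q2
    linarith
  have fin : |Real.exp u - 1 - d * y| ≤ |Real.exp u - 1 - u| + |u - d * y| := by
    have e : Real.exp u - 1 - d * y = (Real.exp u - 1 - u) + (u - d * y) := by ring
    rw [e]; exact abs_add_le _ _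
  have hCN : C / n = C * (1 / n) := by ring
  have i0 : (0:ℝ) < 1 / n := by positivity
  have : (8 * B^2 + B + 2 * C) * (y^2 + 1 / n) = 8 * B^2 * y^2 + B * y^2 + 2 * (C * (1/n)) +
    (2 * C * y^2 + (8 * B^2 + B) * (1 / n)) := by ring
  have : 0 ≤ 2 * C * y^2 + (8 * B^2 + B) * (1 / n) := by positivity
  rw [hCN] at hud hsq
  linarith

theorem local_est {f0 f1 : ℝ → ℝ} {c K : ℝ} (h0 : Good f0 c K) (h1 : Good f1 c K) {δ : ℝ} (hδ : 0 < δ) :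
    ∃ C η0 : ℝ, ∃ N0 : ℕ, 0 < C ∧ 0 < η0 ∧ η0 ≤ δ / 2 ∧ ∀ N ≥ N0, ∀ t ∈ Icc (0:ℝ) 1, ∀ x ∈ Icc δ (1 - δ), ∀ k ≤ N,
      |(k:ℝ)/N - x| ≤ η0 → |gr (pp f0 f1 N t (G1 (mix f0 f1 t) x)) k - 1 - G2 (mix f0 f1 t) x * ((k:ℝ)/N - x)| ≤
        C * (((k:ℝ)/N - x)^2 + 1 / N) := by
  obtain ⟨C0, N0, pC0, hC0⟩ := ratio_interior h0 (half_pos hδ)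
  obtain ⟨C1, N1, pC1, hC1⟩ := ratio_interior h1 (half_pos hδ)
  obtain ⟨B0, pB0, hB0, hT0⟩ := G1_taylor h0.smooth (half_pos hδ)
  obtain ⟨B1, pB1, hB1, hT1⟩ := G1_taylor h1.smooth (half_pos hδ)
  set B := B0 + B1 with hB
  set C := C0 + C1 with hC
  have pB : 0 < B := by positivity
  have pC : 0 < C := by positivity
  obtain ⟨N2, hN2⟩ := exists_nat_ge (2 * C)
  refine ⟨8 * B^2 + B + 2 * C, min (min (δ/2) 1) (1 / (4 * B)), max (max N0 N1) (max N2 1), by positivity, by positivity,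
    (min_le_left _ _).trans (min_le_left _ _), ?_⟩
  intro N hN t ht x hx k hk hy
  have hNN0 : N0 ≤ N := by simp at hN; omega
  have hNN1 : N1 ≤ N := by simp at hN; omega
  have hNN2 : N2 ≤ N := by simp at hN; omega
  have hN1 : 1 ≤ N := by simp at hN; omega
  have hN' : (0:ℝ) < N := by exact_mod_cast hN1
  have hNC : C / N ≤ 1 / 2 := by
    have : (N2:ℝ) ≤ N := by exact_mod_cast hNN2
    rw [div_le_div_iff₀ hN' (by norm_num)]; linarith
  set y := (k:ℝ)/N - x with hyd
  have y1 : |y| ≤ δ / 2 := hy.trans ((min_le_left _ _).trans (min_le_left _ _))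
  have y2 : |y| ≤ 1 := hy.trans ((min_le_left _ _).trans (min_le_right _ _))
  have y3 : |y| ≤ 1 / (4 * B) := hy.trans (min_le_right _ _)
  have y3' : B * |y| ≤ 1 / 4 := by
    have := mul_le_mul_of_nonneg_left y3 pB.le
    have e : B * (1 / (4 * B)) = 1 / 4 := by field_simp
    linarith
  obtain ⟨yl, yu⟩ := abs_le.1 y1
  have hα : (k:ℝ)/N ∈ Icc (δ/2) (1 - δ/2) := ⟨by linarith [hx.1], by linarith [hx.2]⟩
  have hx' : x ∈ Icc (δ/2) (1 - δ/2) := ⟨by linarith [hx.1], by linarith [hx.2]⟩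
  obtain ⟨j, rfl⟩ : ∃ j, k = j + 1 := by
    rcases k with _ | j
    · exfalso; have := hα.1; simp at this; linarith
    · exact ⟨j, rfl⟩
  have r0 := hC0 N j hNN0 hk hα.1 hα.2
  have r1 := hC1 N j hNN1 hk hα.1 hα.2
  have t0 := hT0 x hx' _ hα
  have t1 := hT1 x hx' _ hα
  rw [gr_pp]
  set u0 := Real.log (MM f0 N (j+1)) - Real.log (MM f0 N j)
  set u1 := Real.log (MM f1 N (j+1)) - Real.log (MM f1 N j)
  rw [← hyd] at t0 t1
  set α := ((j+1 : ℕ):ℝ)/N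
  have r0' : |u0 - G1 f0 α| ≤ C / N := r0.trans (by gcongr; linarith)
  have r1' : |u1 - G1 f1 α| ≤ C / N := r1.trans (by gcongr; linarith)
  have t0' : |G1 f0 α - G1 f0 x - G2 f0 x * y| ≤ B * y^2 := t0.trans (by gcongr; linarith)
  have t1' : |G1 f1 α - G1 f1 x - G2 f1 x * y| ≤ B * y^2 := t1.trans (by gcongr; linarith)
  have d0 : |G2 f0 x| ≤ B := (hB0 x hx').trans (by linarith)
  have d1 : |G2 f1 x| ≤ B := (hB1 x hx').trans (by linarith)
  rw [G1_mix h0.smooth h1.smooth, G2_mix h0.smooth h1.smooth]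
  have hd := mix_abs ht d0 d1
  have hr := mix_abs ht r0' r1'
  have htt := mix_abs ht t0' t1'
  set d := (1 - t) * G2 f0 x + t * G2 f1 x
  set u := -((1 - t) * G1 f0 x + t * G1 f1 x) + ((1 - t) * u0 + t * u1) with hu
  have hud : |u - d * y| ≤ C / N + B * y^2 := by
    have e : u - d * y = ((1 - t) * (u0 - G1 f0 α) + t * (u1 - G1 f1 α)) +
      ((1 - t) * (G1 f0 α - G1 f0 x - G2 f0 x * y) + t * (G1 f1 α - G1 f1 x - G2 f1 x * y)) := by
      rw [hu]; simp only [d]; ring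
    rw [e]; exact (abs_add_le _ _).trans (add_le_add hr htt)
  have := exp_est pB.le pC.le hN' hd hud y2 y3' hNC
  exact this

theorem moment_core {p : ℕ → ℝ} {N : ℕ} (hp : Prob p N) (hN : 1 ≤ N) {x d D C η : ℝ} (hx : x ∈ Ioo (0:ℝ) 1)
    (hC : 0 ≤ C) (hd : |d| ≤ D) (hη : 0 < η) (hηN : 1 / (N:ℝ) ≤ η / 2) (hη1 : η < 1 - x)
    (hloc : ∀ k ≤ N, |(k:ℝ)/N - x| ≤ η → |gr p k - 1 - d * ((k:ℝ)/N - x)| ≤ C * (((k:ℝ)/N - x)^2 + 1 / N)) :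
    |d * Ex p N (fun k => ((k:ℝ)/N - x)^2) - 1 / N| ≤
      C * η * Ex p N (fun k => ((k:ℝ)/N - x)^2) + C * η * (1 / N) + (4 + D) * Tl p N x (η/2) ∧
    |d * Ex p N (fun k => (k:ℝ)/N - x)| ≤
      C * Ex p N (fun k => ((k:ℝ)/N - x)^2) + C * (1 / N) + (4 + D) * Tl p N x (η/2) := by
  have hN' : (0:ℝ) < N := by exact_mod_cast hN
  have hN1 : (1:ℝ) ≤ N := by exact_mod_cast hN
  have iN : (0:ℝ) < 1 / N := by positivity
  have iN1 : (1:ℝ) / N ≤ 1 := by rw [div_le_one hN']; exact hN1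
  have hD0 : 0 ≤ D := (abs_nonneg _).trans hd
  set T := Tl p N x (η/2) with hT
  have hT0 : 0 ≤ T := Tl_nonneg hp _ _
  set I : ℕ → ℝ := fun k => if η < |(k:ℝ)/N - x| then 1 else 0 with hI
  have I0 : ∀ k, 0 ≤ I k := fun k => by simp only [hI]; split_ifs <;> norm_num
  set s := Ex p N (fun k => ((k:ℝ)/N - x)^2) with hs
  have g0 : ∀ k, 0 ≤ gr p k := by
    intro k; rcases k with _ | k
    · exact le_rfl
    · exact (div_pos (hp.pos _) (hp.pos _)).le
  -- tail facts
  have T1 : Ex p N I ≤ T := by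
    apply Ex_mono hp; intro k _
    simp only [hI]
    split_ifs with a b b
    · exact le_rfl
    · exact absurd (by linarith) b
    · norm_num
    · exact le_rfl
  have pN : p N ≤ T := by
    have : p N * (if η/2 < |(N:ℝ)/N - x| then 1 else 0) ≤ T := by
      rw [hT]; unfold Tl Ex
      exact Finset.single_le_sum (f := fun k => p k * (if η/2 < |(k:ℝ)/N - x| then 1 else 0))
        (fun i _ => mul_nonneg (hp.pos i).le (by split_ifs <;> norm_num)) (by simp)
    rw [if_pos] at this
    · linarith
    · rw [div_self hN'.ne', abs_of_pos (by linarith [hx.2])]; linarith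
  have T2 : Ex p N (fun k => gr p k * I k) ≤ T := by
    rw [Ex_gr hp]
    have : 0 ≤ p N * I (N+1) := mul_nonneg (hp.pos _).le (I0 _)
    have : Ex p N (fun k => I (k+1)) ≤ T := by
      apply Ex_mono hp; intro k _
      simp only [hI]
      split_ifs with a b b
      · exact le_rfl
      · exfalso; apply b
        have e : ((k+1 : ℕ):ℝ)/N - x = ((k:ℝ)/N - x) + 1 / N := by push_cast; ring
        rw [e] at a
        have := abs_add_le ((k:ℝ)/N - x) (1 / N)
        rw [abs_of_pos iN] at this
        linarith
      · norm_num
      · exact le_rfl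
    linarith
  have yb : ∀ k ≤ N, |(k:ℝ)/N - x| ≤ 1 := by
    intro k hk
    have := grid_mem hN hk
    rw [abs_le]; constructor <;> linarith [this.1, this.2, hx.1, hx.2]
  set e : ℕ → ℝ := fun k => gr p k - 1 - d * ((k:ℝ)/N - x) with he
  have efar : ∀ k ≤ N, |e k| ≤ gr p k + (1 + D) := by
    intro k hk
    have h1 : |d * ((k:ℝ)/N - x)| ≤ D := by
      rw [abs_mul]; nlinarith [yb k hk, abs_nonneg ((k:ℝ)/N - x), abs_nonneg d]
    have h2 := abs_le.1 h1
    have := g0 k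
    simp only [he]
    rw [abs_le]; constructor <;> linarith
  have ey : ∀ k ≤ N, |e k * ((k:ℝ)/N - x)| ≤ (C * η * ((k:ℝ)/N - x)^2 + C * η * (1/N)) + (gr p k * I k + (1 + D) * I k) := by
    intro k hk
    rw [abs_mul]
    by_cases hc : η < |(k:ℝ)/N - x|
    · have : I k = 1 := by simp only [hI]; rw [if_pos hc]
      rw [this]
      have h1 := efar k hk
      have h2 : |e k| * |(k:ℝ)/N - x| ≤ |e k| * 1 := by gcongr; exact yb k hk
      have h3 : 0 ≤ C * η * ((k:ℝ)/N - x)^2 + C * η * (1/N) := by positivity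
      linarith
    · have : I k = 0 := by simp only [hI]; rw [if_neg hc]
      rw [this]
      push Not at hc
      have h1 := hloc k hk hc
      have h2 : |e k| * |(k:ℝ)/N - x| ≤ C * (((k:ℝ)/N - x)^2 + 1 / N) * η := by gcongr
      linarith
  have ee : ∀ k ≤ N, |e k| ≤ (C * ((k:ℝ)/N - x)^2 + C * (1/N)) + (gr p k * I k + (1 + D) * I k) := by
    intro k hk
    by_cases hc : η < |(k:ℝ)/N - x|
    · have : I k = 1 := by simp only [hI]; rw [if_pos hc]
      rw [this]
      have h1 := efar k hk
      have h3 : 0 ≤ C * ((k:ℝ)/N - x)^2 + C * (1/N) := by positivity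
      linarith
    · have : I k = 0 := by simp only [hI]; rw [if_neg hc]
      rw [this]
      push Not at hc
      have h1 := hloc k hk hc
      have h2 : |e k| ≤ C * (((k:ℝ)/N - x)^2 + 1 / N) := h1
      linarith
  have T3 : Ex p N (fun k => (1 + D) * I k) ≤ (1 + D) * T := by rw [Ex_smul]; gcongr
  have B1 : |Ex p N (fun k => e k * ((k:ℝ)/N - x))| ≤ C * η * s + C * η * (1/N) + (2 + D) * T := by
    refine (Ex_abs hp _).trans ((Ex_mono hp ey).trans ?_)
    rw [Ex_add, Ex_add, Ex_add, Ex_smul, Ex_const hp]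
    linarith
  have B2 : |Ex p N e| ≤ C * s + C * (1/N) + (2 + D) * T := by
    refine (Ex_abs hp _).trans ((Ex_mono hp ee).trans ?_)
    rw [Ex_add, Ex_add, Ex_add, Ex_smul, Ex_const hp]
    linarith
  have id1 : Ex p N (fun k => e k * ((k:ℝ)/N - x)) = 1 / N - p N * (((N+1 : ℕ):ℝ)/N - x) - d * s := by
    have a := Ex_gr hp (fun k => (k:ℝ)/N - x)
    have b : Ex p N (fun k => ((k+1 : ℕ):ℝ)/N - x) = Ex p N (fun k => (k:ℝ)/N - x) + 1 / N := by
      rw [← Ex_const hp (1/(N:ℝ)), ← Ex_add]; apply Ex_congr; intros; push_cast; ring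
    have c : Ex p N (fun k => e k * ((k:ℝ)/N - x)) = Ex p N (fun k => gr p k * ((k:ℝ)/N - x)) - Ex p N (fun k => (k:ℝ)/N - x) - d * s := by
      rw [hs, ← Ex_smul, ← Ex_sub, ← Ex_sub]; apply Ex_congr; intros; simp only [he]; ring
    rw [c, a, b]; ring
  have id2 : Ex p N e = - p N - d * Ex p N (fun k => (k:ℝ)/N - x) := by
    have a := Ex_gr hp (fun _ => 1)
    rw [Ex_const hp] at a
    have c : Ex p N e = Ex p N (fun k => gr p k * 1) - 1 - d * Ex p N (fun k => (k:ℝ)/N - x) := by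
      rw [← Ex_smul, ← Ex_const hp (1:ℝ), ← Ex_sub, ← Ex_sub, Ex_const hp]; apply Ex_congr; intros; simp only [he]; ring
    rw [c, a]; ring
  have hpN := hp.pos N
  have yN : |p N * (((N+1 : ℕ):ℝ)/N - x)| ≤ 2 * T := by
    have e1 : ((N+1 : ℕ):ℝ)/N - x = 1 - x + 1 / N := by push_cast; field_simp; ring
    rw [e1, abs_mul, abs_of_pos hpN, abs_of_pos (by linarith [hx.2])]
    nlinarith [hx.1, hx.2]
  constructor
  · rw [id1] at B1
    obtain ⟨l, u⟩ := abs_le.1 B1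
    obtain ⟨l', u'⟩ := abs_le.1 yN
    rw [abs_le]; constructor <;> nlinarith
  · rw [id2] at B2
    obtain ⟨l, u⟩ := abs_le.1 B2
    rw [abs_le]; constructor <;> nlinarith


noncomputable def al (N k : ℕ) : ℝ := (k:ℝ) / N

theorem mean_bound {p : ℕ → ℝ} {N : ℕ} (hp : Prob p N) (hN : 1 ≤ N) {x η : ℝ} (hx : x ∈ Ioo (0:ℝ) 1) (hη : 0 < η) :
    Ex p N (fun k => |al N k - x|) ≤ η + Tl p N x η := by
  unfold Tl
  rw [← Ex_const hp η, ← Ex_add, Ex_const hp]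
  apply Ex_mono hp
  intro k hk
  have := grid_mem hN hk
  have : |(k:ℝ)/N - x| ≤ 1 := by
    rw [abs_le]; constructor <;> linarith [this.1, this.2, hx.1, hx.2]
  unfold al
  split_ifs with hh
  · linarith
  · linarith

theorem mean_bound' {p : ℕ → ℝ} {N : ℕ} (hp : Prob p N) (hN : 1 ≤ N) {x η : ℝ} (hx : x ∈ Ioo (0:ℝ) 1) (hη : 0 < η) :
    |Ex p N (al N) - x| ≤ η + Tl p N x η := by
  have e : Ex p N (al N) - x = Ex p N (fun k => al N k - x) := by rw [Ex_sub, Ex_const hp]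
  rw [e]
  exact (Ex_abs hp _).trans (mean_bound hp hN hx hη)

theorem Tl_of_mul {f0 f1 : ℝ → ℝ} {N : ℕ} (hN : 1 ≤ N) {t ρ x η ε : ℝ}
    (h : N * Tl (pp f0 f1 N t ρ) N x η ≤ ε) : Tl (pp f0 f1 N t ρ) N x η ≤ ε := by
  have hN' : (1:ℝ) ≤ N := by exact_mod_cast hN
  have := Tl_nonneg (pp_prob f0 f1 N t ρ) x η
  nlinarith

theorem mean_lim {f0 f1 : ℝ → ℝ} {c K : ℝ} (h0 : Good f0 c K) (h1 : Good f1 c K) {ε : ℝ} (hε : 0 < ε) :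
    ∃ N0 : ℕ, ∀ N ≥ N0, ∀ t ∈ Icc (0:ℝ) 1, ∀ x ∈ Ioo (0:ℝ) 1,
      |Ex (pp f0 f1 N t (G1 (mix f0 f1 t) x)) N (al N) - x| ≤ ε := by
  obtain ⟨N0, h⟩ := tail_lim h0 h1 (half_pos hε) (half_pos hε)
  refine ⟨max N0 1, fun N hN t ht x hx => ?_⟩
  have hN1 : 1 ≤ N := le_trans (le_max_right _ _) hN
  have a := Tl_of_mul hN1 (h N (le_trans (le_max_left _ _) hN) t ht x hx)
  have b := mean_bound' (pp_prob f0 f1 N t (G1 (mix f0 f1 t) x)) hN1 hx (half_pos hε)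
  linarith

theorem G2_bound {f0 f1 : ℝ → ℝ} {c K : ℝ} (h0 : Good f0 c K) (h1 : Good f1 c K) {δ : ℝ} (hδ : 0 < δ) :
    ∃ D : ℝ, 0 < D ∧ ∀ t ∈ Icc (0:ℝ) 1, ∀ x ∈ Icc δ (1 - δ), |G2 (mix f0 f1 t) x| ≤ D := by
  obtain ⟨B0, p0, hB0, -⟩ := G1_taylor h0.smooth hδ
  obtain ⟨B1, p1, hB1, -⟩ := G1_taylor h1.smooth hδ
  refine ⟨B0 + B1, by positivity, fun t ht x hx => ?_⟩
  rw [G2_mix h0.smooth h1.smooth]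
  exact mix_abs ht ((hB0 x hx).trans (by linarith)) ((hB1 x hx).trans (by linarith))

theorem Cv_al_eq {p : ℕ → ℝ} {N : ℕ} (hp : Prob p N) (x : ℝ) :
    Cv p N (al N) (al N) = Ex p N (fun k => ((k:ℝ)/N - x)^2) - (Ex p N (fun k => (k:ℝ)/N - x))^2 := by
  rw [← Cv_shift hp (al N) (al N) x x]
  unfold Cv al
  rw [sq (Ex p N (fun k => (k:ℝ)/N - x))]
  congr 1
  apply Ex_congr; intros; ring

/-- purely numerical part of the interior variance asymptotics -/
theorem interior_num {d c C η n s m T D ε M : ℝ} (hc : 0 < c) (hc1 : c ≤ 1) (hd : c ≤ d) (hC : 0 < C) (hη : 0 < η) (hn : 1 ≤ n) (hs : 0 ≤ s)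
    (e1 : |d * s - 1 / n| ≤ C * η * s + C * η * (1 / n) + (4 + D) * T)
    (e2 : |d * m| ≤ C * s + C * (1 / n) + (4 + D) * T)
    (hτ1 : n * ((4 + D) * T) ≤ 1) (hτ2 : n * ((4 + D) * T) ≤ c * ε / 3)
    (hη1 : C * η ≤ c / 2) (hη2 : C * η * (5 / c + 1) ≤ c * ε / 3) (hM : M = (C * (5 / c + 1) + 1) / c)
    (hn2 : M^2 / n ≤ ε / 3) :
    |n * (s - m^2) - 1 / d| ≤ ε := by
  have hn0 : 0 < n := by linarith
  have hd0 : 0 < d := by linarith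
  set τ := n * ((4 + D) * T) with hτ
  have E1 : |d * (n * s) - 1| ≤ C * η * (n * s) + C * η + τ := by
    have : d * (n * s) - 1 = n * (d * s - 1 / n) := by field_simp
    rw [this, abs_mul, abs_of_pos hn0]
    refine (mul_le_mul_of_nonneg_left e1 hn0.le).trans (le_of_eq ?_)
    rw [hτ]; field_simp
  have E2 : |d * (n * m)| ≤ C * (n * s) + C + τ := by
    have : d * (n * m) = n * (d * m) := by ring
    rw [this, abs_mul, abs_of_pos hn0]
    refine (mul_le_mul_of_nonneg_left e2 hn0.le).trans (le_of_eq ?_)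
    rw [hτ]; field_simp
  set S := n * s with hS
  have hS0 : 0 ≤ S := by positivity
  have S5 : S ≤ 5 / c := by
    rw [le_div_iff₀ hc]
    have := (abs_le.1 E1).2
    have h1 : c * S ≤ d * S := by gcongr
    have h2 : C * η * S ≤ c / 2 * S := by gcongr
    nlinarith
  have E1' : |d * S - 1| ≤ 2 * (c * ε / 3) := by
    refine E1.trans ?_
    have : C * η * S ≤ C * η * (5 / c) := by gcongr
    linarith
  have E2' : |n * m| ≤ M := by
    rw [hM, le_div_iff₀ hc]
    have : C * S ≤ C * (5 / c) := by gcongr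
    rw [abs_mul, abs_of_pos hd0] at E2
    have : |n * m| * c ≤ d * |n * m| := by nlinarith [abs_nonneg (n * m)]
    linarith
  have A1 : |S - 1 / d| ≤ 2 * (ε / 3) := by
    have : S - 1 / d = (d * S - 1) / d := by field_simp
    rw [this, abs_div, abs_of_pos hd0, div_le_iff₀ hd0]
    refine E1'.trans ?_
    have : 0 ≤ ε := by
      have : 0 ≤ c * ε / 3 := le_trans (by positivity) hη2
      by_contra hneg
      push Not at hneg
      nlinarith
    nlinarith
  have A2 : n * m^2 ≤ ε / 3 := by
    refine le_trans ?_ hn2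
    have : n * m^2 = (n * m)^2 / n := by field_simp
    rw [this, ← sq_abs (n * m)]
    gcongr
  have A3 : 0 ≤ n * m^2 := by positivity
  obtain ⟨l, u⟩ := abs_le.1 A1
  have : n * (s - m^2) = S - n * m^2 := by rw [hS]; ring
  rw [this, abs_le]
  constructor <;> linarith

theorem var_interior {f0 f1 : ℝ → ℝ} {c K : ℝ} (h0 : Good f0 c K) (h1 : Good f1 c K) {δ ε : ℝ} (hδ : 0 < δ) (hε : 0 < ε) :
    ∃ N0 : ℕ, ∀ N ≥ N0, ∀ t ∈ Icc (0:ℝ) 1, ∀ x ∈ Icc δ (1 - δ),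
      |N * Cv (pp f0 f1 N t (G1 (mix f0 f1 t) x)) N (al N) (al N) - 1 / G2 (mix f0 f1 t) x| ≤ ε := by
  have hc := h0.cpos
  have hc1 := c_le_one h0
  obtain ⟨C, η0, N1, pC, pη0, hη0, hloc⟩ := local_est h0 h1 hδ
  obtain ⟨D, pD, hD⟩ := G2_bound h0 h1 hδ
  set M := (C * (5 / c + 1) + 1) / c with hM
  set η := min η0 (min (c / (2 * C)) (c * ε / 3 / (C * (5 / c + 1)))) with hη
  have pη : 0 < η := by positivity
  obtain ⟨N2, hN2⟩ := tail_lim h0 h1 (η := η/2) (ε := min 1 (c * ε / 3) / (4 + D)) (by positivity) (by positivity)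
  obtain ⟨N3, hN3⟩ := exists_nat_ge (M^2 / (ε/3))
  obtain ⟨N4, hN4⟩ := exists_nat_ge (1 / (η/2))
  refine ⟨max (max N1 N2) (max (max N3 N4) 1), fun N hN t ht x hx => ?_⟩
  have g1 : N1 ≤ N := by simp at hN; omega
  have g2 : N2 ≤ N := by simp at hN; omega
  have g3 : N3 ≤ N := by simp at hN; omega
  have g4 : N4 ≤ N := by simp at hN; omega
  have g5 : 1 ≤ N := by simp at hN; omega
  have hN' : (1:ℝ) ≤ N := by exact_mod_cast g5
  have hN0 : (0:ℝ) < N := by linarith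
  have hx01 : x ∈ Ioo (0:ℝ) 1 := ⟨by linarith [hx.1], by linarith [hx.2]⟩
  have hp := pp_prob f0 f1 N t (G1 (mix f0 f1 t) x)
  have a1 : η ≤ η0 := min_le_left _ _
  have hNη : 1 / (N:ℝ) ≤ η / 2 := by
    have : 1 / (η/2) ≤ (N:ℝ) := hN4.trans (by exact_mod_cast g4)
    rw [div_le_iff₀ (by positivity)] at this
    rw [div_le_iff₀ hN0]; linarith
  obtain ⟨e1, e2⟩ := moment_core hp g5 hx01 pC.le (hD t ht x hx) pη hNη (by linarith [hx.2])
    (fun k hk hy => hloc N g1 t ht x hx k hk (hy.trans a1))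
  have hT := hN2 N g2 t ht x hx01
  rw [le_div_iff₀ (by positivity)] at hT
  have hT1 := hT.trans (min_le_left _ _)
  have hT2 := hT.trans (min_le_right _ _)
  rw [Cv_al_eq hp x]
  refine interior_num hc hc1 (G2_ge (mix_good h0 h1 ht) hx01) pC pη hN'
    (Ex_nonneg hp (fun k _ => sq_nonneg _)) e1 e2 (by linarith) (by linarith) ?_ ?_ hM ?_
  · have : η ≤ c / (2 * C) := (min_le_right _ _).trans (min_le_left _ _)
    have := mul_le_mul_of_nonneg_left this pC.le
    have e : C * (c / (2 * C)) = c / 2 := by field_simp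
    linarith
  · have : η ≤ c * ε / 3 / (C * (5 / c + 1)) := (min_le_right _ _).trans (min_le_right _ _)
    rw [le_div_iff₀ (by positivity)] at this
    linarith
  · have : M^2 / (ε/3) ≤ (N:ℝ) := hN3.trans (by exact_mod_cast g3)
    rw [div_le_iff₀ (by positivity)] at this
    rw [div_le_iff₀ hN0]; linarith

theorem Cv_al_scale (p : ℕ → ℝ) (N : ℕ) (hN : 1 ≤ N) :
    N * Cv p N (al N) (al N) = Cv p N (fun k => (k:ℝ)) (fun k => (k:ℝ)) / N := by
  have hN0 : (0:ℝ) < N := by exact_mod_cast hN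
  unfold Cv
  have a : Ex p N (al N) = 1 / N * Ex p N (fun k => (k:ℝ)) := by
    rw [← Ex_smul]; apply Ex_congr; intros; unfold al; ring
  have b : Ex p N (fun k => al N k * al N k) = 1 / N^2 * Ex p N (fun k => (k:ℝ) * k) := by
    rw [← Ex_smul]; apply Ex_congr; intros; unfold al; field_simp
  rw [a, b]; field_simp

theorem var_boundary {f0 f1 : ℝ → ℝ} {c K : ℝ} (h0 : Good f0 c K) (h1 : Good f1 c K) {ε : ℝ} (hε : 0 < ε) :
    ∃ δ : ℝ, 0 < δ ∧ ∀ N ≥ 1, ∀ t ∈ Icc (0:ℝ) 1, ∀ x ∈ Ioo (0:ℝ) 1, x ∉ Icc δ (1 - δ) → 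
      |N * Cv (pp f0 f1 N t (G1 (mix f0 f1 t) x)) N (al N) (al N) - 1 / G2 (mix f0 f1 t) x| ≤ ε := by
  have hc := h0.cpos
  have hK := h0.hK
  set A := 6 * K * Real.exp K / c^2 with hA
  have pA : 0 < A := by positivity
  refine ⟨min (1/2) (min (c * ε) (ε / (A * (2 * Real.exp K)))), by positivity, ?_⟩
  intro N hN t ht x hx hnot
  set δ := min (1/2) (min (c * ε) (ε / (A * (2 * Real.exp K)))) with hδ
  have d1 : δ ≤ 1/2 := min_le_left _ _
  have d2 : δ ≤ c * ε := (min_le_right _ _).trans (min_le_left _ _)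
  have d3 : δ ≤ ε / (A * (2 * Real.exp K)) := (min_le_right _ _).trans (min_le_right _ _)
  have d3' : A * (2 * δ * Real.exp K) ≤ ε := by
    rw [le_div_iff₀ (by positivity)] at d3; linarith
  have hN0 : (0:ℝ) < N := by exact_mod_cast hN
  have hx0 := hx.1
  have hx1 : 0 < 1 - x := by linarith [hx.2]
  have hg := mix_good h0 h1 ht
  set f := mix f0 f1 t with hf
  have hf1 := abs_le.1 (hg.b1 x ⟨hx.1.le, hx.2.le⟩)
  have hk := hg.lower x ⟨hx.1.le, hx.2.le⟩
  have hk0 : 0 < kap f x := by linarith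
  have V0 : 0 ≤ N * Cv (pp f0 f1 N t (G1 f x)) N (al N) (al N) :=
    mul_nonneg hN0.le (Cv_self_nonneg (pp_prob _ _ _ _ _) _)
  have I0 : 0 ≤ 1 / G2 f x := by
    have := G2_ge hg hx
    exact (one_div_pos.2 (by linarith)).le
  have iG : 1 / G2 f x = x * (1 - x) / kap f x := by unfold G2; rw [one_div_div]
  have ex1 : Real.exp (G1 f x) = x / (1 - x) * Real.exp (deriv f x) := by
    unfold G1; rw [Real.exp_add, Real.exp_sub, Real.exp_log hx0, Real.exp_log hx1]
  have ex2 : Real.exp (-G1 f x) = (1 - x) / x * Real.exp (-deriv f x) := by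
    rw [Real.exp_neg, ex1, Real.exp_neg]; field_simp
  suffices hs : N * Cv (pp f0 f1 N t (G1 f x)) N (al N) (al N) ≤ ε ∧ 1 / G2 f x ≤ ε by
    rw [abs_le]; constructor <;> linarith [hs.1, hs.2]
  have vb : ∀ r, Cv (pp f0 f1 N t (G1 f x)) N (fun k => (k:ℝ)) (fun k => (k:ℝ)) ≤ A * N * r → r ≤ 2 * δ * Real.exp K →
      N * Cv (pp f0 f1 N t (G1 f x)) N (al N) (al N) ≤ ε := by
    intro r hr1 hr2
    rw [Cv_al_scale _ _ hN, div_le_iff₀ hN0]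
    have : A * r ≤ ε := (mul_le_mul_of_nonneg_left hr2 pA.le).trans d3'
    nlinarith
  have ib : x * (1 - x) ≤ δ → 1 / G2 f x ≤ ε := by
    intro h
    rw [iG, div_le_iff₀ hk0]
    nlinarith
  rw [mem_Icc, not_and_or] at hnot
  rcases hnot with hn | hn
  · push Not at hn
    refine ⟨vb _ (var_bound_left h0 h1 hN ht (G1 f x)) ?_, ib (by nlinarith)⟩
    rw [ex1]
    have e1 : x / (1 - x) ≤ 2 * δ := by
      rw [div_le_iff₀ hx1]; nlinarith
    have e2 : Real.exp (deriv f x) ≤ Real.exp K := Real.exp_le_exp.2 hf1.2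
    gcongr
  · push Not at hn
    refine ⟨vb _ (var_bound_right h0 h1 hN ht (G1 f x)) ?_, ib (by nlinarith)⟩
    rw [ex2]
    have e1 : (1 - x) / x ≤ 2 * δ := by
      rw [div_le_iff₀ hx0]; nlinarith
    have e2 : Real.exp (-deriv f x) ≤ Real.exp K := Real.exp_le_exp.2 (by linarith [hf1.1])
    gcongr

theorem var_lim {f0 f1 : ℝ → ℝ} {c K : ℝ} (h0 : Good f0 c K) (h1 : Good f1 c K) {ε : ℝ} (hε : 0 < ε) :
    ∃ N0 : ℕ, ∀ N ≥ N0, ∀ t ∈ Icc (0:ℝ) 1, ∀ x ∈ Ioo (0:ℝ) 1,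
      |N * Cv (pp f0 f1 N t (G1 (mix f0 f1 t) x)) N (al N) (al N) - 1 / G2 (mix f0 f1 t) x| ≤ ε := by
  obtain ⟨δ, hδ, hb⟩ := var_boundary h0 h1 hε
  obtain ⟨N0, hi⟩ := var_interior h0 h1 hδ hε
  refine ⟨max N0 1, fun N hN t ht x hx => ?_⟩
  by_cases hm : x ∈ Icc δ (1 - δ)
  · exact hi N (le_trans (le_max_left _ _) hN) t ht x hm
  · exact hb N (le_trans (le_max_right _ _) hN) t ht x hx hm


theorem LL_sq_lim (K : ℝ) {ε : ℝ} (hε : 0 < ε) : ∃ N0 : ℕ, ∀ N ≥ N0, N * (LL K N / N)^2 < ε := by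
  have h1 : Tendsto (fun x : ℝ => (LL K 1 + Real.log x)^2 / x) atTop (nhds 0) := by
    have a := (Real.isLittleO_pow_log_id_atTop (n := 2)).tendsto_div_nhds_zero
    have b := (Real.isLittleO_pow_log_id_atTop (n := 1)).tendsto_div_nhds_zero
    have c : Tendsto (fun x : ℝ => (LL K 1)^2 / x) atTop (nhds 0) := tendsto_const_nhds.div_atTop tendsto_id
    have := (a.add (b.const_mul (2 * LL K 1))).add c
    simp only [mul_zero, add_zero] at this
    refine this.congr fun x => ?_
    simp only [id]
    ring
  have h2 := h1.comp tendsto_natCast_atTop_atTop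
  obtain ⟨N0, hN0⟩ := eventually_atTop.1 (h2.eventually (gt_mem_nhds hε))
  refine ⟨max N0 1, fun N hN => ?_⟩
  have h := hN0 N (le_trans (le_max_left _ _) hN)
  have hN1 : (1:ℝ) ≤ N := by exact_mod_cast le_trans (le_max_right _ _) hN
  refine lt_of_eq_of_lt ?_ h
  simp only [Function.comp]
  have : LL K N = LL K 1 + Real.log N := by
    unfold LL
    rw [Real.log_mul (by positivity) (by positivity)]; simp; ring
  rw [this]
  field_simp

theorem Ex_al_mem {p : ℕ → ℝ} {N : ℕ} (hp : Prob p N) (hN : 1 ≤ N) : Ex p N (al N) ∈ Icc (0:ℝ) 1 := by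
  constructor
  · exact Ex_nonneg hp fun k hk => (grid_mem hN hk).1
  · have := Ex_mono hp (φ := al N) (ψ := fun _ => 1) fun k hk => (grid_mem hN hk).2
    rwa [Ex_const hp] at this

theorem lip_of_taylor {φ : ℝ → ℝ} (h : ContDiff ℝ (⊤ : ℕ∞) φ) :
    ∃ B > 0, ∀ x ∈ Icc (0:ℝ) 1, ∀ y ∈ Icc (0:ℝ) 1, |φ y - φ x| ≤ B * |y - x| := by
  obtain ⟨B, pB, hd, hB⟩ := taylor_smooth h
  refine ⟨2 * B, by positivity, fun x hx y hy => ?_⟩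
  have h1 : |y - x| ≤ 1 := by rw [abs_le]; constructor <;> linarith [hx.1, hx.2, hy.1, hy.2]
  have h2 : (y - x)^2 ≤ |y - x| := by rw [← sq_abs]; nlinarith [abs_nonneg (y - x)]
  have e : φ y - φ x = (φ y - φ x - deriv φ x * (y - x)) + deriv φ x * (y - x) := by ring
  rw [e]
  refine (abs_add_le _ _).trans ?_
  rw [abs_mul]
  have := hB x hx y hy
  have := mul_le_mul_of_nonneg_right (hd x hx) (abs_nonneg (y - x))
  nlinarith

theorem meanb_lim {f0 f1 : ℝ → ℝ} {c K : ℝ} (h0 : Good f0 c K) (h1 : Good f1 c K) {ε : ℝ} (hε : 0 < ε) :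
    ∃ N0 : ℕ, ∀ N ≥ N0, ∀ t ∈ Icc (0:ℝ) 1, ∀ x ∈ Ioo (0:ℝ) 1,
      |Ex (pp f0 f1 N t (G1 (mix f0 f1 t) x)) N (bb f0 f1 N) - (f1 x - f0 x)| ≤ ε := by
  obtain ⟨B, pB, hB⟩ := lip_of_taylor (h1.smooth.sub h0.smooth)
  obtain ⟨N1, hN1⟩ := tail_lim h0 h1 (η := ε / (4 * B)) (ε := ε / (4 * B)) (by positivity) (by positivity)
  obtain ⟨N2, hN2⟩ := LL_lim K 0 (half_pos hε)
  refine ⟨max (max N1 N2) 2, fun N hN t ht x hx => ?_⟩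
  have g1 : N1 ≤ N := by simp at hN; omega
  have g2 : N2 ≤ N := by simp at hN; omega
  have g3 : 2 ≤ N := by simp at hN; omega
  have hp := pp_prob f0 f1 N t (G1 (mix f0 f1 t) x)
  have a := Tl_of_mul (by omega) (hN1 N g1 t ht x hx)
  have b := mean_bound hp (by omega) hx (η := ε / (4 * B)) (by positivity)
  have l := hN2 N g2
  rw [add_zero] at l
  have e : Ex (pp f0 f1 N t (G1 (mix f0 f1 t) x)) N (bb f0 f1 N) - (f1 x - f0 x)
     = Ex (pp f0 f1 N t (G1 (mix f0 f1 t) x)) N (fun k => bb f0 f1 N k - (f1 x - f0 x)) := by rw [Ex_sub, Ex_const hp]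
  rw [e]
  refine (Ex_abs hp _).trans ?_
  have : Ex (pp f0 f1 N t (G1 (mix f0 f1 t) x)) N (fun k => |bb f0 f1 N k - (f1 x - f0 x)|)
      ≤ Ex (pp f0 f1 N t (G1 (mix f0 f1 t) x)) N (fun k => ε/2 + B * |al N k - x|) := by
    apply Ex_mono hp
    intro k hk
    have i1 := bb_close h0 h1 g3 hk
    have i2 := hB x ⟨hx.1.le, hx.2.le⟩ _ (grid_mem (by omega : 1 ≤ N) hk)
    change |(f1 ((k:ℝ)/N) - f0 ((k:ℝ)/N)) - (f1 x - f0 x)| ≤ _ at i2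
    have := abs_sub_le (bb f0 f1 N k) (f1 ((k:ℝ)/N) - f0 ((k:ℝ)/N)) (f1 x - f0 x)
    unfold al
    linarith
  refine this.trans ?_
  rw [Ex_add, Ex_const hp, Ex_smul]
  have : B * Ex (pp f0 f1 N t (G1 (mix f0 f1 t) x)) N (fun k => |al N k - x|) ≤ B * (ε / (4 * B) + ε / (4 * B)) := by
    gcongr; linarith
  have e2 : B * (ε / (4 * B) + ε / (4 * B)) = ε / 2 := by field_simp; ring
  linarith

theorem G2_inv_le {f0 f1 : ℝ → ℝ} {c K : ℝ} (h0 : Good f0 c K) (h1 : Good f1 c K) {t x : ℝ} (ht : t ∈ Icc (0:ℝ) 1)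
    (hx : x ∈ Ioo (0:ℝ) 1) : 0 < 1 / G2 (mix f0 f1 t) x ∧ 1 / G2 (mix f0 f1 t) x ≤ 1 / c := by
  have := G2_ge (mix_good h0 h1 ht) hx
  have hc := h0.cpos
  have h2 : 0 < G2 (mix f0 f1 t) x := by linarith
  exact ⟨one_div_pos.2 h2, one_div_le_one_div_of_le hc this⟩

theorem vare_pt {B1 B2 η r w hy hm' dm dx y m x : ℝ} (pB1 : 0 < B1) (pB2 : 0 < B2) (pη : 0 < η) (η1 : η ≤ 1)
    (hk' : y ∈ Icc (0:ℝ) 1) (hm : m ∈ Icc (0:ℝ) 1) (hx' : x ∈ Icc (0:ℝ) 1) (Mn : |m - x| ≤ η)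
    (i1 : |w - hy| ≤ r) (i2 : |hy - hm' - dm * (y - m)| ≤ B1 * (y - m)^2) (i3 : |dm - dx| ≤ B2 * |m - x|) :
    (w - dx * y - (hm' - dx * m))^2 ≤ (2 * r^2 + 8 * (B1 + B2)^2 * η * (y - m)^2)
      + 2 * (B1 + B2)^2 * (if η < |y - x| then 1 else 0) := by
  set B := B1 + B2 with hB
  have pB : 0 < B := by positivity
  set u := hy - hm' - dx * (y - m) with hu
  have hy1 : |y - m| ≤ 1 := by rw [abs_le]; constructor <;> linarith [hm.1, hm.2, hk'.1, hk'.2]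
  have hm1 : |m - x| ≤ 1 := by rw [abs_le]; constructor <;> linarith [hm.1, hm.2, hx'.1, hx'.2]
  have hu1 : |u| ≤ B1 * (y - m)^2 + B2 * |m - x| * |y - m| := by
    have : u = (hy - hm' - dm * (y - m)) + (dm - dx) * (y - m) := by rw [hu]; ring
    rw [this]
    refine (abs_add_le _ _).trans ?_
    rw [abs_mul]
    gcongr
  rw [← sq_abs (y - m)] at hu1
  have e : w - dx * y - (hm' - dx * m) = (w - hy) + u := by rw [hu]; ring
  rw [e]
  have s1 : ((w - hy) + u)^2 ≤ 2 * (w - hy)^2 + 2 * u^2 := by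
    nlinarith [sq_nonneg ((w - hy) - u)]
  have s2 : (w - hy)^2 ≤ r^2 := by
    rw [← sq_abs]; gcongr
  have n1 := abs_nonneg (y - m)
  have n2 := abs_nonneg (m - x)
  split_ifs with hif
  · have : |u| ≤ B := by
      have a1 : B1 * |y - m|^2 ≤ B1 * 1 := by gcongr; nlinarith
      have a2 : B2 * |m - x| * |y - m| ≤ B2 * 1 * 1 := by gcongr
      linarith
    have s3 : u^2 ≤ B^2 := by rw [← sq_abs]; gcongr
    have : 0 ≤ 8 * B^2 * η * (y - m)^2 := by positivity
    linarith
  · push Not at hif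
    have hy2 : |y - m| ≤ 2 * η := by
      have := abs_sub_le y x m
      rw [abs_sub_comm x m] at this
      linarith
    have : |u| ≤ B * (2 * η) * |y - m| := by
      have a1 : B1 * |y - m|^2 ≤ B1 * (2 * η) * |y - m| := by
        rw [sq, mul_assoc]; gcongr
      have a2 : B2 * |m - x| * |y - m| ≤ B2 * (2 * η) * |y - m| := by
        gcongr; linarith
      calc |u| ≤ _ := hu1
        _ ≤ B1 * (2 * η) * |y - m| + B2 * (2 * η) * |y - m| := by linarith
        _ = _ := by rw [hB]; ring
    have s3 : u^2 ≤ (B * (2 * η) * |y - m|)^2 := by rw [← sq_abs]; gcongr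
    have s4 : (B * (2 * η) * |y - m|)^2 = 4 * B^2 * η^2 * (y - m)^2 := by
      rw [mul_pow, sq_abs]; ring
    have s5 : 4 * B^2 * η^2 * (y - m)^2 ≤ 4 * B^2 * η * (y - m)^2 := by
      gcongr; nlinarith
    linarith

/-- variance of the linearisation error is negligible -/
theorem vare_lim {f0 f1 : ℝ → ℝ} {c K : ℝ} (h0 : Good f0 c K) (h1 : Good f1 c K) {ε : ℝ} (hε : 0 < ε) :
    ∃ N0 : ℕ, ∀ N ≥ N0, ∀ t ∈ Icc (0:ℝ) 1, ∀ x ∈ Ioo (0:ℝ) 1,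
      N * Cv (pp f0 f1 N t (G1 (mix f0 f1 t) x)) N
        (fun k => bb f0 f1 N k - deriv (f1 - f0) x * al N k)
        (fun k => bb f0 f1 N k - deriv (f1 - f0) x * al N k) ≤ ε := by
  have hsm := h1.smooth.sub h0.smooth
  obtain ⟨B1, pB1, hd, hB1⟩ := taylor_smooth hsm
  obtain ⟨B2, pB2, hB2⟩ := lip_of_taylor (cd_deriv hsm)
  change ∀ x ∈ Icc (0:ℝ) 1, |deriv (f1 - f0) x| ≤ B1 at hd
  change ∀ x ∈ Icc (0:ℝ) 1, ∀ y ∈ Icc (0:ℝ) 1, |(f1 - f0) y - (f1 - f0) x - deriv (f1 - f0) x * (y - x)| ≤ B1 * (y - x)^2 at hB1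
  change ∀ x ∈ Icc (0:ℝ) 1, ∀ y ∈ Icc (0:ℝ) 1, |deriv (f1 - f0) y - deriv (f1 - f0) x| ≤ B2 * |y - x| at hB2
  set h := f1 - f0 with hh
  set B := B1 + B2 with hB
  have pB : 0 < B := by positivity
  have hc := h0.cpos
  set V := 1 / c + 1 with hV
  have pV : 0 < V := by positivity
  set η := min 1 (ε / (8 * B^2 * V * 3)) with hη
  have pη : 0 < η := by positivity
  have η1 : η ≤ 1 := min_le_left _ _
  have η2 : 8 * B^2 * V * η ≤ ε / 3 := by
    have : η ≤ ε / (8 * B^2 * V * 3) := min_le_right _ _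
    rw [le_div_iff₀ (by positivity)] at this
    linarith
  obtain ⟨N1, hN1⟩ := tail_lim h0 h1 (η := η) (ε := ε / (2 * B^2 * 3)) pη (by positivity)
  obtain ⟨N2, hN2⟩ := LL_sq_lim K (ε := ε / 6) (by positivity)
  obtain ⟨N3, hN3⟩ := mean_lim h0 h1 pη
  obtain ⟨N4, hN4⟩ := var_lim h0 h1 one_pos
  refine ⟨max (max N1 N2) (max (max N3 N4) 2), fun N hN t ht x hx => ?_⟩
  have g1 : N1 ≤ N := by simp at hN; omega
  have g2 : N2 ≤ N := by simp at hN; omega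
  have g3 : N3 ≤ N := by simp at hN; omega
  have g4 : N4 ≤ N := by simp at hN; omega
  have g5 : 2 ≤ N := by simp at hN; omega
  have hx' : x ∈ Icc (0:ℝ) 1 := ⟨hx.1.le, hx.2.le⟩
  have hN0 : (0:ℝ) < N := by exact_mod_cast (by omega : 0 < N)
  have hp := pp_prob f0 f1 N t (G1 (mix f0 f1 t) x)
  have T1 := hN1 N g1 t ht x hx
  have L := hN2 N g2
  have Mn := hN3 N g3 t ht x hx
  have Vr := hN4 N g4 t ht x hx
  have hm := Ex_al_mem hp (by omega : 1 ≤ N)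
  generalize hpe : pp f0 f1 N t (G1 (mix f0 f1 t) x) = p at *
  set m := Ex p N (al N) with hmdef
  set r := LL K N / N with hr
  have Veq : Ex p N (fun k => (al N k - m)^2) = Cv p N (al N) (al N) := by
    rw [Cv_al_eq hp m, Ex_sub, Ex_const hp]
    change _ = Ex p N (fun k => (al N k - m)^2) - (Ex p N (al N) - m)^2
    rw [← hmdef]; ring
  have key := Cv_self_le hp (fun k => bb f0 f1 N k - deriv h x * al N k) (h m - deriv h x * m)
  have pt : Ex p N (fun k => (bb f0 f1 N k - deriv h x * al N k - (h m - deriv h x * m))^2)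
     ≤ Ex p N (fun k => (2 * r^2 + 8 * B^2 * η * (al N k - m)^2) + 2 * B^2 * (if η < |(k:ℝ)/N - x| then 1 else 0)) := by
    apply Ex_mono hp
    intro k hk
    have i1 := bb_close h0 h1 g5 hk
    have hk' : al N k ∈ Icc (0:ℝ) 1 := grid_mem (by omega : 1 ≤ N) hk
    change |bb f0 f1 N k - h (al N k)| ≤ r at i1
    have i2 := hB1 m hm (al N k) hk'
    have i3 := hB2 x hx' m hm
    change _ ≤ (2 * r^2 + 8 * B^2 * η * (al N k - m)^2) + 2 * B^2 * (if η < |al N k - x| then 1 else 0)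
    exact vare_pt pB1 pB2 pη η1 hk' hm hx' Mn i1 i2 i3
  rw [Ex_add, Ex_add, Ex_const hp, Ex_smul, Ex_smul, Veq] at pt
  change _ ≤ _ + 2 * B^2 * Tl p N x η at pt
  have tot := mul_le_mul_of_nonneg_left (key.trans pt) hN0.le
  refine tot.trans ?_
  have v1 : N * Cv p N (al N) (al N) ≤ V := by
    have := (abs_le.1 Vr).2
    have := (G2_inv_le h0 h1 ht hx).2
    linarith
  have v2 : 8 * B^2 * η * (N * Cv p N (al N) (al N)) ≤ 8 * B^2 * η * V := by gcongr
  rw [le_div_iff₀ (by positivity)] at T1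
  have : (N:ℝ) * (2 * r^2 + 8 * B^2 * η * Cv p N (al N) (al N) + 2 * B^2 * Tl p N x η)
    = 2 * (N * r^2) + 8 * B^2 * η * (N * Cv p N (al N) (al N)) + (N * Tl p N x η * (2 * B^2 * 3)) / 3 := by ring
  rw [this]
  linarith

theorem Cv_comb (p : ℕ → ℝ) (N : ℕ) (φ ψ : ℕ → ℝ) (a b : ℝ) :
    Cv p N (fun k => a * φ k + b * ψ k) (fun k => a * φ k + b * ψ k)
      = a^2 * Cv p N φ φ + 2 * a * b * Cv p N φ ψ + b^2 * Cv p N ψ ψ := by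
  unfold Cv
  have : Ex p N (fun k => (a * φ k + b * ψ k) * (a * φ k + b * ψ k)) =
     a^2 * Ex p N (fun k => φ k * φ k) + 2 * a * b * Ex p N (fun k => φ k * ψ k) + b^2 * Ex p N (fun k => ψ k * ψ k) := by
    rw [← Ex_smul, ← Ex_smul, ← Ex_smul, ← Ex_add, ← Ex_add]
    apply Ex_congr; intros; ring
  rw [this, Ex_add, Ex_smul, Ex_smul]
  ring

theorem Cv_lin (p : ℕ → ℝ) (N : ℕ) (φ ψ : ℕ → ℝ) (q : ℝ) :
    Cv p N φ (fun k => ψ k - q * φ k) = Cv p N φ ψ - q * Cv p N φ φ := by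
  unfold Cv
  have : Ex p N (fun k => φ k * (ψ k - q * φ k)) = Ex p N (fun k => φ k * ψ k) - q * Ex p N (fun k => φ k * φ k) := by
    rw [← Ex_smul, ← Ex_sub]
    apply Ex_congr; intros; ring
  rw [this, Ex_sub, Ex_smul]
  ring

theorem Cv_cs {p : ℕ → ℝ} {N : ℕ} (hp : Prob p N) (φ ψ : ℕ → ℝ) {θ : ℝ} (hθ : 0 < θ) :
    |2 * Cv p N φ ψ| ≤ θ * Cv p N φ φ + Cv p N ψ ψ / θ := by
  have a := Cv_self_nonneg hp (fun k => θ * φ k + 1 * ψ k)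
  have b := Cv_self_nonneg hp (fun k => θ * φ k + (-1) * ψ k)
  rw [Cv_comb] at a b
  have e : θ * Cv p N φ φ + Cv p N ψ ψ / θ = (θ^2 * Cv p N φ φ + Cv p N ψ ψ) / θ := by field_simp
  rw [e, le_div_iff₀ hθ, ← abs_of_pos hθ, ← abs_mul, abs_of_pos hθ, abs_le]
  constructor <;> linarith

theorem cove_lim {f0 f1 : ℝ → ℝ} {c K : ℝ} (h0 : Good f0 c K) (h1 : Good f1 c K) {ε : ℝ} (hε : 0 < ε) :
    ∃ N0 : ℕ, ∀ N ≥ N0, ∀ t ∈ Icc (0:ℝ) 1, ∀ x ∈ Ioo (0:ℝ) 1,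
      |N * Cv (pp f0 f1 N t (G1 (mix f0 f1 t) x)) N (al N)
        (fun k => bb f0 f1 N k - deriv (f1 - f0) x * al N k)| ≤ ε := by
  have hc := h0.cpos
  set V := 1 / c + 1 with hV
  have pV : 0 < V := by positivity
  obtain ⟨N1, hN1⟩ := vare_lim h0 h1 (ε := ε^2 / V) (by positivity)
  obtain ⟨N4, hN4⟩ := var_lim h0 h1 one_pos
  refine ⟨max N1 (max N4 2), fun N hN t ht x hx => ?_⟩
  have g1 : N1 ≤ N := by simp at hN; omega
  have g4 : N4 ≤ N := by simp at hN; omega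
  have g5 : 2 ≤ N := by simp at hN; omega
  have hN0 : (0:ℝ) < N := by exact_mod_cast (by omega : 0 < N)
  have hp := pp_prob f0 f1 N t (G1 (mix f0 f1 t) x)
  have a := hN1 N g1 t ht x hx
  have Vr := hN4 N g4 t ht x hx
  generalize pp f0 f1 N t (G1 (mix f0 f1 t) x) = p at *
  have v1 : N * Cv p N (al N) (al N) ≤ V := by
    have := (abs_le.1 Vr).2
    have := (G2_inv_le h0 h1 ht hx).2
    linarith
  have k := Cv_cs hp (al N) (fun k => bb f0 f1 N k - deriv (f1 - f0) x * al N k) (θ := ε / V) (by positivity)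
  generalize Cv p N (fun k => bb f0 f1 N k - deriv (f1 - f0) x * al N k) (fun k => bb f0 f1 N k - deriv (f1 - f0) x * al N k) = S at *
  generalize Cv p N (al N) (fun k => bb f0 f1 N k - deriv (f1 - f0) x * al N k) = R at *
  generalize Cv p N (al N) (al N) = A at *
  have k2 := mul_le_mul_of_nonneg_left k hN0.le
  rw [abs_mul, abs_of_pos (by norm_num : (0:ℝ) < 2)] at k2
  rw [abs_mul, abs_of_pos hN0]
  have e1 : ε / V * (N * A) ≤ ε / V * V := by gcongr
  have e2 : (N * S) / (ε / V) ≤ ε^2 / V / (ε / V) := by gcongr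
  have e3 : ε / V * V = ε := by field_simp
  have e4 : ε^2 / V / (ε / V) = ε := by field_simp
  have e5 : (N:ℝ) * (ε / V * A + S / (ε / V)) = ε / V * (N * A) + (N * S) / (ε / V) := by ring
  linarith

theorem cov_lim {f0 f1 : ℝ → ℝ} {c K : ℝ} (h0 : Good f0 c K) (h1 : Good f1 c K) {ε : ℝ} (hε : 0 < ε) :
    ∃ N0 : ℕ, ∀ N ≥ N0, ∀ t ∈ Icc (0:ℝ) 1, ∀ x ∈ Ioo (0:ℝ) 1,
      |N * Cv (pp f0 f1 N t (G1 (mix f0 f1 t) x)) N (al N) (bb f0 f1 N)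
        - deriv (f1 - f0) x / G2 (mix f0 f1 t) x| ≤ ε := by
  obtain ⟨B, pB, hd, -⟩ := taylor_smooth (h1.smooth.sub h0.smooth)
  change ∀ x ∈ Icc (0:ℝ) 1, |deriv (f1 - f0) x| ≤ B at hd
  obtain ⟨N1, hN1⟩ := cove_lim h0 h1 (half_pos hε)
  obtain ⟨N2, hN2⟩ := var_lim h0 h1 (ε := ε / (2 * B)) (by positivity)
  refine ⟨max N1 N2, fun N hN t ht x hx => ?_⟩
  have a := hN1 N (le_trans (le_max_left _ _) hN) t ht x hx
  have b := hN2 N (le_trans (le_max_right _ _) hN) t ht x hx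
  have d := hd x ⟨hx.1.le, hx.2.le⟩
  rw [Cv_lin] at a
  generalize deriv (f1 - f0) x = q at *
  generalize Cv (pp f0 f1 N t (G1 (mix f0 f1 t) x)) N (al N) (bb f0 f1 N) = R at *
  generalize Cv (pp f0 f1 N t (G1 (mix f0 f1 t) x)) N (al N) (al N) = A at *
  have e : N * R - q / G2 (mix f0 f1 t) x = N * (R - q * A) + q * (N * A - 1 / G2 (mix f0 f1 t) x) := by ring
  rw [e]
  refine (abs_add_le _ _).trans ?_
  have : |q * (N * A - 1 / G2 (mix f0 f1 t) x)| ≤ B * (ε / (2 * B)) := by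
    rw [abs_mul]; gcongr
  have e3 : B * (ε / (2 * B)) = ε / 2 := by field_simp
  linarith

theorem varb_lim {f0 f1 : ℝ → ℝ} {c K : ℝ} (h0 : Good f0 c K) (h1 : Good f1 c K) {ε : ℝ} (hε : 0 < ε) :
    ∃ N0 : ℕ, ∀ N ≥ N0, ∀ t ∈ Icc (0:ℝ) 1, ∀ x ∈ Ioo (0:ℝ) 1,
      |N * Cv (pp f0 f1 N t (G1 (mix f0 f1 t) x)) N (bb f0 f1 N) (bb f0 f1 N)
        - (deriv (f1 - f0) x)^2 / G2 (mix f0 f1 t) x| ≤ ε := by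
  obtain ⟨B, pB, hd, -⟩ := taylor_smooth (h1.smooth.sub h0.smooth)
  change ∀ x ∈ Icc (0:ℝ) 1, |deriv (f1 - f0) x| ≤ B at hd
  obtain ⟨N1, hN1⟩ := cove_lim h0 h1 (ε := ε / (6 * B)) (by positivity)
  obtain ⟨N2, hN2⟩ := var_lim h0 h1 (ε := ε / (3 * B^2)) (by positivity)
  obtain ⟨N3, hN3⟩ := vare_lim h0 h1 (ε := ε / 3) (by positivity)
  refine ⟨max (max N1 N2) N3, fun N hN t ht x hx => ?_⟩
  have g1 : N1 ≤ N := by simp at hN; omega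
  have g2 : N2 ≤ N := by simp at hN; omega
  have g3 : N3 ≤ N := by simp at hN; omega
  have a := hN1 N g1 t ht x hx
  have b := hN2 N g2 t ht x hx
  have s := hN3 N g3 t ht x hx
  have d := hd x ⟨hx.1.le, hx.2.le⟩
  have hp := pp_prob f0 f1 N t (G1 (mix f0 f1 t) x)
  generalize pp f0 f1 N t (G1 (mix f0 f1 t) x) = p at *
  have snn := Cv_self_nonneg hp (fun k => bb f0 f1 N k - deriv (f1 - f0) x * al N k)
  have e : Cv p N (bb f0 f1 N) (bb f0 f1 N) = 
     (deriv (f1 - f0) x)^2 * Cv p N (al N) (al N) + 2 * deriv (f1 - f0) x * 1 * Cv p N (al N) (fun k => bb f0 f1 N k - deriv (f1 - f0) x * al N k)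
     + 1^2 * Cv p N (fun k => bb f0 f1 N k - deriv (f1 - f0) x * al N k) (fun k => bb f0 f1 N k - deriv (f1 - f0) x * al N k) := by
    rw [← Cv_comb]
    congr 1 <;> (ext k; ring)
  rw [e]
  generalize Cv p N (fun k => bb f0 f1 N k - deriv (f1 - f0) x * al N k) (fun k => bb f0 f1 N k - deriv (f1 - f0) x * al N k) = S at *
  generalize Cv p N (al N) (fun k => bb f0 f1 N k - deriv (f1 - f0) x * al N k) = R at *
  generalize Cv p N (al N) (al N) = A at *
  generalize deriv (f1 - f0) x = q at *
  have e : N * (q^2 * A + 2 * q * 1 * R + 1^2 * S) - q^2 / G2 (mix f0 f1 t) x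
      = q^2 * (N * A - 1 / G2 (mix f0 f1 t) x) + 2 * q * (N * R) + N * S := by ring
  rw [e]
  refine (abs_add_three _ _ _).trans ?_
  have i1 : |q^2 * (N * A - 1 / G2 (mix f0 f1 t) x)| ≤ B^2 * (ε / (3 * B^2)) := by
    rw [abs_mul, abs_pow]; gcongr
  have i2 : |2 * q * (N * R)| ≤ 2 * B * (ε / (6 * B)) := by
    rw [abs_mul, abs_mul, abs_two]; gcongr
  have e1 : B^2 * (ε / (3 * B^2)) = ε / 3 := by field_simp
  have e2 : 2 * B * (ε / (6 * B)) = ε / 3 := by field_simp; norm_num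
  have i3 : |N * S| ≤ ε / 3 := by rw [abs_of_nonneg (by positivity)]; exact s
  linarith


/-! derivatives of the partition function -/

theorem Ex_pp (f0 f1 : ℝ → ℝ) (N : ℕ) (t ρ : ℝ) (φ : ℕ → ℝ) :
    Ex (pp f0 f1 N t ρ) N φ = (∑ k ∈ Finset.range (N + 1), WW f0 f1 N t ρ k * φ k) / ZZ f0 f1 N t ρ := by
  unfold Ex pp
  rw [Finset.sum_div]
  apply Finset.sum_congr rfl; intros; ring

theorem Cv_smul_left (p : ℕ → ℝ) (N : ℕ) (a : ℝ) (φ ψ : ℕ → ℝ) :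
    Cv p N (fun k => a * φ k) ψ = a * Cv p N φ ψ := by
  unfold Cv
  rw [Ex_smul]
  have : Ex p N (fun k => a * φ k * ψ k) = a * Ex p N (fun k => φ k * ψ k) := by
    rw [← Ex_smul]; apply Ex_congr; intros; ring
  rw [this]; ring

theorem WW_dr (f0 f1 : ℝ → ℝ) (N : ℕ) (t ρ : ℝ) (k : ℕ) :
    HasDerivAt (fun r => WW f0 f1 N t r k) (WW f0 f1 N t ρ k * k) ρ := by
  unfold WW
  have := (((hasDerivAt_id ρ).const_mul (k:ℝ)).sub_const
    ((1 - t) * Real.log (MM f0 N k) + t * Real.log (MM f1 N k))).exp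
  simpa using this

theorem WW_dt (f0 f1 : ℝ → ℝ) {N : ℕ} (hN : 1 ≤ N) (t ρ : ℝ) (k : ℕ) :
    HasDerivAt (fun s => WW f0 f1 N s ρ k) (WW f0 f1 N t ρ k * (-N * bb f0 f1 N k)) t := by
  unfold WW
  have hN' : (N:ℝ) ≠ 0 := by exact_mod_cast (by omega : N ≠ 0)
  have := (((((hasDerivAt_id t).const_sub 1).mul_const (Real.log (MM f0 N k))).add
    ((hasDerivAt_id t).mul_const (Real.log (MM f1 N k)))).const_sub (k * ρ)).exp
  refine this.congr_deriv ?_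
  simp only [id, Pi.add_apply]
  unfold bb
  field_simp
  ring

theorem quot_deriv {N : ℕ} {w : ℝ → ℕ → ℝ} {ψ : ℕ → ℝ} {u : ℝ} (hw : ∀ k, HasDerivAt (fun v => w v k) (w u k * ψ k) u)
    (φ : ℕ → ℝ) : HasDerivAt (fun v => ∑ k ∈ Finset.range (N+1), w v k * φ k)
      (∑ k ∈ Finset.range (N+1), w u k * (ψ k * φ k)) u := by
  have := HasDerivAt.fun_sum (u := Finset.range (N+1)) (fun k _ => (hw k).mul_const (φ k))
  refine this.congr_deriv (Finset.sum_congr rfl fun k _ => by ring)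

theorem Ex_pp_deriv {N : ℕ} {w : ℝ → ℕ → ℝ} {ψ : ℕ → ℝ} {u : ℝ} (hpos : ∀ v k, 0 < w v k)
    (hw : ∀ k, HasDerivAt (fun v => w v k) (w u k * ψ k) u) (φ : ℕ → ℝ) {p : ℕ → ℝ}
    (hp : ∀ k, p k = w u k / ∑ k ∈ Finset.range (N+1), w u k) :
    HasDerivAt (fun v => (∑ k ∈ Finset.range (N+1), w v k * φ k) / (∑ k ∈ Finset.range (N+1), w v k)) (Cv p N ψ φ) u ∧
    HasDerivAt (fun v => Real.log (∑ k ∈ Finset.range (N+1), w v k)) (Ex p N ψ) u := by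
  have hE : ∀ χ : ℕ → ℝ, Ex p N χ = (∑ k ∈ Finset.range (N+1), w u k * χ k) / (∑ k ∈ Finset.range (N+1), w u k) := by
    intro χ
    unfold Ex
    rw [Finset.sum_div]
    apply Finset.sum_congr rfl; intro k _; rw [hp k]; ring
  have hZ : 0 < ∑ k ∈ Finset.range (N+1), w u k := Finset.sum_pos (fun k _ => hpos u k) ⟨0, by simp⟩
  have d1 := quot_deriv (N := N) hw φ
  have d2 := quot_deriv (N := N) hw (fun _ => 1)
  simp only [mul_one] at d2
  constructor
  · refine (d1.div d2 hZ.ne').congr_deriv ?_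
    unfold Cv
    rw [hE, hE, hE]
    field_simp
  · refine (d2.log hZ.ne').congr_deriv ?_
    rw [hE]

theorem Ex_dr (f0 f1 : ℝ → ℝ) {N : ℕ} (hN : 1 ≤ N) (t ρ : ℝ) (φ : ℕ → ℝ) :
    HasDerivAt (fun r => Ex (pp f0 f1 N t r) N φ) (N * Cv (pp f0 f1 N t ρ) N (al N) φ) ρ := by
  have hN' : (N:ℝ) ≠ 0 := by exact_mod_cast (by omega : N ≠ 0)
  have := (Ex_pp_deriv (N := N) (w := fun r k => WW f0 f1 N t r k) (fun v k => WW_pos _ _ _ _ _ _)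
    (WW_dr f0 f1 N t ρ) φ (p := pp f0 f1 N t ρ) (fun k => rfl)).1
  rw [← Cv_smul_left]
  have e : (fun k => (N:ℝ) * al N k) = (fun k : ℕ => (k:ℝ)) := by
    ext k; unfold al; field_simp
  rw [e]
  exact this.congr_of_eventuallyEq (Eventually.of_forall fun r => Ex_pp _ _ _ _ _ _)

theorem Ex_dt (f0 f1 : ℝ → ℝ) {N : ℕ} (hN : 1 ≤ N) (t ρ : ℝ) (φ : ℕ → ℝ) :
    HasDerivAt (fun s => Ex (pp f0 f1 N s ρ) N φ) (-N * Cv (pp f0 f1 N t ρ) N (bb f0 f1 N) φ) t := by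
  have := (Ex_pp_deriv (N := N) (w := fun s k => WW f0 f1 N s ρ k) (fun v k => WW_pos _ _ _ _ _ _)
    (WW_dt f0 f1 hN t ρ) φ (p := pp f0 f1 N t ρ) (fun k => rfl)).1
  rw [← Cv_smul_left]
  exact this.congr_of_eventuallyEq (Eventually.of_forall fun r => Ex_pp _ _ _ _ _ _)

theorem logZ_dr (f0 f1 : ℝ → ℝ) {N : ℕ} (hN : 1 ≤ N) (t ρ : ℝ) :
    HasDerivAt (fun r => Real.log (ZZ f0 f1 N t r)) (N * Ex (pp f0 f1 N t ρ) N (al N)) ρ := by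
  have hN' : (N:ℝ) ≠ 0 := by exact_mod_cast (by omega : N ≠ 0)
  have := (Ex_pp_deriv (N := N) (w := fun r k => WW f0 f1 N t r k) (fun v k => WW_pos _ _ _ _ _ _)
    (WW_dr f0 f1 N t ρ) (fun _ => 1) (p := pp f0 f1 N t ρ) (fun k => rfl)).2
  rw [← Ex_smul]
  have e : (fun k => (N:ℝ) * al N k) = (fun k : ℕ => (k:ℝ)) := by
    ext k; unfold al; field_simp
  rw [e]
  exact this

theorem logZ_dt (f0 f1 : ℝ → ℝ) {N : ℕ} (hN : 1 ≤ N) (t ρ : ℝ) :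
    HasDerivAt (fun s => Real.log (ZZ f0 f1 N s ρ)) (-N * Ex (pp f0 f1 N t ρ) N (bb f0 f1 N)) t := by
  have := (Ex_pp_deriv (N := N) (w := fun s k => WW f0 f1 N s ρ k) (fun v k => WW_pos _ _ _ _ _ _)
    (WW_dt f0 f1 hN t ρ) (fun _ => 1) (p := pp f0 f1 N t ρ) (fun k => rfl)).2
  rw [← Ex_smul]
  exact this

theorem logZ_smooth (f0 f1 : ℝ → ℝ) (N : ℕ) :
    ContDiff ℝ (⊤ : ℕ∞) (fun q : ℝ × ℝ => Real.log (ZZ f0 f1 N q.1 q.2)) := by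
  apply ContDiff.log
  · unfold ZZ WW
    fun_prop
  · intro q; exact (ZZ_pos _ _ _ _ _).ne'


theorem mix_abs_ext {a b t M : ℝ} (ht : t ∈ Ioo (-1:ℝ) 2) (ha : |a| ≤ M) (hb : |b| ≤ M) :
    |(1 - t) * a + t * b| ≤ 4 * M := by
  have h1 : |1 - t| ≤ 2 := by rw [abs_le]; constructor <;> linarith [ht.1, ht.2]
  have h2 : |t| ≤ 2 := by rw [abs_le]; constructor <;> linarith [ht.1, ht.2]
  refine (abs_add_le _ _).trans ?_
  rw [abs_mul, abs_mul]
  have : |1 - t| * |a| ≤ 2 * M := by gcongr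
  have : |t| * |b| ≤ 2 * M := by gcongr
  linarith

theorem mix_good_ext {f0 f1 : ℝ → ℝ} {c K : ℝ} (h0 : Good f0 c K) (h1 : Good f1 c K) {t : ℝ}
    (ht : t ∈ Ioo (-(c / (4 * K))) (1 + c / (4 * K))) : Good (mix f0 f1 t) (c / 2) (4 * K) := by
  have hK := h0.hK
  have hc := h0.cpos
  have hc1 := c_le_one h0
  have hd : c / (4 * K) ≤ 1 := by rw [div_le_one (by positivity)]; linarith
  have hd2 : c / (4 * K) * (2 * K) = c / 2 := by field_simp; norm_num
  have t2 : t ∈ Ioo (-1:ℝ) 2 := ⟨by linarith [ht.1], by linarith [ht.2]⟩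
  have e1 := mix_deriv h0.smooth h1.smooth t
  have e2 := mix_deriv (cd_deriv h0.smooth) (cd_deriv h1.smooth) t
  have e3 := mix_deriv (cd_deriv (cd_deriv h0.smooth)) (cd_deriv (cd_deriv h1.smooth)) t
  refine ⟨mix_smooth h0.smooth h1.smooth t, by positivity, by linarith, ?_, ?_, ?_, ?_⟩
  · intro x hx
    have k : kap (mix f0 f1 t) x = (1 - t) * kap f0 x + t * kap f1 x := by
      unfold kap; rw [e1, e2]; unfold mix; ring
    have a0 := h0.lower x hx
    have a1 := h1.lower x hx
    have df : |kap f1 x - kap f0 x| ≤ 2 * K := by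
      have : kap f1 x - kap f0 x = x * (1 - x) * (deriv (deriv f1) x - deriv (deriv f0) x) := by unfold kap; ring
      rw [this, abs_mul]
      have i1 : |x * (1 - x)| ≤ 1 := by
        rw [abs_of_nonneg (mul_nonneg hx.1 (by linarith [hx.2]))]; nlinarith [hx.1, hx.2]
      have i2 : |deriv (deriv f1) x - deriv (deriv f0) x| ≤ 2 * K := by
        have := abs_sub (deriv (deriv f1) x) (deriv (deriv f0) x)
        linarith [h0.b2 x hx, h1.b2 x hx]
      have := mul_le_mul i1 i2 (abs_nonneg _) zero_le_one
      linarith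
    rw [k]
    set δ := c / (4 * K) with hδ
    obtain ⟨l, u⟩ := abs_le.1 df
    have pδ : 0 < δ := by positivity
    rcases le_total t 0 with h | h
    · have : (1 - t) * kap f0 x + t * kap f1 x = kap f0 x - (-t) * (kap f1 x - kap f0 x) * (-1) * (-1) := by ring
      have : (-t) * (kap f1 x - kap f0 x) ≤ δ * (2 * K) := by
        refine (mul_le_mul_of_nonneg_left u (by linarith)).trans ?_
        have := ht.1
        gcongr; linarith
      nlinarith
    · rcases le_total t 1 with h' | h'
      · nlinarith
      · have : (t - 1) * (-(kap f1 x - kap f0 x)) ≤ δ * (2 * K) := by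
          refine (mul_le_mul_of_nonneg_left (by linarith : -(kap f1 x - kap f0 x) ≤ 2 * K) (by linarith)).trans ?_
          have := ht.2
          gcongr; linarith
        nlinarith
  · intro x hx; rw [e1]; exact mix_abs_ext t2 (h0.b1 x hx) (h1.b1 x hx)
  · intro x hx; rw [e1, e2]; exact mix_abs_ext t2 (h0.b2 x hx) (h1.b2 x hx)
  · intro x hx; rw [e1, e2, e3]; exact mix_abs_ext t2 (h0.b3 x hx) (h1.b3 x hx)

/-! Legendre duality -/

theorem G1_strictMono {f : ℝ → ℝ} {c K : ℝ} (h : Good f c K) : StrictMonoOn (G1 f) (Ioo (0:ℝ) 1) := by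
  apply strictMonoOn_of_deriv_pos (convex_Ioo 0 1)
  · intro x hx; exact (G1_deriv h.smooth hx).continuousAt.continuousWithinAt
  · intro x hx
    rw [interior_Ioo] at hx
    rw [(G1_deriv h.smooth hx).deriv]
    exact lt_of_lt_of_le h.cpos (G2_ge h hx)

theorem G1_sig {f : ℝ → ℝ} (A : ℝ) : (1 + Real.exp (-A))⁻¹ ∈ Ioo (0:ℝ) 1 ∧
    G1 f (1 + Real.exp (-A))⁻¹ = A + deriv f (1 + Real.exp (-A))⁻¹ := by
  have e := Real.exp_pos (-A)
  have hx : (1 + Real.exp (-A))⁻¹ ∈ Ioo (0:ℝ) 1 := ⟨by positivity, inv_lt_one_of_one_lt₀ (by linarith)⟩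
  refine ⟨hx, ?_⟩
  have e2 : 1 - (1 + Real.exp (-A))⁻¹ = Real.exp (-A) * (1 + Real.exp (-A))⁻¹ := by field_simp; ring
  unfold G1
  rw [e2, Real.log_mul e.ne' hx.1.ne', Real.log_exp]
  ring

theorem G1_surj {f : ℝ → ℝ} {c K : ℝ} (h : Good f c K) (ρ : ℝ) : ∃ x ∈ Ioo (0:ℝ) 1, G1 f x = ρ := by
  have hK := h.hK
  obtain ⟨m1, e1⟩ := G1_sig (f := f) (ρ - K)
  obtain ⟨m2, e2⟩ := G1_sig (f := f) (ρ + K)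
  set x1 := (1 + Real.exp (-(ρ - K)))⁻¹
  set x2 := (1 + Real.exp (-(ρ + K)))⁻¹
  have b1 := abs_le.1 (h.b1 x1 ⟨m1.1.le, m1.2.le⟩)
  have b2 := abs_le.1 (h.b1 x2 ⟨m2.1.le, m2.2.le⟩)
  have hc : ContinuousOn (G1 f) (Ioo (0:ℝ) 1) := fun x hx => (G1_deriv h.smooth hx).continuousAt.continuousWithinAt
  have := (isPreconnected_Ioo (a := (0:ℝ)) (b := 1)).intermediate_value m1 m2 hc
  obtain ⟨x, hx, e⟩ := this (⟨by linarith [b1.2], by linarith [b2.1]⟩ : ρ ∈ Icc (G1 f x1) (G1 f x2))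
  exact ⟨x, hx, e⟩

theorem Leg_eq {f : ℝ → ℝ} {c K : ℝ} (h : Good f c K) {x : ℝ} (hx : x ∈ Ioo (0:ℝ) 1) :
    Leg (GG f) (Icc 0 1) (G1 f x) = UU f x := by
  unfold Leg
  apply IsGreatest.csSup_eq
  constructor
  · exact ⟨x, ⟨hx.1.le, hx.2.le⟩, rfl⟩
  · rintro _ ⟨α, hα, rfl⟩
    have a := Phase_lower h hα hx
    rw [Phase_eq h.smooth α hx] at a
    have : 0 ≤ c / 2 * (α - x)^2 := by have := h.cpos; positivity
    unfold UU
    simp only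
    linarith

theorem Ecal_eq {f0 f1 : ℝ → ℝ} (h0 : ContDiff ℝ (⊤ : ℕ∞) f0) (h1 : ContDiff ℝ (⊤ : ℕ∞) f1) {N : ℕ} (hN : 1 ≤ N) (t ρ : ℝ) :
    Ecal f0 f1 N t ρ = Real.exp (-(N * Leg (GG (mix f0 f1 t)) (Icc 0 1) ρ)) / (2 * Real.pi) * ZZ f0 f1 N t ρ := by
  have hN' : (N:ℝ) ≠ 0 := by exact_mod_cast (by omega : N ≠ 0)
  unfold Ecal ZZ
  rw [Finset.mul_sum]
  apply Finset.sum_congr rfl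
  intro k hk
  have hk' : k ≤ N := by simpa [Nat.lt_succ_iff] using hk
  have g0 : Gt f0 f1 0 = GG f0 := by ext x; simp [Gt, GG]
  have g1 : Gt f0 f1 1 = GG f1 := by ext x; simp [Gt, GG]
  rw [g0, g1, Gt_eq, QQ_eq h0 hN hk', QQ_eq h1 hN hk']
  have p0 := MM_pos h0 N k
  have p1 := MM_pos h1 N k
  have pi := Real.pi_pos
  rw [Real.mul_rpow (by positivity) p0.le, Real.mul_rpow (by positivity) p1.le]
  have e : (2 * Real.pi) ^ (1 - t) * MM f0 N k ^ (1 - t) * ((2 * Real.pi) ^ t * MM f1 N k ^ t)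
     = (2 * Real.pi) * (MM f0 N k ^ (1 - t) * MM f1 N k ^ t) := by
    have : (2 * Real.pi) ^ (1 - t) * (2 * Real.pi) ^ t = 2 * Real.pi := by
      rw [← Real.rpow_add (by positivity)]; simp
    linear_combination (MM f0 N k ^ (1 - t) * MM f1 N k ^ t) * this
  rw [e, Real.rpow_def_of_pos p0, Real.rpow_def_of_pos p1, ← Real.exp_add, div_mul_eq_div_div,
    div_right_comm, ← Real.exp_sub]
  unfold WW
  rw [div_mul_eq_mul_div (Real.exp _), ← Real.exp_add]
  congr 2
  field_simp
  ring

theorem logE_eq {f0 f1 : ℝ → ℝ} (h0 : ContDiff ℝ (⊤ : ℕ∞) f0) (h1 : ContDiff ℝ (⊤ : ℕ∞) f1) {N : ℕ} (hN : 1 ≤ N) (t ρ : ℝ) :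
    (1 / (N:ℝ)) * Real.log (Ecal f0 f1 N t ρ) = (1 / (N:ℝ)) * (Real.log (ZZ f0 f1 N t ρ) - Real.log (2 * Real.pi))
      - Leg (GG (mix f0 f1 t)) (Icc 0 1) ρ := by
  have hN' : (N:ℝ) ≠ 0 := by exact_mod_cast (by omega : N ≠ 0)
  have pi := Real.pi_pos
  rw [Ecal_eq h0 h1 hN, Real.log_mul (by positivity) (ZZ_pos _ _ _ _ _).ne',
    Real.log_div (Real.exp_pos _).ne' (by positivity), Real.log_exp]
  field_simp
  ring


open Classical in
/-- the inverse of the gradient map -/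
noncomputable def XX (f0 f1 : ℝ → ℝ) (t ρ : ℝ) : ℝ :=
  if h : ∃ x, x ∈ Ioo (0:ℝ) 1 ∧ G1 (mix f0 f1 t) x = ρ then Classical.choose h else 0

/-- the extended time interval -/
def TT (c K : ℝ) : Set ℝ := Ioo (-(c / (4 * K))) (1 + c / (4 * K))

theorem TT_open (c K : ℝ) : IsOpen (TT c K) := isOpen_Ioo

theorem TT_mem {f0 : ℝ → ℝ} {c K : ℝ} (h0 : Good f0 c K) {t : ℝ} (ht : t ∈ Icc (0:ℝ) 1) : t ∈ TT c K := by
  have := h0.cpos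
  have := h0.hK
  have : 0 < c / (4 * K) := by positivity
  exact ⟨by linarith [ht.1], by linarith [ht.2]⟩

section
variable {f0 f1 : ℝ → ℝ} {c K : ℝ}

theorem XX_spec (h0 : Good f0 c K) (h1 : Good f1 c K) {t : ℝ} (ht : t ∈ TT c K) (ρ : ℝ) :
    XX f0 f1 t ρ ∈ Ioo (0:ℝ) 1 ∧ G1 (mix f0 f1 t) (XX f0 f1 t ρ) = ρ := by
  have h : ∃ x, x ∈ Ioo (0:ℝ) 1 ∧ G1 (mix f0 f1 t) x = ρ := by
    obtain ⟨x, hx, e⟩ := G1_surj (mix_good_ext h0 h1 ht) ρ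
    exact ⟨x, hx, e⟩
  unfold XX
  rw [dif_pos h]
  exact Classical.choose_spec h

theorem XX_unique (h0 : Good f0 c K) (h1 : Good f1 c K) {t : ℝ} (ht : t ∈ TT c K) {ρ x : ℝ} (hx : x ∈ Ioo (0:ℝ) 1)
    (e : G1 (mix f0 f1 t) x = ρ) : XX f0 f1 t ρ = x := by
  obtain ⟨a, b⟩ := XX_spec h0 h1 ht ρ
  exact (G1_strictMono (mix_good_ext h0 h1 ht)).injOn a hx (b.trans e.symm)

theorem XX_smooth (h0 : Good f0 c K) (h1 : Good f1 c K) {q : ℝ × ℝ} (ht : q.1 ∈ TT c K) :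
    ContDiffAt ℝ (⊤ : ℕ∞) (fun q : ℝ × ℝ => XX f0 f1 q.1 q.2) q := by
  obtain ⟨t, ρ⟩ := q
  simp only at ht
  obtain ⟨hx, hxe⟩ := XX_spec h0 h1 ht ρ
  set x := XX f0 f1 t ρ with hxdef
  have hx1 : 1 - x ≠ 0 := by linarith [hx.2]
  let P2 : ℝ × ℝ → ℝ := fun z => Real.log z.2 - Real.log (1 - z.2) + ((1 - z.1) * deriv f0 z.2 + z.1 * deriv f1 z.2)
  have P2e : ∀ z : ℝ × ℝ, P2 z = G1 (mix f0 f1 z.1) z.2 := by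
    intro z
    unfold G1
    rw [mix_deriv h0.smooth h1.smooth]
    rfl
  have sm : ContDiffAt ℝ (⊤ : ℕ∞) P2 (t, x) := by
    have a0 := cd_deriv h0.smooth
    have a1 := cd_deriv h1.smooth
    apply ContDiffAt.add
    · apply ContDiffAt.sub
      · exact contDiffAt_snd.log hx.1.ne'
      · exact (contDiffAt_const.sub contDiffAt_snd).log hx1
    · fun_prop
  have dP2 := (sm.differentiableAt (by simp)).hasFDerivAt
  set L := fderiv ℝ P2 (t, x) with hL
  have g : L (0, 1) = G2 (mix f0 f1 t) x := by
    have i : HasDerivAt (fun y : ℝ => ((t, y) : ℝ × ℝ)) (0, 1) x := (hasDerivAt_const x t).prodMk (hasDerivAt_id x)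
    have a := dP2.comp_hasDerivAt x i
    have b := G1_deriv (mix_smooth h0.smooth h1.smooth t) hx
    have : (P2 ∘ fun y : ℝ => ((t, y) : ℝ × ℝ)) = G1 (mix f0 f1 t) := by ext y; exact P2e (t, y)
    rw [this] at a
    exact a.unique b
  have gpos : 0 < L (0, 1) := by
    rw [g]
    have := G2_ge (mix_good_ext h0 h1 ht) hx
    have := h0.cpos
    linarith
  have Lv : ∀ v w : ℝ, L (v, w) = v * L (1, 0) + w * L (0, 1) := by
    intro v w
    have : ((v, w) : ℝ × ℝ) = v • (1, 0) + w • (0, 1) := by simp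
    rw [this, map_add, map_smul, map_smul]; rfl
  let A : ℝ × ℝ →L[ℝ] ℝ × ℝ := (ContinuousLinearMap.fst ℝ ℝ ℝ).prod L
  let Bm : ℝ × ℝ →L[ℝ] ℝ × ℝ := (ContinuousLinearMap.fst ℝ ℝ ℝ).prod
    ((L (0,1))⁻¹ • (ContinuousLinearMap.snd ℝ ℝ ℝ - L (1, 0) • ContinuousLinearMap.fst ℝ ℝ ℝ))
  have l1 : Function.LeftInverse Bm A := by
    rintro ⟨v, w⟩
    change (v, (L (0,1))⁻¹ • (L (v, w) - L (1, 0) • v)) = (v, w)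
    rw [Lv v w]
    simp only [smul_eq_mul, Prod.mk.injEq, true_and]
    field_simp
    ring
  have l2 : Function.RightInverse Bm A := by
    rintro ⟨v, w⟩
    change (v, L (v, (L (0,1))⁻¹ • (w - L (1, 0) • v))) = (v, w)
    rw [Lv]
    simp only [smul_eq_mul, Prod.mk.injEq, true_and]
    field_simp
    ring
  let e : (ℝ × ℝ) ≃L[ℝ] (ℝ × ℝ) := ContinuousLinearEquiv.equivOfInverse A Bm l1 l2
  let P : ℝ × ℝ → ℝ × ℝ := fun z => (z.1, P2 z)
  have smP : ContDiffAt ℝ (⊤ : ℕ∞) P (t, x) := contDiffAt_fst.prodMk sm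
  have dP : HasFDerivAt P (e : ℝ × ℝ →L[ℝ] ℝ × ℝ) (t, x) := hasFDerivAt_fst.prodMk dP2
  have hn : ((⊤ : ℕ∞) : WithTop ℕ∞) ≠ 0 := by simp
  have Pe : P (t, x) = (t, ρ) := by
    change (t, P2 (t, x)) = (t, ρ)
    rw [P2e, hxe]
  have inv := smP.to_localInverse dP hn
  have r1 := (smP.hasStrictFDerivAt' dP hn).eventually_right_inverse
  have r2 := (smP.hasStrictFDerivAt' dP hn).localInverse_tendsto
  rw [Pe] at inv r1 r2
  change ∀ᶠ y in nhds (t, ρ), P (smP.localInverse dP hn y) = y at r1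
  change Tendsto (smP.localInverse dP hn) _ _ at r2
  have op : ∀ᶠ z : ℝ × ℝ in nhds (t, x), z.1 ∈ TT c K ∧ z.2 ∈ Ioo (0:ℝ) 1 := by
    have := ((TT_open c K).prod (isOpen_Ioo (a := (0:ℝ)) (b := 1))).mem_nhds (⟨ht, hx⟩ : (t, x) ∈ _ ×ˢ _)
    exact this
  have r3 := r2.eventually op
  have inv2 := inv.snd
  refine inv2.congr_of_eventuallyEq ?_
  filter_upwards [r1, r3] with y hy1 hy3
  generalize smP.localInverse dP hn y = z at hy1 hy3 ⊢
  have a1 : z.1 = y.1 := by have := congrArg Prod.fst hy1; exact this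
  have a2 : P2 z = y.2 := by have := congrArg Prod.snd hy1; exact this
  rw [P2e, a1] at a2
  exact XX_unique h0 h1 (a1 ▸ hy3.1) hy3.2 a2

theorem XX_dr (h0 : Good f0 c K) (h1 : Good f1 c K) {t : ℝ} (ht : t ∈ TT c K) (ρ : ℝ) :
    HasDerivAt (fun r => XX f0 f1 t r) (1 / G2 (mix f0 f1 t) (XX f0 f1 t ρ)) ρ := by
  have hd : DifferentiableAt ℝ (fun r => XX f0 f1 t r) ρ := by
    have := (XX_smooth h0 h1 (q := (t, ρ)) ht).differentiableAt (by simp)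
    exact this.comp ρ ((differentiableAt_const t).prodMk differentiableAt_id)
  have d := hd.hasDerivAt
  obtain ⟨hx, e⟩ := XX_spec h0 h1 ht ρ
  have g := (G1_deriv (mix_smooth h0.smooth h1.smooth t) hx).comp ρ d
  have : (G1 (mix f0 f1 t) ∘ fun r => XX f0 f1 t r) = id := by
    ext r; exact (XX_spec h0 h1 ht r).2
  rw [this] at g
  have u := g.unique (hasDerivAt_id ρ)
  have gp : 0 < G2 (mix f0 f1 t) (XX f0 f1 t ρ) := by
    have := G2_ge (mix_good_ext h0 h1 ht) hx
    have := h0.cpos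
    linarith
  refine d.congr_deriv ?_
  rw [eq_div_iff gp.ne']; linarith

theorem XX_dt (h0 : Good f0 c K) (h1 : Good f1 c K) {t : ℝ} (ht : t ∈ TT c K) (ρ : ℝ) :
    HasDerivAt (fun s => XX f0 f1 s ρ) (-(deriv (f1 - f0) (XX f0 f1 t ρ) / G2 (mix f0 f1 t) (XX f0 f1 t ρ))) t := by
  have hd : DifferentiableAt ℝ (fun s => XX f0 f1 s ρ) t := by
    have := (XX_smooth h0 h1 (q := (t, ρ)) ht).differentiableAt (by simp)
    exact this.comp (f := fun s => ((s, ρ) : ℝ × ℝ)) t (differentiableAt_id.prodMk (differentiableAt_const ρ))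
  have d := hd.hasDerivAt
  set D := deriv (fun s => XX f0 f1 s ρ) t with hD
  obtain ⟨hx, e⟩ := XX_spec h0 h1 ht ρ
  set x := XX f0 f1 t ρ with hxd
  have a0 := (G1_deriv h0.smooth hx).comp t d
  have a1 := (G1_deriv h1.smooth hx).comp t d
  have g := (((hasDerivAt_id t).const_sub 1).mul a0).add ((hasDerivAt_id t).mul a1)
  have ev : (fun _ => ρ) =ᶠ[nhds t] (fun s => (1 - s) * G1 f0 (XX f0 f1 s ρ) + s * G1 f1 (XX f0 f1 s ρ)) := by
    filter_upwards [(TT_open c K).mem_nhds ht] with s hs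
    rw [← G1_mix h0.smooth h1.smooth]
    exact (XX_spec h0 h1 hs ρ).2.symm
  have g2 := HasDerivAt.congr_of_eventuallyEq g (f₁ := fun _ => ρ) ev
  have u := g2.unique (hasDerivAt_const t ρ)
  simp only [id, Function.comp] at u
  rw [← hxd] at u
  have gp : 0 < G2 (mix f0 f1 t) x := by
    have := G2_ge (mix_good_ext h0 h1 ht) hx
    have := h0.cpos
    linarith
  have dh : deriv (f1 - f0) x = G1 f1 x - G1 f0 x := by
    rw [deriv_sub (cd_hasDeriv h1.smooth x).differentiableAt (cd_hasDeriv h0.smooth x).differentiableAt]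
    unfold G1; ring
  refine d.congr_deriv ?_
  rw [eq_neg_iff_add_eq_zero, dh]
  have : D * G2 (mix f0 f1 t) x + (G1 f1 x - G1 f0 x) = 0 := by
    rw [G2_mix h0.smooth h1.smooth]
    linear_combination u
  field_simp
  linarith

/-- the Legendre transform -/
noncomputable def Lg (f0 f1 : ℝ → ℝ) (t ρ : ℝ) : ℝ := Leg (GG (mix f0 f1 t)) (Icc 0 1) ρ

theorem Lg_eq (h0 : Good f0 c K) (h1 : Good f1 c K) {t : ℝ} (ht : t ∈ TT c K) (ρ : ℝ) :
    Lg f0 f1 t ρ = XX f0 f1 t ρ * ρ - ((1 - t) * GG f0 (XX f0 f1 t ρ) + t * GG f1 (XX f0 f1 t ρ)) := by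
  obtain ⟨hx, e⟩ := XX_spec h0 h1 ht ρ
  have := Leg_eq (mix_good_ext h0 h1 ht) hx
  rw [e] at this
  unfold Lg
  rw [this]
  unfold UU
  rw [e]
  unfold GG mix
  ring

theorem GG_smooth {f : ℝ → ℝ} (h : ContDiff ℝ (⊤ : ℕ∞) f) {x : ℝ} (hx : x ∈ Ioo (0:ℝ) 1) :
    ContDiffAt ℝ (⊤ : ℕ∞) (GG f) x := by
  have h1 : 1 - x ≠ 0 := by linarith [hx.2]
  have : ContDiffAt ℝ (⊤ : ℕ∞) GP x := by
    unfold GP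
    apply ContDiffAt.add
    · exact contDiffAt_id.mul (contDiffAt_id.log hx.1.ne')
    · exact (contDiffAt_const.sub contDiffAt_id).mul ((contDiffAt_const.sub contDiffAt_id).log h1)
  exact this.add h.contDiffAt

theorem Lg_smooth (h0 : Good f0 c K) (h1 : Good f1 c K) {q : ℝ × ℝ} (ht : q.1 ∈ TT c K) :
    ContDiffAt ℝ (⊤ : ℕ∞) (fun q : ℝ × ℝ => Lg f0 f1 q.1 q.2) q := by
  have hX := XX_smooth h0 h1 ht
  have hx := (XX_spec h0 h1 ht q.2).1
  have s0 := (GG_smooth h0.smooth hx).comp q hX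
  have s1 := (GG_smooth h1.smooth hx).comp q hX
  have tot := (hX.mul contDiffAt_snd).sub (((contDiffAt_const (c := (1:ℝ))).sub contDiffAt_fst).mul s0 |>.add (contDiffAt_fst.mul s1))
  refine tot.congr_of_eventuallyEq ?_
  have : ∀ᶠ z : ℝ × ℝ in nhds q, z.1 ∈ TT c K := continuousAt_fst.eventually ((TT_open c K).mem_nhds ht)
  filter_upwards [this] with z hz
  exact Lg_eq h0 h1 hz z.2

theorem Lg_dr (h0 : Good f0 c K) (h1 : Good f1 c K) {t : ℝ} (ht : t ∈ TT c K) (ρ : ℝ) :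
    HasDerivAt (fun r => Lg f0 f1 t r) (XX f0 f1 t ρ) ρ := by
  obtain ⟨hx, e⟩ := XX_spec h0 h1 ht ρ
  have d := XX_dr h0 h1 ht ρ
  have a0 := (GG_deriv h0.smooth hx).comp ρ d
  have a1 := (GG_deriv h1.smooth hx).comp ρ d
  have tot := (d.mul (hasDerivAt_id ρ)).sub ((a0.const_mul (1 - t)).add (a1.const_mul t))
  have eqf : (fun r => Lg f0 f1 t r) = fun r => XX f0 f1 t r * r - ((1 - t) * GG f0 (XX f0 f1 t r) + t * GG f1 (XX f0 f1 t r)) := by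
    ext r; exact Lg_eq h0 h1 ht r
  rw [eqf]
  refine tot.congr_deriv ?_
  rw [G1_mix h0.smooth h1.smooth] at e
  simp only [id]
  generalize 1 / G2 (mix f0 f1 t) (XX f0 f1 t ρ) = w
  linear_combination (-w) * e

theorem Lg_dt (h0 : Good f0 c K) (h1 : Good f1 c K) {t : ℝ} (ht : t ∈ TT c K) (ρ : ℝ) :
    HasDerivAt (fun s => Lg f0 f1 s ρ) (-(f1 (XX f0 f1 t ρ) - f0 (XX f0 f1 t ρ))) t := by
  obtain ⟨hx, e⟩ := XX_spec h0 h1 ht ρ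
  have d := XX_dt h0 h1 ht ρ
  have a0 := (GG_deriv h0.smooth hx).comp t d
  have a1 := (GG_deriv h1.smooth hx).comp t d
  have tot := (d.mul_const ρ).sub ((((hasDerivAt_id t).const_sub 1).mul a0).add ((hasDerivAt_id t).mul a1))
  have ev : (fun s => Lg f0 f1 s ρ) =ᶠ[nhds t] fun s => XX f0 f1 s ρ * ρ - ((1 - s) * GG f0 (XX f0 f1 s ρ) + s * GG f1 (XX f0 f1 s ρ)) := by
    filter_upwards [(TT_open c K).mem_nhds ht] with s hs
    exact Lg_eq h0 h1 hs ρ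
  refine (HasDerivAt.congr_of_eventuallyEq tot ev).congr_deriv ?_
  rw [G1_mix h0.smooth h1.smooth] at e
  simp only [id, Function.comp]
  unfold GG
  generalize -(deriv (f1 - f0) (XX f0 f1 t ρ) / G2 (mix f0 f1 t) (XX f0 f1 t ρ)) = w
  linear_combination (-w) * e

end


/-- the normalised logarithm -/
noncomputable def FF (f0 f1 : ℝ → ℝ) (N : ℕ) (t ρ : ℝ) : ℝ := (1 / (N:ℝ)) * Real.log (Ecal f0 f1 N t ρ)

section
variable {f0 f1 : ℝ → ℝ} {c K : ℝ}

theorem FF_eq (h0 : Good f0 c K) (h1 : Good f1 c K) {N : ℕ} (hN : 1 ≤ N) (t ρ : ℝ) :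
    FF f0 f1 N t ρ = (1 / (N:ℝ)) * (Real.log (ZZ f0 f1 N t ρ) - Real.log (2 * Real.pi)) - Lg f0 f1 t ρ :=
  logE_eq h0.smooth h1.smooth hN t ρ

theorem FF_dr (h0 : Good f0 c K) (h1 : Good f1 c K) {N : ℕ} (hN : 1 ≤ N) {t : ℝ} (ht : t ∈ TT c K) (ρ : ℝ) :
    HasDerivAt (fun r => FF f0 f1 N t r) (Ex (pp f0 f1 N t ρ) N (al N) - XX f0 f1 t ρ) ρ := by
  have hN' : (N:ℝ) ≠ 0 := by exact_mod_cast (by omega : N ≠ 0)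
  have e : (fun r => FF f0 f1 N t r) = fun r => (1 / (N:ℝ)) * (Real.log (ZZ f0 f1 N t r) - Real.log (2 * Real.pi)) - Lg f0 f1 t r := by
    ext r; exact FF_eq h0 h1 hN t r
  rw [e]
  refine ((((logZ_dr f0 f1 hN t ρ).sub_const _).const_mul _).sub (Lg_dr h0 h1 ht ρ)).congr_deriv ?_
  field_simp

theorem FF_dt (h0 : Good f0 c K) (h1 : Good f1 c K) {N : ℕ} (hN : 1 ≤ N) {t : ℝ} (ht : t ∈ TT c K) (ρ : ℝ) :
    HasDerivAt (fun s => FF f0 f1 N s ρ) (-Ex (pp f0 f1 N t ρ) N (bb f0 f1 N) + (f1 (XX f0 f1 t ρ) - f0 (XX f0 f1 t ρ))) t := by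
  have hN' : (N:ℝ) ≠ 0 := by exact_mod_cast (by omega : N ≠ 0)
  have e : (fun s => FF f0 f1 N s ρ) = fun s => (1 / (N:ℝ)) * (Real.log (ZZ f0 f1 N s ρ) - Real.log (2 * Real.pi)) - Lg f0 f1 s ρ := by
    ext r; exact FF_eq h0 h1 hN r ρ
  rw [e]
  refine ((((logZ_dt f0 f1 hN t ρ).sub_const _).const_mul _).sub (Lg_dt h0 h1 ht ρ)).congr_deriv ?_
  field_simp
  ring

theorem FF_drr (h0 : Good f0 c K) (h1 : Good f1 c K) {N : ℕ} (hN : 1 ≤ N) {t : ℝ} (ht : t ∈ TT c K) (ρ : ℝ) :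
    deriv (deriv (fun r => FF f0 f1 N t r)) ρ
      = N * Cv (pp f0 f1 N t ρ) N (al N) (al N) - 1 / G2 (mix f0 f1 t) (XX f0 f1 t ρ) := by
  have e : deriv (fun r => FF f0 f1 N t r) = fun r => Ex (pp f0 f1 N t r) N (al N) - XX f0 f1 t r := by
    ext r; exact (FF_dr h0 h1 hN ht r).deriv
  rw [e]
  exact ((Ex_dr f0 f1 hN t ρ (al N)).sub (XX_dr h0 h1 ht ρ)).deriv

theorem FF_dtr (h0 : Good f0 c K) (h1 : Good f1 c K) {N : ℕ} (hN : 1 ≤ N) {t : ℝ} (ht : t ∈ TT c K) (ρ : ℝ) :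
    deriv (fun s => deriv (fun r => FF f0 f1 N s r) ρ) t
      = -(N * Cv (pp f0 f1 N t ρ) N (al N) (bb f0 f1 N) - deriv (f1 - f0) (XX f0 f1 t ρ) / G2 (mix f0 f1 t) (XX f0 f1 t ρ)) := by
  have e : (fun s => deriv (fun r => FF f0 f1 N s r) ρ) =ᶠ[nhds t] fun s => Ex (pp f0 f1 N s ρ) N (al N) - XX f0 f1 s ρ := by
    filter_upwards [(TT_open c K).mem_nhds ht] with s hs
    exact (FF_dr h0 h1 hN hs ρ).deriv
  rw [e.deriv_eq]
  refine ((Ex_dt f0 f1 hN t ρ (al N)).sub (XX_dt h0 h1 ht ρ)).deriv.trans ?_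
  have : Cv (pp f0 f1 N t ρ) N (bb f0 f1 N) (al N) = Cv (pp f0 f1 N t ρ) N (al N) (bb f0 f1 N) := by
    unfold Cv
    rw [mul_comm (Ex _ _ (al N))]
    congr 1
    apply Ex_congr; intros; ring
  rw [this]; ring

theorem FF_dtt (h0 : Good f0 c K) (h1 : Good f1 c K) {N : ℕ} (hN : 1 ≤ N) {t : ℝ} (ht : t ∈ TT c K) (ρ : ℝ) :
    deriv (deriv (fun s => FF f0 f1 N s ρ)) t
      = N * Cv (pp f0 f1 N t ρ) N (bb f0 f1 N) (bb f0 f1 N) - (deriv (f1 - f0) (XX f0 f1 t ρ))^2 / G2 (mix f0 f1 t) (XX f0 f1 t ρ) := by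
  have e : deriv (fun s => FF f0 f1 N s ρ) =ᶠ[nhds t] fun s => -Ex (pp f0 f1 N s ρ) N (bb f0 f1 N) + (f1 - f0) (XX f0 f1 s ρ) := by
    filter_upwards [(TT_open c K).mem_nhds ht] with s hs
    exact (FF_dt h0 h1 hN hs ρ).deriv
  rw [e.deriv_eq]
  have hc : HasDerivAt (fun s => (f1 - f0) (XX f0 f1 s ρ)) _ t :=
    (cd_hasDeriv (h1.smooth.sub h0.smooth) (XX f0 f1 t ρ)).comp t (XX_dt h0 h1 ht ρ)
  refine ((Ex_dt f0 f1 hN t ρ (bb f0 f1 N)).neg.add hc).deriv.trans ?_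
  change - (-N * Cv (pp f0 f1 N t ρ) N (bb f0 f1 N) (bb f0 f1 N)) + deriv (f1 - f0) (XX f0 f1 t ρ) * _ = _
  ring

theorem FF_smooth (h0 : Good f0 c K) (h1 : Good f1 c K) {N : ℕ} (hN : 1 ≤ N) :
    ContDiffOn ℝ (⊤ : ℕ∞) (fun q : ℝ × ℝ => FF f0 f1 N q.1 q.2) (Icc (0:ℝ) 1 ×ˢ (univ : Set ℝ)) := by
  intro q hq
  apply ContDiffAt.contDiffWithinAt
  have e : (fun q : ℝ × ℝ => FF f0 f1 N q.1 q.2) = fun q : ℝ × ℝ =>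
      (1 / (N:ℝ)) * (Real.log (ZZ f0 f1 N q.1 q.2) - Real.log (2 * Real.pi)) - Lg f0 f1 q.1 q.2 := by
    ext q; exact FF_eq h0 h1 hN _ _
  rw [e]
  exact (contDiffAt_const.mul ((logZ_smooth f0 f1 N).contDiffAt.sub contDiffAt_const)).sub
    (Lg_smooth h0 h1 (TT_mem h0 hq.1))

theorem main_good (h0 : Good f0 c K) (h1 : Good f1 c K) (a b : ℕ) (hab : a + b ≤ 2) (ε : ℝ) (hε : 0 < ε) :
    ∃ N₀ : ℕ, ∀ N : ℕ, N₀ ≤ N → ∀ t ∈ Icc (0:ℝ) 1, ∀ ρ : ℝ,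
        |iteratedDeriv a (fun s => iteratedDeriv b (fun r => FF f0 f1 N s r) ρ) t| < ε := by
  have h2 := half_pos hε
  have hlt : ε / 2 < ε := half_lt_self hε
  have cases : (a = 0 ∧ b = 0) ∨ (a = 0 ∧ b = 1) ∨ (a = 0 ∧ b = 2) ∨ (a = 1 ∧ b = 0) ∨ (a = 1 ∧ b = 1) ∨ (a = 2 ∧ b = 0) := by
    omega
  rcases cases with ⟨rfl, rfl⟩ | ⟨rfl, rfl⟩ | ⟨rfl, rfl⟩ | ⟨rfl, rfl⟩ | ⟨rfl, rfl⟩ | ⟨rfl, rfl⟩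
  · obtain ⟨N0, h⟩ := E00 h0 h1 hε
    refine ⟨max N0 1, fun N hN t ht ρ => ?_⟩
    have hN1 : 1 ≤ N := le_trans (le_max_right _ _) hN
    have hN' : (N:ℝ) ≠ 0 := by exact_mod_cast (by omega : N ≠ 0)
    obtain ⟨hx, e⟩ := XX_spec h0 h1 (TT_mem h0 ht) ρ
    have := h N (le_trans (le_max_left _ _) hN) t ht _ hx
    simp only [iteratedDeriv_zero]
    refine lt_of_eq_of_lt (congrArg _ ?_) this
    rw [FF_eq h0 h1 hN1]
    have l := Leg_eq (mix_good_ext h0 h1 (TT_mem h0 ht)) hx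
    rw [← l]
    simp only [e]
    unfold Lg
    field_simp
    ring
  · obtain ⟨N0, h⟩ := mean_lim h0 h1 h2
    refine ⟨max N0 1, fun N hN t ht ρ => lt_of_le_of_lt ?_ hlt⟩
    have hN1 : 1 ≤ N := le_trans (le_max_right _ _) hN
    obtain ⟨hx, e⟩ := XX_spec h0 h1 (TT_mem h0 ht) ρ
    have := h N (le_trans (le_max_left _ _) hN) t ht _ hx
    rw [e] at this
    simp only [iteratedDeriv_zero, iteratedDeriv_one]
    rwa [(FF_dr h0 h1 hN1 (TT_mem h0 ht) ρ).deriv]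
  · obtain ⟨N0, h⟩ := var_lim h0 h1 h2
    refine ⟨max N0 1, fun N hN t ht ρ => lt_of_le_of_lt ?_ hlt⟩
    have hN1 : 1 ≤ N := le_trans (le_max_right _ _) hN
    obtain ⟨hx, e⟩ := XX_spec h0 h1 (TT_mem h0 ht) ρ
    have := h N (le_trans (le_max_left _ _) hN) t ht _ hx
    rw [e] at this
    simp only [iteratedDeriv_zero, iteratedDeriv_succ]
    rwa [FF_drr h0 h1 hN1 (TT_mem h0 ht) ρ]
  · obtain ⟨N0, h⟩ := meanb_lim h0 h1 h2
    refine ⟨max N0 1, fun N hN t ht ρ => lt_of_le_of_lt ?_ hlt⟩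
    have hN1 : 1 ≤ N := le_trans (le_max_right _ _) hN
    obtain ⟨hx, e⟩ := XX_spec h0 h1 (TT_mem h0 ht) ρ
    have := h N (le_trans (le_max_left _ _) hN) t ht _ hx
    rw [e] at this
    simp only [iteratedDeriv_zero, iteratedDeriv_one]
    rw [(FF_dt h0 h1 hN1 (TT_mem h0 ht) ρ).deriv, ← abs_neg]
    refine le_of_eq_of_le (congrArg _ ?_) this
    ring
  · obtain ⟨N0, h⟩ := cov_lim h0 h1 h2
    refine ⟨max N0 1, fun N hN t ht ρ => lt_of_le_of_lt ?_ hlt⟩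
    have hN1 : 1 ≤ N := le_trans (le_max_right _ _) hN
    obtain ⟨hx, e⟩ := XX_spec h0 h1 (TT_mem h0 ht) ρ
    have := h N (le_trans (le_max_left _ _) hN) t ht _ hx
    rw [e] at this
    simp only [iteratedDeriv_one]
    rwa [FF_dtr h0 h1 hN1 (TT_mem h0 ht) ρ, abs_neg]
  · obtain ⟨N0, h⟩ := varb_lim h0 h1 h2
    refine ⟨max N0 1, fun N hN t ht ρ => lt_of_le_of_lt ?_ hlt⟩
    have hN1 : 1 ≤ N := le_trans (le_max_right _ _) hN
    obtain ⟨hx, e⟩ := XX_spec h0 h1 (TT_mem h0 ht) ρ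
    have := h N (le_trans (le_max_left _ _) hN) t ht _ hx
    rw [e] at this
    simp only [iteratedDeriv_zero, iteratedDeriv_succ]
    rwa [FF_dtt h0 h1 hN1 (TT_mem h0 ht) ρ]

end

/-! existence of the constants -/

theorem kap_pos_of {f : ℝ → ℝ} (h : ContDiff ℝ (⊤ : ℕ∞) f) (hG : ∀ x ∈ Ioo (0:ℝ) 1, 0 < iteratedDeriv 2 (GG f) x) :
    ∃ c > 0, ∀ x ∈ Icc (0:ℝ) 1, c ≤ kap f x := by
  have pos : ∀ x ∈ Icc (0:ℝ) 1, 0 < kap f x := by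
    intro x hx
    rcases eq_or_lt_of_le hx.1 with h0 | h0
    · rw [← h0]; simp [kap]
    rcases eq_or_lt_of_le hx.2 with h1 | h1
    · rw [h1]; simp [kap]
    have hx' : x ∈ Ioo (0:ℝ) 1 := ⟨h0, h1⟩
    have := hG x hx'
    simp only [iteratedDeriv_zero, iteratedDeriv_succ] at this
    have ev : deriv (GG f) =ᶠ[nhds x] G1 f := by
      filter_upwards [isOpen_Ioo.mem_nhds hx'] with y hy
      exact (GG_deriv h hy).deriv
    rw [ev.deriv_eq, (G1_deriv h hx').deriv] at this
    unfold G2 at this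
    have q : 0 < x * (1 - x) := mul_pos h0 (by linarith)
    have := mul_pos this q
    rwa [div_mul_cancel₀ _ q.ne'] at this
  obtain ⟨y, hy, hmin⟩ := isCompact_Icc.exists_isMinOn (nonempty_Icc.2 (zero_le_one (α := ℝ))) (kap_smooth h).continuous.continuousOn
  exact ⟨kap f y, pos y hy, fun x hx => hmin hx⟩

theorem good_of {f : ℝ → ℝ} (h : ContDiff ℝ (⊤ : ℕ∞) f) (hG : ∀ x ∈ Ioo (0:ℝ) 1, 0 < iteratedDeriv 2 (GG f) x) :
    ∃ c > 0, ∃ K : ℝ, 1 ≤ K ∧ ∀ c' K', 0 < c' → c' ≤ c → K ≤ K' → Good f c' K' := by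
  obtain ⟨c, pc, hc⟩ := kap_pos_of h hG
  obtain ⟨B1, p1, d1, -⟩ := taylor_smooth h
  obtain ⟨B2, p2, d2, -⟩ := taylor_smooth (cd_deriv h)
  obtain ⟨B3, p3, d3, -⟩ := taylor_smooth (cd_deriv (cd_deriv h))
  refine ⟨c, pc, 1 + B1 + B2 + B3, by linarith, fun c' K' pc' h1 h2 => ⟨h, pc', by linarith, ?_, ?_, ?_, ?_⟩⟩
  · intro x hx; linarith [hc x hx]
  · intro x hx; linarith [d1 x hx]
  · intro x hx; linarith [d2 x hx]
  · intro x hx; linarith [d3 x hx]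

theorem bergman_cp1_C2_convergence
    (f0 f1 : ℝ → ℝ) (hf0 : ContDiff ℝ (⊤ : ℕ∞) f0) (hf1 : ContDiff ℝ (⊤ : ℕ∞) f1)
    (hG0 : ∀ x ∈ Set.Ioo (0:ℝ) 1, 0 < iteratedDeriv 2 (Gt f0 f1 0) x)
    (hG1 : ∀ x ∈ Set.Ioo (0:ℝ) 1, 0 < iteratedDeriv 2 (Gt f0 f1 1) x) :
    (∀ N : ℕ, 1 ≤ N →
      ContDiffOn ℝ (⊤ : ℕ∞)
        (fun p : ℝ × ℝ => (1 / (N:ℝ)) * Real.log (Ecal f0 f1 N p.1 p.2))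
        (Set.Icc (0:ℝ) 1 ×ˢ (Set.univ : Set ℝ))) ∧
    (∀ a b : ℕ, a + b ≤ 2 → ∀ ε : ℝ, 0 < ε → ∃ N₀ : ℕ, ∀ N : ℕ, N₀ ≤ N →
      ∀ t ∈ Set.Icc (0:ℝ) 1, ∀ ρ : ℝ,
        |iteratedDeriv a
            (fun s => iteratedDeriv b
              (fun r => (1 / (N:ℝ)) * Real.log (Ecal f0 f1 N s r)) ρ) t| < ε) := by
  have g0 : Gt f0 f1 0 = GG f0 := by ext x; simp [Gt, GG]
  have g1 : Gt f0 f1 1 = GG f1 := by ext x; simp [Gt, GG]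
  rw [g0] at hG0
  rw [g1] at hG1
  obtain ⟨c0, pc0, K0, hK0, H0⟩ := good_of hf0 hG0
  obtain ⟨c1, pc1, K1, hK1, H1⟩ := good_of hf1 hG1
  have h0 := H0 (min c0 c1) (max K0 K1) (lt_min pc0 pc1) (min_le_left _ _) (le_max_left _ _)
  have h1 := H1 (min c0 c1) (max K0 K1) (lt_min pc0 pc1) (min_le_right _ _) (le_max_right _ _)
  exact ⟨fun N hN => FF_smooth h0 h1 hN, fun a b hab ε hε => main_good h0 h1 a b hab ε hε⟩
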